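/- arXiv:1001.0436 — 14 statements merged into one kernel-verified Lean document; each statement's English description precedes it below -/
import Mathlib

section
/- Fix numbers of jobs n and machines m and a linear order ≺ on finite sets of job–machine pairs. Let E ⊆ Fin n × Fin m be an edge set, let i be a job, let E'_i be a set of pairs with first coordinate i, and set E' = (E \ E_i) ∪ E'_i. Suppose X is a maximum-cardinality matching contained in E that is ≺-least among all maximum-cardinality matchings contained in E, and X' is a maximum-cardinality matching contained in E' that is ≺-least among all maximum-cardinality matchings contained in E'. Then the number of edges of E_i contained in X is at least the number of edges of E_i contained in X'; in particular, if X' matches job i along an edge of E_i, then X matches job i along an edge of E_i. (This says the mechanism returning the ≺-least maximum matching is truthful for maximum bipartite matching in the private graph model.) -/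
/-- A matching: any two distinct elements differ in both coordinates. -/
def IsMatching {n m : ℕ} (M : Finset (Fin n × Fin m)) : Prop :=
  ∀ e ∈ M, ∀ e' ∈ M, e ≠ e' → e.1 ≠ e'.1 ∧ e.2 ≠ e'.2

/-- Truthfulness of the ≺-least maximum matching mechanism. -/
theorem stmt0 (n m : ℕ)
    (lt : Finset (Fin n × Fin m) → Finset (Fin n × Fin m) → Prop)
    (hlt : IsStrictTotalOrder (Finset (Fin n × Fin m)) lt)
    (E Ei' X X' : Finset (Fin n × Fin m)) (i : Fin n)
    (hEi' : ∀ e ∈ Ei', e.1 = i)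
    (E' : Finset (Fin n × Fin m))
    (hE' : E' = (E \ E.filter (fun e => e.1 = i)) ∪ Ei')
    (hXm : IsMatching X) (hXE : X ⊆ E)
    (hXmax : ∀ Y, IsMatching Y → Y ⊆ E → Y.card ≤ X.card)
    (hXmin : ∀ Y, IsMatching Y → Y ⊆ E → Y.card = X.card → Y ≠ X → lt X Y)
    (hX'm : IsMatching X') (hX'E : X' ⊆ E')
    (hX'max : ∀ Y, IsMatching Y → Y ⊆ E' → Y.card ≤ X'.card)
    (hX'min : ∀ Y, IsMatching Y → Y ⊆ E' → Y.card = X'.card → Y ≠ X' → lt X' Y) :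
    (X' ∩ E.filter (fun e => e.1 = i)).card ≤ (X ∩ E.filter (fun e => e.1 = i)).card
      ∧ ((∃ j, (i, j) ∈ X' ∧ (i, j) ∈ E) → ∃ j, (i, j) ∈ X ∧ (i, j) ∈ E) := by
  have key : (∃ j, (i, j) ∈ X' ∧ (i, j) ∈ E) → ∃ j, (i, j) ∈ X ∧ (i, j) ∈ E := by
    rintro ⟨j, hj', hjE⟩
    by_contra hno
    have hXi : ∀ e ∈ X, e.1 ≠ i := by
      rintro ⟨a, b⟩ he rfl
      exact hno ⟨b, he, hXE he⟩
    have hXE' : X ⊆ E' := by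
      intro e he
      have h1 := hXi e he
      have h2 := hXE he
      simp [hE', h1, h2]
    have hX'E2 : X' ⊆ E := by
      intro e he
      by_cases hi : e.1 = i
      · by_cases heq : e = (i, j)
        · rw [heq]; exact hjE
        · exact absurd hi (hX'm e he (i, j) hj' heq).1
      · have h := hX'E he
        rw [hE', Finset.mem_union] at h
        rcases h with h | h
        · exact (Finset.mem_sdiff.1 h).1
        · exact absurd (hEi' e h) hi
    have hne : X ≠ X' := by
      rintro rfl
      exact hXi _ hj' rfl
    have hc : X.card = X'.card :=
      le_antisymm (hX'max X hXm hXE') (hXmax X' hX'm hX'E2)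
    have h1 := hXmin X' hX'm hX'E2 hc.symm hne.symm
    have h2 := hX'min X hXm hXE' hc hne
    exact hlt.irrefl _ (hlt.trans _ _ _ h1 h2)
  refine ⟨?_, key⟩
  have hle : (X' ∩ E.filter (fun e => e.1 = i)).card ≤ 1 := by
    rw [Finset.card_le_one]
    intro a ha b hb
    simp only [Finset.mem_inter, Finset.mem_filter] at ha hb
    by_contra hab
    exact (hX'm a ha.1 b hb.1 hab).1 (ha.2.2.trans hb.2.2.symm)
  rcases Finset.eq_empty_or_nonempty (X' ∩ E.filter (fun e => e.1 = i)) with h | ⟨⟨a, b⟩, h⟩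
  · simp [h]
  · simp only [Finset.mem_inter, Finset.mem_filter] at h
    obtain ⟨h1, h2, rfl⟩ := h
    obtain ⟨j, hj, hjE⟩ := key ⟨b, h1, h2⟩
    refine hle.trans (Finset.card_pos.2 ⟨(a, j), ?_⟩)
    simp [hj, hjE]
end

section
/- Let A be a deterministic mechanism for maximum weight bipartite matching with 2 jobs and 2 machines in the private graph model: A assigns to each value function v : Fin 2 × Fin 2 → ℝ with v ≥ 0 and each edge set E ⊆ Fin 2 × Fin 2 a matching A(v,E) ⊆ E. Suppose A is truthful: for every v ≥ 0, every edge set E, every job i, and every set E'_i of pairs with first coordinate i, letting E' = (E \ E_i) ∪ E'_i, one has ∑_{e ∈ A(v,E) ∩ E_i} v(e) ≥ ∑_{e ∈ A(v,E') ∩ E_i} v(e). Then for every real α < 2 there exist v ≥ 0 and an edge set E such that α · ∑_{e ∈ A(v,E)} v(e) < max over all matchings M ⊆ E of ∑_{e ∈ M} v(e). That is, no deterministic truthful mechanism without money for maximum weight bipartite matching has approximation ratio better than 2. -/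
theorem matching_cases (S : Finset (Fin 2 × Fin 2)) (h : IsMatching S) :
    S = {(0, 0), (1, 1)} ∨ S = {(0, 1), (1, 0)} ∨ S.card ≤ 1 := by
  unfold IsMatching at h
  revert S
  decide

/-- No deterministic truthful mechanism without money for maximum weight bipartite
matching (with 2 jobs and 2 machines) has approximation ratio better than 2. -/
theorem stmt1
    (A : (Fin 2 × Fin 2 → ℝ) → Finset (Fin 2 × Fin 2) → Finset (Fin 2 × Fin 2))
    (hA : ∀ v E, (∀ e, 0 ≤ v e) → IsMatching (A v E) ∧ A v E ⊆ E)
    (htruth : ∀ (v : Fin 2 × Fin 2 → ℝ), (∀ e, 0 ≤ v e) →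
      ∀ (E Ei' : Finset (Fin 2 × Fin 2)) (i : Fin 2), (∀ e ∈ Ei', e.1 = i) →
        ∑ e ∈ (A v ((E \ E.filter (fun e => e.1 = i)) ∪ Ei')) ∩ E.filter (fun e => e.1 = i), v e
          ≤ ∑ e ∈ (A v E) ∩ E.filter (fun e => e.1 = i), v e) :
    ∀ α : ℝ, α < 2 → ∃ (v : Fin 2 × Fin 2 → ℝ) (E M : Finset (Fin 2 × Fin 2)),
      (∀ e, 0 ≤ v e) ∧ IsMatching M ∧ M ⊆ E ∧
        α * ∑ e ∈ A v E, v e < ∑ e ∈ M, v e := by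
  intro α hα
  by_contra hcon
  push Not at hcon
  obtain ⟨ε, hε⟩ : ∃ ε : ℝ, ε = 2 - α := ⟨_, rfl⟩
  have hε0 : 0 < ε := by linarith
  obtain ⟨v, hvdef⟩ : ∃ v : Fin 2 × Fin 2 → ℝ, v = fun e => if e.2 = 0 then 1 + ε else 1 :=
    ⟨_, rfl⟩
  have hv : ∀ e, 0 ≤ v e := by
    intro e; rw [hvdef]; dsimp only; split_ifs <;> linarith
  have hv1 : ∀ e, v e ≤ 1 + ε := by
    intro e; rw [hvdef]; dsimp only; split_ifs <;> linarith
  have v00 : v (0, 0) = 1 + ε := by simp [hvdef]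
  have v10 : v (1, 0) = 1 + ε := by simp [hvdef]
  have v01 : v (0, 1) = 1 := by simp [hvdef]
  have v11 : v (1, 1) = 1 := by simp [hvdef]
  have hm1 : IsMatching ({(0, 0), (1, 1)} : Finset (Fin 2 × Fin 2)) := by
    unfold IsMatching; decide
  have hm2 : IsMatching ({(0, 1), (1, 0)} : Finset (Fin 2 × Fin 2)) := by
    unfold IsMatching; decide
  have s1 : ∑ e ∈ ({(0, 0), (1, 1)} : Finset (Fin 2 × Fin 2)), v e = 2 + ε := by
    rw [Finset.sum_pair (by decide), v00, v11]; ring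
  have s2 : ∑ e ∈ ({(0, 1), (1, 0)} : Finset (Fin 2 × Fin 2)), v e = 2 + ε := by
    rw [Finset.sum_pair (by decide), v01, v10]; ring
  -- whenever a perfect matching is available, the mechanism outputs a perfect matching
  have key : ∀ E : Finset (Fin 2 × Fin 2),
      ({(0, 0), (1, 1)} ⊆ E ∨ {(0, 1), (1, 0)} ⊆ E) →
      A v E = {(0, 0), (1, 1)} ∨ A v E = {(0, 1), (1, 0)} := by
    intro E hE
    have hle : 2 + ε ≤ α * ∑ e ∈ A v E, v e := by
      rcases hE with hE | hE
      · rw [← s1]; exact hcon v E _ hv hm1 hE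
      · rw [← s2]; exact hcon v E _ hv hm2 hE
    rcases matching_cases _ (hA v E hv).1 with h | h | h
    · exact Or.inl h
    · exact Or.inr h
    · exfalso
      have hs0 : 0 ≤ ∑ e ∈ A v E, v e := Finset.sum_nonneg (fun e _ => hv e)
      have hs1 : ∑ e ∈ A v E, v e ≤ 1 + ε := by
        rcases Finset.card_le_one_iff_subset_singleton.1 h with ⟨x, hx⟩
        calc ∑ e ∈ A v E, v e ≤ ∑ e ∈ {x}, v e :=
              Finset.sum_le_sum_of_subset_of_nonneg hx (fun e _ _ => hv e)
          _ ≤ 1 + ε := by simpa using hv1 x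
      have hα' : α = 2 - ε := by linarith
      rcases le_total α 0 with h0 | h0
      · have := mul_nonpos_of_nonpos_of_nonneg h0 hs0
        linarith
      · have := mul_le_mul_of_nonneg_left hs1 h0
        rw [hα'] at this hle
        nlinarith
  rcases key Finset.univ (Or.inl (Finset.subset_univ _)) with h | h
  · -- job 1 got machine 1; it hides its edge to machine 1
    have ht := htruth v hv Finset.univ {(1, 0)} 1 (by decide)
    have hE : ((Finset.univ : Finset (Fin 2 × Fin 2)) \
        Finset.univ.filter (fun e => e.1 = 1)) ∪ {(1, 0)} = {(0, 0), (0, 1), (1, 0)} := by decide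
    rw [hE, h] at ht
    have hsub := (hA v {(0, 0), (0, 1), (1, 0)} hv).2
    rcases key {(0, 0), (0, 1), (1, 0)} (Or.inr (by decide)) with h' | h'
    · rw [h'] at hsub
      exact absurd hsub (by decide)
    · rw [h'] at ht
      have e1 : ({(0, 1), (1, 0)} : Finset (Fin 2 × Fin 2)) ∩
        Finset.univ.filter (fun e => e.1 = 1) = {(1, 0)} := by decide
      have e2 : ({(0, 0), (1, 1)} : Finset (Fin 2 × Fin 2)) ∩
        Finset.univ.filter (fun e => e.1 = 1) = {(1, 1)} := by decide
      rw [e1, e2, Finset.sum_singleton, Finset.sum_singleton, v10, v11] at ht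
      linarith
  · -- job 0 got machine 1; it hides its edge to machine 1
    have ht := htruth v hv Finset.univ {(0, 0)} 0 (by decide)
    have hE : ((Finset.univ : Finset (Fin 2 × Fin 2)) \
        Finset.univ.filter (fun e => e.1 = 0)) ∪ {(0, 0)} = {(0, 0), (1, 0), (1, 1)} := by decide
    rw [hE, h] at ht
    have hsub := (hA v {(0, 0), (1, 0), (1, 1)} hv).2
    rcases key {(0, 0), (1, 0), (1, 1)} (Or.inl (by decide)) with h' | h'
    · rw [h'] at ht
      have e1 : ({(0, 0), (1, 1)} : Finset (Fin 2 × Fin 2)) ∩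
        Finset.univ.filter (fun e => e.1 = 0) = {(0, 0)} := by decide
      have e2 : ({(0, 1), (1, 0)} : Finset (Fin 2 × Fin 2)) ∩
        Finset.univ.filter (fun e => e.1 = 0) = {(0, 1)} := by decide
      rw [e1, e2, Finset.sum_singleton, Finset.sum_singleton, v00, v01] at ht
      linarith
    · rw [h'] at hsub
      exact absurd hsub (by decide)
end

section
/- Let A be a randomized mechanism for maximum weight bipartite matching with 2 jobs and 2 machines in the private graph model: A assigns to each value function v : Fin 2 × Fin 2 → ℝ with v ≥ 0 and each edge set E ⊆ Fin 2 × Fin 2 a finitely supported probability distribution A(v,E) over matchings contained in E. Suppose A is truthful in expectation: for every v ≥ 0, every edge set E, every job i, and every set E'_i of pairs with first coordinate i, letting E' = (E \ E_i) ∪ E'_i, one has E_{X ~ A(v,E)}[∑_{e ∈ X ∩ E_i} v(e)] ≥ E_{X ~ A(v,E')}[∑_{e ∈ X ∩ E_i} v(e)]. Then for every real α < 2/(2√2 − 1) there exist v ≥ 0 and an edge set E such that α · E_{X ~ A(v,E)}[∑_{e ∈ X} v(e)] < max over all matchings M ⊆ E of ∑_{e ∈ M} v(e). That is, no truthful-in-expectation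 randomized mechanism gives better than a 2/(2√2 − 1) ≈ 1.0938 approximation. -/
instance decIsMatching (M : Finset (Fin 2 × Fin 2)) : Decidable (IsMatching M) := by
  unfold IsMatching; infer_instance

/-- The value function: machine 0 is worth 1, machine 1 is worth `x`. -/
noncomputable def vx (x : ℝ) : Fin 2 × Fin 2 → ℝ := fun e => if e.2 = 0 then 1 else x

lemma sum_vx (x : ℝ) (S : Finset (Fin 2 × Fin 2)) :
    ∑ e ∈ S, vx x e = ((S.filter (fun e => e.2 = 0)).card : ℝ)
      + x * ((S.filter (fun e => ¬ e.2 = 0)).card : ℝ) := by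
  unfold vx
  rw [Finset.sum_ite]
  simp [mul_comm]

/-- The truncated graph, in the form produced by the truthfulness hypothesis. -/
def Eb (b : Fin 2) : Finset (Fin 2 × Fin 2) :=
  (Finset.univ \ Finset.univ.filter (fun e : Fin 2 × Fin 2 => e.1 = b)) ∪ {(b, 0)}

def ind (b : Fin 2) (M : Finset (Fin 2 × Fin 2)) : ℕ := if (b, 0) ∈ M then 1 else 0

lemma comb1 : ∀ (b : Fin 2) (M : Finset (Fin 2 × Fin 2)), IsMatching M →
    ((M ∩ Finset.univ.filter (fun e => e.1 = b)).filter (fun e => e.2 = 0)).card = ind b M ∧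
    ind b M + ((M ∩ Finset.univ.filter (fun e => e.1 = b)).filter (fun e => ¬ e.2 = 0)).card ≤ 1 := by
  decide

lemma comb2 : ∀ (b : Fin 2) (M : Finset (Fin 2 × Fin 2)), IsMatching M → M ⊆ Eb b →
    (M.filter (fun e => e.2 = 0)).card ≤ 1 ∧ (M.filter (fun e => ¬ e.2 = 0)).card ≤ 1 ∧
    (M.filter (fun e => e.2 = 0)).card + (M.filter (fun e => ¬ e.2 = 0)).card ≤ 1 + ind b M := by
  decide

lemma comb3 : ∀ (M : Finset (Fin 2 × Fin 2)), IsMatching M → ind 0 M + ind 1 M ≤ 1 := by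
  decide

lemma comb4 : ∀ b : Fin 2, IsMatching ({(b, 0), (1 - b, 1)} : Finset (Fin 2 × Fin 2)) ∧
    ({(b, 0), (1 - b, 1)} : Finset (Fin 2 × Fin 2)) ⊆ Eb b ∧
    (({(b, 0), (1 - b, 1)} : Finset (Fin 2 × Fin 2)).filter (fun e => e.2 = 0)).card = 1 ∧
    (({(b, 0), (1 - b, 1)} : Finset (Fin 2 × Fin 2)).filter (fun e => ¬ e.2 = 0)).card = 1 := by
  decide

/-- No truthful-in-expectation randomized mechanism for maximum weight bipartite
matching (with 2 jobs and 2 machines) gives better than a 2/(2√2 − 1) approximation. -/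
theorem stmt2
    (A : (Fin 2 × Fin 2 → ℝ) → Finset (Fin 2 × Fin 2) → Finset (Fin 2 × Fin 2) → ℝ)
    (hnonneg : ∀ v E M, 0 ≤ A v E M)
    (hsum : ∀ v E, ∑ M : Finset (Fin 2 × Fin 2), A v E M = 1)
    (hsupp : ∀ v E M, A v E M ≠ 0 → IsMatching M ∧ M ⊆ E)
    (htruth : ∀ (v : Fin 2 × Fin 2 → ℝ), (∀ e, 0 ≤ v e) →
      ∀ (E Ei' : Finset (Fin 2 × Fin 2)) (i : Fin 2), (∀ e ∈ Ei', e.1 = i) →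
        ∑ M : Finset (Fin 2 × Fin 2),
            A v ((E \ E.filter (fun e => e.1 = i)) ∪ Ei') M *
              ∑ e ∈ M ∩ E.filter (fun e => e.1 = i), v e
          ≤ ∑ M : Finset (Fin 2 × Fin 2),
              A v E M * ∑ e ∈ M ∩ E.filter (fun e => e.1 = i), v e) :
    ∀ α : ℝ, α < 2 / (2 * Real.sqrt 2 - 1) →
      ∃ (v : Fin 2 × Fin 2 → ℝ) (E M : Finset (Fin 2 × Fin 2)),
        (∀ e, 0 ≤ v e) ∧ IsMatching M ∧ M ⊆ E ∧
          α * ∑ M' : Finset (Fin 2 × Fin 2), A v E M' * ∑ e ∈ M', v e < ∑ e ∈ M, v e := by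
  intro α hα
  have hle : ∀ v E (f g : Finset (Fin 2 × Fin 2) → ℝ),
      (∀ M, IsMatching M → M ⊆ E → f M ≤ g M) →
      ∑ M, A v E M * f M ≤ ∑ M, A v E M * g M := by
    intro v E f g h
    refine Finset.sum_le_sum fun M _ => ?_
    by_cases h0 : A v E M = 0
    · simp [h0]
    · obtain ⟨h1, h2⟩ := hsupp v E M h0
      exact mul_le_mul_of_nonneg_left (h M h1 h2) (hnonneg v E M)
  have haff : ∀ v E (c d : ℝ) (f : Finset (Fin 2 × Fin 2) → ℝ),
      ∑ M, A v E M * (c + d * f M) = c + d * ∑ M, A v E M * f M := by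
    intro v E c d f
    have : ∀ M, A v E M * (c + d * f M) = A v E M * c + d * (A v E M * f M) := fun M => by ring
    simp only [this]
    rw [Finset.sum_add_distrib, ← Finset.sum_mul, hsum, ← Finset.mul_sum, one_mul]
  have hs2 : Real.sqrt 2 * Real.sqrt 2 = 2 := Real.mul_self_sqrt (by norm_num)
  have hs1 : 1 < Real.sqrt 2 := by
    rw [Real.lt_sqrt] <;> norm_num
  have hs3 : Real.sqrt 2 < 2 := by
    rw [Real.sqrt_lt] <;> norm_num
  obtain ⟨x, hx⟩ : ∃ x : ℝ, x = Real.sqrt 2 - 1 := ⟨_, rfl⟩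
  have hx0 : 0 < x := by linarith
  have hx1 : x < 1 := by linarith
  have hv : ∀ e, 0 ≤ vx x e := by
    intro e; unfold vx; split_ifs <;> linarith
  -- one of the jobs gets machine 0 with probability at most one half
  have hb : ∃ b : Fin 2, ∑ M, A (vx x) Finset.univ M * (ind b M : ℝ) ≤ 1 / 2 := by
    by_contra hcon
    push Not at hcon
    have h0 := hcon 0
    have h1 := hcon 1
    have h := hle (vx x) Finset.univ (fun M => (ind 0 M : ℝ) + (ind 1 M : ℝ)) (fun _ => 1)
      (fun M hM _ => by exact_mod_cast comb3 M hM)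
    simp only [mul_add, mul_one, Finset.sum_add_distrib, hsum] at h
    linarith
  obtain ⟨b, hb⟩ := hb
  have ht := htruth (vx x) hv Finset.univ {(b, 0)} b (by simp)
  change ∑ M, A (vx x) (Eb b) M * _ ≤ _ at ht
  have hK := hle (vx x) Finset.univ
    (fun M => ∑ e ∈ M ∩ Finset.univ.filter (fun e => e.1 = b), vx x e)
    (fun M => x + (1 - x) * (ind b M : ℝ)) (by
      intro M hM _
      obtain ⟨h1, h2⟩ := comb1 b M hM
      simp only [sum_vx, h1]
      have h2' : (ind b M : ℝ) +
        (((M ∩ Finset.univ.filter (fun e => e.1 = b)).filter (fun e => ¬ e.2 = 0)).card : ℝ) ≤ 1 := by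
        exact_mod_cast h2
      nlinarith)
  rw [haff] at hK
  have hE := hle (vx x) (Eb b) (fun M => (ind b M : ℝ))
    (fun M => ∑ e ∈ M ∩ Finset.univ.filter (fun e => e.1 = b), vx x e) (by
      intro M hM _
      obtain ⟨h1, h2⟩ := comb1 b M hM
      simp only [sum_vx, h1]
      have := mul_nonneg hx0.le (Nat.cast_nonneg (α := ℝ)
        ((M ∩ Finset.univ.filter (fun e => e.1 = b)).filter (fun e => ¬ e.2 = 0)).card)
      linarith)
  have hW := hle (vx x) (Eb b) (fun M => ∑ e ∈ M, vx x e)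
    (fun M => 1 + x * (ind b M : ℝ)) (by
      intro M hM hME
      obtain ⟨h1, h2, h3⟩ := comb2 b M hM hME
      simp only [sum_vx]
      have h1' : ((M.filter (fun e => e.2 = 0)).card : ℝ) ≤ 1 := by exact_mod_cast h1
      have h3' : ((M.filter (fun e => e.2 = 0)).card : ℝ) +
        ((M.filter (fun e => ¬ e.2 = 0)).card : ℝ) ≤ 1 + (ind b M : ℝ) := by exact_mod_cast h3
      nlinarith)
  rw [haff] at hW
  obtain ⟨g1, g2, g3, g4⟩ := comb4 b
  refine ⟨vx x, Eb b, {(b, 0), (1 - b, 1)}, hv, g1, g2, ?_⟩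
  have hopt : ∑ e ∈ ({(b, 0), (1 - b, 1)} : Finset (Fin 2 × Fin 2)), vx x e = 1 + x := by
    rw [sum_vx, g3, g4]; norm_num
  rw [hopt]
  have hW0 : 0 ≤ ∑ M', A (vx x) (Eb b) M' * ∑ e ∈ M', vx x e :=
    Finset.sum_nonneg fun M _ => mul_nonneg (hnonneg _ _ _) (Finset.sum_nonneg fun e _ => hv e)
  have hy : ∑ M, A (vx x) (Eb b) M * (ind b M : ℝ) ≤ x + (1 - x) * (1 / 2) :=
    hE.trans (ht.trans (hK.trans (by nlinarith)))
  have hWf : ∑ M', A (vx x) (Eb b) M' * ∑ e ∈ M', vx x e ≤ 1 + x * (x + (1 - x) * (1 / 2)) :=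
    hW.trans (by nlinarith)
  generalize (∑ M', A (vx x) (Eb b) M' * ∑ e ∈ M', vx x e) = W at hW0 hWf ⊢
  rcases le_or_gt α 0 with h | h
  · nlinarith [mul_nonneg (neg_nonneg.2 h) hW0]
  · rw [lt_div_iff₀ (by linarith)] at hα
    have h1 : 1 + x * (x + (1 - x) * (1 / 2)) = (2 * Real.sqrt 2 - 1) * Real.sqrt 2 / 2 := by
      rw [hx]; nlinarith
    have h2 : α * W ≤ α * ((2 * Real.sqrt 2 - 1) * Real.sqrt 2 / 2) :=
      mul_le_mul_of_nonneg_left (h1 ▸ hWf) h.le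
    have h3 : 1 + x = Real.sqrt 2 := by rw [hx]; ring
    rw [h3]
    nlinarith [mul_pos (sub_pos.2 hα) (lt_trans one_pos hs1)]
end

section
/- Fix numbers of jobs n and machines m, values v : Fin n × Fin m → ℝ with v ≥ 0, and a linear order ⊴ on Fin n × Fin m such that e ⊴ e' implies v(e) ≥ v(e') (edges listed in decreasing order of value, ties broken by the order, independently of reports). For an edge set E, say that X is the greedy matching for E if X ⊆ E and for every e ∈ E one has: e ∈ X if and only if there is no e' ∈ X with e' ≠ e, e' ⊴ e, and e' sharing a coordinate (job or machine) with e. Let E be an edge set, i a job, E'_i a set of pairs with first coordinate i, and E' = (E \ E_i) ∪ E'_i. If X is the greedy matching for E and X' is the greedy matching for E', then ∑_{e ∈ X ∩ E_i} v(e) ≥ ∑_{e ∈ X' ∩ E_i} v(e). That is, the greedy algorithm processing edges in a bid-independent decreasing-value order is a truthful mechanism without money for maximum weight bipartite matching in the private graph model. -/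
/-- Truthfulness of the greedy algorithm for maximum weight bipartite matching,
processing edges in a bid-independent decreasing-value order. -/
theorem stmt3 (n m : ℕ) (v : Fin n × Fin m → ℝ) (hv : ∀ e, 0 ≤ v e)
    (le : Fin n × Fin m → Fin n × Fin m → Prop)
    (hle : IsLinearOrder (Fin n × Fin m) le)
    (hmono : ∀ e e', le e e' → v e' ≤ v e)
    (E Ei' X X' : Finset (Fin n × Fin m)) (i : Fin n)
    (hEi' : ∀ e ∈ Ei', e.1 = i)
    (E' : Finset (Fin n × Fin m))
    (hE' : E' = (E \ E.filter (fun e => e.1 = i)) ∪ Ei')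
    (hXsub : X ⊆ E)
    (hXgreedy : ∀ e ∈ E,
      (e ∈ X ↔ ¬ ∃ e' ∈ X, e' ≠ e ∧ le e' e ∧ (e'.1 = e.1 ∨ e'.2 = e.2)))
    (hX'sub : X' ⊆ E')
    (hX'greedy : ∀ e ∈ E',
      (e ∈ X' ↔ ¬ ∃ e' ∈ X', e' ≠ e ∧ le e' e ∧ (e'.1 = e.1 ∨ e'.2 = e.2))) :
    ∑ e ∈ X' ∩ E.filter (fun e => e.1 = i), v e
      ≤ ∑ e ∈ X ∩ E.filter (fun e => e.1 = i), v e := by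
  classical
  have htr : ∀ a b c, le a b → le b c → le a c := fun a b c h1 h2 => _root_.trans h1 h2
  have hanti : ∀ a b, le a b → le b a → a = b := fun a b h1 h2 => antisymm h1 h2
  have htot : ∀ a b, le a b ∨ le b a := fun a b => total_of le a b
  have hEE : ∀ e : Fin n × Fin m, e.1 ≠ i → (e ∈ E ↔ e ∈ E') := by
    intro e he
    have := hEi' e
    simp only [hE', Finset.mem_union, Finset.mem_sdiff, Finset.mem_filter]
    tauto
  -- two chosen edges of the same job coincide
  have huniq : ∀ a ∈ X', ∀ b ∈ X', a.1 = b.1 → a = b := by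
    intro a ha b hb hab
    by_contra hne
    rcases htot a b with h | h
    · exact (hX'greedy b (hX'sub hb)).1 hb ⟨a, ha, hne, h, Or.inl hab⟩
    · exact (hX'greedy a (hX'sub ha)).1 ha ⟨b, hb, fun h => hne h.symm, h, Or.inl hab.symm⟩
  by_cases hex : ∃ a ∈ X', a ∈ E ∧ a.1 = i
  · obtain ⟨a, haX', haE, hai⟩ := hex
    have hset : X' ∩ E.filter (fun e => e.1 = i) = {a} := by
      ext e
      simp only [Finset.mem_inter, Finset.mem_filter, Finset.mem_singleton]
      constructor
      · rintro ⟨h1, h2, h3⟩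
        exact huniq e h1 a haX' (h3.trans hai.symm)
      · rintro rfl
        exact ⟨haX', haE, hai⟩
    have key : ∃ b ∈ X, b.1 = i ∧ le b a := by
      by_contra hno
      have hno' : ∀ b ∈ X, b.1 = i → ¬ le b a := fun b h1 h2 h3 => hno ⟨b, h1, h2, h3⟩
      let r : Fin n × Fin m → Fin n × Fin m → Prop := fun x y => le x y ∧ x ≠ y
      haveI : IsTrans _ r := ⟨fun x y z h1 h2 => ⟨htr _ _ _ h1.1 h2.1, by
        rintro rfl
        exact h1.2 (hanti _ _ h1.1 h2.1)⟩⟩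
      haveI : Std.Irrefl r := ⟨fun x h => h.2 rfl⟩
      have hwf : WellFounded r := Finite.wellFounded_of_trans_of_irrefl r
      have hagree : ∀ e, r e a → (e ∈ X ↔ e ∈ X') := by
        intro e
        induction e using hwf.induction with
        | _ e ih =>
          intro hea
          by_cases hei : e.1 = i
          · refine ⟨fun h => absurd hea.1 (hno' e h hei), fun h => ?_⟩
            exact absurd (huniq e h a haX' (hei.trans hai.symm)) hea.2
          · by_cases heE : e ∈ E
            · rw [hXgreedy e heE, hX'greedy e ((hEE e hei).1 heE)]
              refine not_congr (exists_congr fun e' => ?_)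
              have h := fun h1 : r e' e => ih e' h1 (_root_.trans h1 hea)
              constructor
              · rintro ⟨h1, h2, h3, h4⟩
                exact ⟨(h ⟨h3, h2⟩).1 h1, h2, h3, h4⟩
              · rintro ⟨h1, h2, h3, h4⟩
                exact ⟨(h ⟨h3, h2⟩).2 h1, h2, h3, h4⟩
            · exact ⟨fun h => absurd (hXsub h) heE,
                fun h => absurd ((hEE e hei).2 (hX'sub h)) heE⟩
      have haX : a ∈ X := by
        rw [hXgreedy a haE]
        rintro ⟨e', h1, h2, h3, h4⟩
        exact (hX'greedy a (hX'sub haX')).1 haX' ⟨e', (hagree e' ⟨h3, h2⟩).1 h1, h2, h3, h4⟩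
      have hrefl : le a a := (htot a a).elim id id
      exact hno' a haX hai hrefl
    obtain ⟨b, hbX, hbi, hba⟩ := key
    rw [hset, Finset.sum_singleton]
    refine (hmono b a hba).trans ?_
    refine Finset.single_le_sum (f := v) (fun e _ => hv e) ?_
    simp [hbX, hXsub hbX, hbi]
  · have hset : X' ∩ E.filter (fun e => e.1 = i) = ∅ := by
      ext e
      simp only [Finset.mem_inter, Finset.mem_filter, Finset.notMem_empty, iff_false]
      rintro ⟨h1, h2, h3⟩
      exact hex ⟨e, h1, h2, h3⟩
    rw [hset, Finset.sum_empty]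
    exact Finset.sum_nonneg fun e _ => hv e
end

section
/- Fix values v : Fin n × Fin m → ℝ with v ≥ 0 and an edge set E ⊆ Fin n × Fin m. Let X ⊆ E be a matching with the property that every edge e ∈ E \ X shares a coordinate (job or machine) with some edge e' ∈ X satisfying v(e') ≥ v(e). Then for every matching M ⊆ E, ∑_{e ∈ M} v(e) ≤ 2 · ∑_{e ∈ X} v(e). In particular, the greedy matching obtained by processing edges of E in decreasing order of value is a 2-approximation to the maximum weight matching in E. -/
/-- Any maximal matching `X` in which every discarded edge is blocked by an
edge of at least its value is a 2-approximation to the maximum weight matching. -/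
theorem stmt4 (n m : ℕ) (v : Fin n × Fin m → ℝ) (hv : ∀ e, 0 ≤ v e)
    (E X : Finset (Fin n × Fin m)) (hXE : X ⊆ E) (hXm : IsMatching X)
    (hcover : ∀ e ∈ E, e ∉ X → ∃ e' ∈ X, (e'.1 = e.1 ∨ e'.2 = e.2) ∧ v e ≤ v e')
    (M : Finset (Fin n × Fin m)) (hM : IsMatching M) (hME : M ⊆ E) :
    ∑ e ∈ M, v e ≤ 2 * ∑ e ∈ X, v e := by
  classical
  have h : ∀ e, ∃ e', e ∈ M → e' ∈ X ∧ (e'.1 = e.1 ∨ e'.2 = e.2) ∧ v e ≤ v e' := by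
    intro e
    by_cases he : e ∈ M
    · by_cases hx : e ∈ X
      · exact ⟨e, fun _ => ⟨hx, Or.inl rfl, le_rfl⟩⟩
      · obtain ⟨e', h1, h2⟩ := hcover e (hME he) hx
        exact ⟨e', fun _ => ⟨h1, h2⟩⟩
    · exact ⟨e, fun h => absurd h he⟩
  choose f hf using h
  have key : ∀ S ⊆ M, Set.InjOn f (S : Set (Fin n × Fin m)) →
      ∑ e ∈ S, v e ≤ ∑ e ∈ X, v e := by
    intro S hS hinj
    calc ∑ e ∈ S, v e ≤ ∑ e ∈ S, v (f e) :=
          Finset.sum_le_sum fun e he => (hf e (hS he)).2.2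
      _ = ∑ x ∈ S.image f, v x := (Finset.sum_image hinj).symm
      _ ≤ ∑ e ∈ X, v e := by
          apply Finset.sum_le_sum_of_subset_of_nonneg
          · intro x hx
            obtain ⟨e, he, rfl⟩ := Finset.mem_image.1 hx
            exact (hf e (hS he)).1
          · intro x _ _
            exact hv x
  rw [← Finset.sum_filter_add_sum_filter_not M (fun e => (f e).1 = e.1), two_mul]
  apply add_le_add
  · apply key _ (Finset.filter_subset _ _)
    intro a ha b hb hab
    simp only [Finset.coe_filter, Set.mem_setOf_eq] at ha hb
    by_contra hne
    exact (hM a ha.1 b hb.1 hne).1 (by rw [← ha.2, ← hb.2, hab])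
  · apply key _ (Finset.filter_subset _ _)
    intro a ha b hb hab
    simp only [Finset.coe_filter, Set.mem_setOf_eq] at ha hb
    by_contra hne
    have h1 := (hf a ha.1).2.1.resolve_left ha.2
    have h2 := (hf b hb.1).2.1.resolve_left hb.2
    exact (hM a ha.1 b hb.1 hne).2 (by rw [← h1, ← h2, hab])
end

section
/- Fix numbers of jobs n and machines m, values v : Fin n → ℝ with v ≥ 0, sizes s : Fin n → ℝ with s > 0, capacities c : Fin m → ℝ with c ≥ 0, and a linear order ≺ on the set of assignments x : Fin n → Option (Fin m). Let E be an edge set, i a job, E'_i a set of pairs with first coordinate i, and E' = (E \ E_i) ∪ E'_i. Suppose x is a welfare-maximizing feasible assignment for MKP[E] that is ≺-least among all welfare-maximizing feasible assignments for MKP[E], and x' is a welfare-maximizing feasible assignment for MKP[E'] that is ≺-least among all welfare-maximizing feasible assignments for MKP[E']. If there exists a machine j with (i,j) ∈ E and x'(i) = some j, then x(i) ≠ none. That is, the mechanism that finds the optimal integral solution to the multiple knapsack problem, breaking ties consistently via an arbitrary total order on assignments, is truthful in the private graph model. -/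
/-- Feasibility of an assignment for the multiple knapsack problem MKP[E]. -/
def MKPFeasible {n m : ℕ} (s : Fin n → ℝ) (c : Fin m → ℝ)
    (E : Finset (Fin n × Fin m)) (x : Fin n → Option (Fin m)) : Prop :=
  (∀ i j, x i = some j → (i, j) ∈ E) ∧
    ∀ j, ∑ i ∈ Finset.univ.filter (fun i => x i = some j), s i ≤ c j

/-- Welfare of an assignment in the multiple knapsack problem. -/
def MKPWelfare {n m : ℕ} (v : Fin n → ℝ) (x : Fin n → Option (Fin m)) : ℝ :=
  ∑ i ∈ Finset.univ.filter (fun i => x i ≠ none), v i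

/-- Solving MKP optimally, breaking ties via an arbitrary total order on
assignments, is truthful in the private graph model. -/
theorem stmt5 (n m : ℕ) (v s : Fin n → ℝ) (c : Fin m → ℝ)
    (hv : ∀ i, 0 ≤ v i) (hs : ∀ i, 0 < s i) (hc : ∀ j, 0 ≤ c j)
    (lt : (Fin n → Option (Fin m)) → (Fin n → Option (Fin m)) → Prop)
    (hlt : IsStrictTotalOrder (Fin n → Option (Fin m)) lt)
    (E Ei' : Finset (Fin n × Fin m)) (i : Fin n)
    (hEi' : ∀ e ∈ Ei', e.1 = i)
    (E' : Finset (Fin n × Fin m))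
    (hE' : E' = (E \ E.filter (fun e => e.1 = i)) ∪ Ei')
    (x x' : Fin n → Option (Fin m))
    (hx : MKPFeasible s c E x)
    (hxopt : ∀ y, MKPFeasible s c E y → MKPWelfare v y ≤ MKPWelfare v x)
    (hxmin : ∀ y, MKPFeasible s c E y → MKPWelfare v y = MKPWelfare v x → y ≠ x → lt x y)
    (hx' : MKPFeasible s c E' x')
    (hx'opt : ∀ y, MKPFeasible s c E' y → MKPWelfare v y ≤ MKPWelfare v x')
    (hx'min : ∀ y, MKPFeasible s c E' y → MKPWelfare v y = MKPWelfare v x' → y ≠ x' → lt x' y)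
    (hj : ∃ j, (i, j) ∈ E ∧ x' i = some j) :
    x i ≠ none := by
  intro hn
  obtain ⟨j, hjE, hxj⟩ := hj
  have h1 : MKPFeasible s c E x' := by
    refine ⟨fun k l hkl => ?_, hx'.2⟩
    by_cases hk : k = i
    · subst hk
      rw [hxj] at hkl
      cases hkl
      exact hjE
    · have h := hx'.1 k l hkl
      rw [hE', Finset.mem_union] at h
      rcases h with h | h
      · exact (Finset.mem_sdiff.1 h).1
      · exact absurd (hEi' _ h) hk
  have h2 : MKPFeasible s c E' x := by
    refine ⟨fun k l hkl => ?_, hx.2⟩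
    have hk : k ≠ i := by
      rintro rfl
      rw [hn] at hkl
      cases hkl
    have h := hx.1 k l hkl
    rw [hE']
    simp [h, hk]
  have hw : MKPWelfare v x = MKPWelfare v x' := le_antisymm (hx'opt x h2) (hxopt x' h1)
  have hne : x ≠ x' := by
    rintro rfl
    rw [hn] at hxj
    cases hxj
  have a := hxmin x' h1 hw.symm hne.symm
  have b := hx'min x h2 hw hne
  exact hlt.irrefl x (hlt.trans x x' x a b)
end

section
/- Fix numbers of jobs n and machines m, values v : Fin n → ℝ with v ≥ 0, sizes s : Fin n → ℝ with s > 0, capacities c : Fin m → ℝ with c ≥ 0, and an enumeration e : Fin (n·m) ≃ (Fin n × Fin m) of all job–machine pairs. Call a feasible solution x of the MKP[E] LP lexicographically minimal among optimal solutions if x maximizes welfare among feasible solutions of the MKP[E] LP and, for every other welfare-maximizing feasible solution y ≠ x, at the least index k with x(e(k)) ≠ y(e(k)) one has x(e(k)) < y(e(k)). Let E be an edge set, i a job, E'_i a set of pairs with first coordinate i, and E' = (E \ E_i) ∪ E'_i. If x is lexicographically minimal among optimal solutions of the MKP[E] LP and x' is lexicographically minimal among optimal solutions of the MKP[E'] LP,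 then v(i) · ∑_{j : (i,j) ∈ E} x(i,j) ≥ v(i) · ∑_{j : (i,j) ∈ E} x'(i,j). That is, solving the fractional multiple knapsack LP optimally with consistent lexicographic tie-breaking is a truthful fractional mechanism. -/
/-- Feasibility for the MKP[E] LP. -/
def MKPLPFeasible {n m : ℕ} (s : Fin n → ℝ) (c : Fin m → ℝ)
    (E : Finset (Fin n × Fin m)) (x : Fin n × Fin m → ℝ) : Prop :=
  (∀ p, 0 ≤ x p ∧ x p ≤ 1) ∧ (∀ p, p ∉ E → x p = 0) ∧
    (∀ i, ∑ j, x (i, j) ≤ 1) ∧ (∀ j, ∑ i, s i * x (i, j) ≤ c j)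

/-- Welfare of a fractional MKP solution. -/
def MKPLPWelfare {n m : ℕ} (v : Fin n → ℝ) (x : Fin n × Fin m → ℝ) : ℝ :=
  ∑ p : Fin n × Fin m, v p.1 * x p

/-- `x` is lexicographically minimal among optimal solutions of the MKP[E] LP,
with respect to the enumeration `e` of job–machine pairs. -/
def MKPLexMinOptimal {n m : ℕ} (s : Fin n → ℝ) (v : Fin n → ℝ) (c : Fin m → ℝ)
    (e : Fin (n * m) ≃ (Fin n × Fin m)) (E : Finset (Fin n × Fin m))
    (x : Fin n × Fin m → ℝ) : Prop :=
  MKPLPFeasible s c E x ∧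
    (∀ y, MKPLPFeasible s c E y → MKPLPWelfare v y ≤ MKPLPWelfare v x) ∧
    ∀ y, MKPLPFeasible s c E y → MKPLPWelfare v y = MKPLPWelfare v x → y ≠ x →
      ∀ k : Fin (n * m), (∀ l, l < k → x (e l) = y (e l)) → x (e k) ≠ y (e k) →
        x (e k) < y (e k)

open Filter Topology in
lemma ev_aux (a b u : ℝ) (h : a ≤ u) (h' : 0 < b → a < u) :
    ∀ᶠ t in 𝓝[>] (0:ℝ), a + t * b ≤ u := by
  by_cases hb : 0 < b
  · have h1 : Tendsto (fun t : ℝ => a + t * b) (𝓝[>] 0) (𝓝 (a + 0 * b)) := by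
      apply Tendsto.mono_left _ nhdsWithin_le_nhds
      exact (Continuous.tendsto (by fun_prop) 0)
    have h2 := h1.eventually (gt_mem_nhds (show a + 0 * b < u by simpa using h' hb))
    filter_upwards [h2] with t ht using ht.le
  · filter_upwards [self_mem_nhdsWithin] with t ht
    have : 0 < t := ht
    nlinarith

open Filter Topology in
lemma feas_dir {n m : ℕ} (s : Fin n → ℝ) (c : Fin m → ℝ)
    (E : Finset (Fin n × Fin m)) (x g : Fin n × Fin m → ℝ) (hx : MKPLPFeasible s c E x)
    (h0 : ∀ p, p ∉ E → g p = 0) (h1 : ∀ p, g p < 0 → 0 < x p) (h2 : ∀ p, 0 < g p → x p < 1)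
    (h3 : ∀ r, 0 < ∑ j, g (r, j) → ∑ j, x (r, j) < 1)
    (h4 : ∀ j, 0 < ∑ r, s r * g (r, j) → ∑ r, s r * x (r, j) < c j) :
    ∀ᶠ t in 𝓝[>] (0:ℝ), MKPLPFeasible s c E (fun p => x p + t * g p) := by
  obtain ⟨a1, a2, a3, a4⟩ := hx
  have e1 : ∀ᶠ t in 𝓝[>] (0:ℝ), ∀ p, -x p + t * (-g p) ≤ 0 := by
    rw [eventually_all]
    intro p
    refine ev_aux _ _ _ (by linarith [(a1 p).1]) (fun h => ?_)
    linarith [h1 p (by linarith)]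
  have e2 : ∀ᶠ t in 𝓝[>] (0:ℝ), ∀ p, x p + t * g p ≤ 1 := by
    rw [eventually_all]
    intro p
    exact ev_aux _ _ _ (a1 p).2 (h2 p)
  have e3 : ∀ᶠ t in 𝓝[>] (0:ℝ), ∀ r, ∑ j, x (r, j) + t * ∑ j, g (r, j) ≤ 1 := by
    rw [eventually_all]
    intro r
    exact ev_aux _ _ _ (a3 r) (h3 r)
  have e4 : ∀ᶠ t in 𝓝[>] (0:ℝ), ∀ j,
      ∑ r, s r * x (r, j) + t * ∑ r, s r * g (r, j) ≤ c j := by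
    rw [eventually_all]
    intro j
    exact ev_aux _ _ _ (a4 j) (h4 j)
  filter_upwards [e1, e2, e3, e4] with t b1 b2 b3 b4
  refine ⟨fun p => ⟨by linarith [b1 p], b2 p⟩, fun p hp => by simp [a2 p hp, h0 p hp],
    fun r => ?_, fun j => ?_⟩
  · have := b3 r
    rwa [Finset.mul_sum, ← Finset.sum_add_distrib] at this
  · have := b4 j
    rw [Finset.mul_sum, ← Finset.sum_add_distrib] at this
    refine le_trans (le_of_eq (Finset.sum_congr rfl fun r _ => ?_)) this
    ring

/-- Two lexicographically minimal optima admit no common exchange direction. -/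
lemma no_exchange {n m : ℕ} (s v : Fin n → ℝ) (c : Fin m → ℝ)
    (e : Fin (n * m) ≃ (Fin n × Fin m)) (E E' : Finset (Fin n × Fin m))
    (x x' g : Fin n × Fin m → ℝ)
    (hx : MKPLexMinOptimal s v c e E x) (hx' : MKPLexMinOptimal s v c e E' x')
    (t : ℝ) (ht : 0 < t)
    (hf : MKPLPFeasible s c E (fun p => x p + t * g p))
    (hf' : MKPLPFeasible s c E' (fun p => x' p + t * (-g p))) : g = 0 := by
  by_contra hg
  have w1 : MKPLPWelfare v (fun p => x p + t * g p)
      = MKPLPWelfare v x + t * MKPLPWelfare v g := by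
    simp only [MKPLPWelfare]
    rw [Finset.mul_sum, ← Finset.sum_add_distrib]
    exact Finset.sum_congr rfl fun p _ => by ring
  have w2 : MKPLPWelfare v (fun p => x' p + t * (-g p))
      = MKPLPWelfare v x' - t * MKPLPWelfare v g := by
    simp only [MKPLPWelfare]
    rw [Finset.mul_sum, ← Finset.sum_sub_distrib]
    exact Finset.sum_congr rfl fun p _ => by ring
  obtain ⟨-, o1, l1⟩ := hx
  obtain ⟨-, o2, l2⟩ := hx'
  have q1 := o1 _ hf
  have q2 := o2 _ hf'
  have w0 : t * MKPLPWelfare v g = 0 := by linarith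
  have hne : ∃ k, g (e k) ≠ 0 := by
    by_contra hcon
    push Not at hcon
    apply hg
    funext p
    simpa using hcon (e.symm p)
  obtain ⟨k, hk, hmin⟩ : ∃ k, g (e k) ≠ 0 ∧ ∀ l, l < k → g (e l) = 0 := by
    obtain ⟨k, hk, hm⟩ := WellFounded.has_min (wellFounded_lt (α := Fin (n * m)))
      {k | g (e k) ≠ 0} hne
    refine ⟨k, hk, fun l hl => ?_⟩
    by_contra h
    exact hm l h hl
  have hk' : t * g (e k) ≠ 0 := mul_ne_zero ht.ne' hk
  have r1 := l1 _ hf (by linarith)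
    (fun h => hk' (by have := congrFun h (e k); linarith)) k
    (fun l hl => by simp [hmin l hl]) (fun h => hk' (by linarith))
  have r2 := l2 _ hf' (by linarith)
    (fun h => hk' (by have := congrFun h (e k); linarith)) k
    (fun l hl => by simp [hmin l hl]) (fun h => hk' (by linarith))
  linarith

/-- `f` has the same signs as `D`. -/
def SignConformal {n m : ℕ} (D f : Fin n × Fin m → ℝ) : Prop :=
  ∀ p, (0 < f p → 0 < D p) ∧ (f p < 0 → D p < 0)

/-- Unit flow from job `i` to job `r`. -/
def ReachJob {n m : ℕ} (D : Fin n × Fin m → ℝ) (i r : Fin n) : Prop :=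
  ∃ f, SignConformal D f ∧
    (∀ a, ∑ j, f (a, j) = (if a = i then 1 else 0) - (if a = r then 1 else 0)) ∧
    ∀ j, ∑ a, f (a, j) = 0

/-- Unit flow from job `i` to machine `k`. -/
def ReachMachine {n m : ℕ} (D : Fin n × Fin m → ℝ) (i : Fin n) (k : Fin m) : Prop :=
  ∃ f, SignConformal D f ∧
    (∀ a, ∑ j, f (a, j) = (if a = i then 1 else 0)) ∧
    ∀ j, ∑ a, f (a, j) = (if j = k then 1 else 0)

lemma reach_self {n m : ℕ} (D : Fin n × Fin m → ℝ) (i : Fin n) : ReachJob D i i :=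
  ⟨0, fun p => by simp, fun a => by simp, fun j => by simp⟩

lemma reach_step {n m : ℕ} {D : Fin n × Fin m → ℝ} {i r : Fin n} {k : Fin m}
    (h : ReachJob D i r) (hD : 0 < D (r, k)) : ReachMachine D i k := by
  obtain ⟨f, h1, h2, h3⟩ := h
  refine ⟨fun p => f p + if p = (r, k) then 1 else 0, fun p => ?_, fun a => ?_, fun j => ?_⟩
  · by_cases hp : p = (r, k)
    · subst hp
      simp only [if_true]
      refine ⟨fun _ => hD, fun h => (h1 _).2 (by linarith)⟩
    · simpa [hp] using h1 p
  · rw [Finset.sum_add_distrib, h2]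
    by_cases ha : a = r <;> simp [ha]
  · rw [Finset.sum_add_distrib, h3]
    by_cases ha : j = k <;> simp [ha]

lemma reach_back {n m : ℕ} {D : Fin n × Fin m → ℝ} {i r : Fin n} {k : Fin m}
    (h : ReachMachine D i k) (hD : D (r, k) < 0) : ReachJob D i r := by
  obtain ⟨f, h1, h2, h3⟩ := h
  refine ⟨fun p => f p - if p = (r, k) then 1 else 0, fun p => ?_, fun a => ?_, fun j => ?_⟩
  · by_cases hp : p = (r, k)
    · subst hp
      simp only [if_true]
      refine ⟨fun h => (h1 _).1 (by linarith), fun _ => hD⟩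
    · simpa [hp] using h1 p
  · rw [Finset.sum_sub_distrib, h2]
    by_cases ha : a = r <;> simp [ha]
  · rw [Finset.sum_sub_distrib, h3]
    by_cases ha : j = k <;> simp [ha]

open Filter Topology in
/-- A conformal flow with admissible end points must vanish. -/
lemma flow_zero {n m : ℕ} (s v : Fin n → ℝ) (c : Fin m → ℝ) (hs : ∀ i, 0 < s i)
    (e : Fin (n * m) ≃ (Fin n × Fin m)) (E E' : Finset (Fin n × Fin m))
    (x x' D f : Fin n × Fin m → ℝ)
    (hx : MKPLexMinOptimal s v c e E x) (hx' : MKPLexMinOptimal s v c e E' x')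
    (hD : D = fun p => if p ∈ E ∧ p ∈ E' then x' p - x p else 0)
    (hf : SignConformal D f)
    (h1 : ∀ r, 0 < ∑ j, f (r, j) → ∑ j, x (r, j) < 1)
    (h2 : ∀ r, ∑ j, f (r, j) < 0 → ∑ j, x' (r, j) < 1)
    (h3 : ∀ j, 0 < ∑ r, f (r, j) → ∑ r, s r * x (r, j) < c j)
    (h4 : ∀ j, 0 ≤ ∑ r, f (r, j)) : f = 0 := by
  set g : Fin n × Fin m → ℝ := fun p => f p / s p.1 with hg
  have F := hx.1
  have F' := hx'.1
  have hpos : ∀ p, 0 < g p → p ∈ E ∧ p ∈ E' ∧ x p < x' p := by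
    intro p hp
    have a : 0 < f p := by
      have := mul_pos hp (hs p.1)
      simpa [hg, (hs p.1).ne'] using this
    have b := (hf p).1 a
    rw [hD] at b
    by_cases q : p ∈ E ∧ p ∈ E'
    · simp [q] at b; exact ⟨q.1, q.2, b⟩
    · simp [q] at b
  have hneg : ∀ p, g p < 0 → p ∈ E ∧ p ∈ E' ∧ x' p < x p := by
    intro p hp
    have a : f p < 0 := by
      have := mul_neg_of_neg_of_pos hp (hs p.1)
      simpa [hg, (hs p.1).ne'] using this
    have b := (hf p).2 a
    rw [hD] at b
    by_cases q : p ∈ E ∧ p ∈ E'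
    · simp [q] at b; exact ⟨q.1, q.2, b⟩
    · simp [q] at b
  have hrow : ∀ r, ∑ j, g (r, j) = (∑ j, f (r, j)) / s r := fun r => by
    simp [hg, Finset.sum_div]
  have hcol : ∀ j, ∑ r, s r * g (r, j) = ∑ r, f (r, j) := fun j =>
    Finset.sum_congr rfl fun r _ => by
      simp only [hg]; field_simp [(hs r).ne']
  have ev1 := feas_dir s c E x g F
    (fun p hp => by
      by_contra h
      rcases lt_or_gt_of_ne h with h | h
      · exact hp (hneg p h).1
      · exact hp (hpos p h).1)
    (fun p hp => by linarith [(hneg p hp).2.2, (F'.1 p).1])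
    (fun p hp => by linarith [(hpos p hp).2.2, (F'.1 p).2])
    (fun r hr => h1 r (by
      rw [hrow] at hr
      have := mul_pos hr (hs r)
      simpa [(hs r).ne'] using this))
    (fun j hj => h3 j (by rwa [hcol] at hj))
  have ev2 := feas_dir s c E' x' (fun p => -g p) F'
    (fun p hp => by
      by_contra h
      have h : g p ≠ 0 := by simpa using h
      rcases lt_or_gt_of_ne h with h | h
      · exact hp (hneg p h).2.1
      · exact hp (hpos p h).2.1)
    (fun p hp => by linarith [(hpos p (by linarith)).2.2, (F.1 p).1])
    (fun p hp => by linarith [(hneg p (by linarith)).2.2, (F.1 p).2])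
    (fun r hr => h2 r (by
      rw [Finset.sum_neg_distrib, hrow] at hr
      have := mul_pos hr (hs r)
      have h5 := (hs r).ne'
      field_simp at this
      linarith))
    (fun j hj => by
      simp only [mul_neg, Finset.sum_neg_distrib, hcol] at hj
      linarith [h4 j])
  obtain ⟨t, ⟨t1, t2⟩, t3⟩ := ((ev1.and ev2).and self_mem_nhdsWithin).exists
  have g0 := no_exchange s v c e E E' x x' g hx hx' t t3 t1 t2
  funext p
  have := congrFun g0 p
  simpa [hg, (hs p.1).ne'] using this

/-- Solving the fractional multiple knapsack LP optimally with consistent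
lexicographic tie-breaking is a truthful fractional mechanism. -/
theorem stmt6 (n m : ℕ) (v s : Fin n → ℝ) (c : Fin m → ℝ)
    (hv : ∀ i, 0 ≤ v i) (hs : ∀ i, 0 < s i) (hc : ∀ j, 0 ≤ c j)
    (e : Fin (n * m) ≃ (Fin n × Fin m))
    (E Ei' : Finset (Fin n × Fin m)) (i : Fin n)
    (hEi' : ∀ q ∈ Ei', q.1 = i)
    (E' : Finset (Fin n × Fin m))
    (hE' : E' = (E \ E.filter (fun q => q.1 = i)) ∪ Ei')
    (x x' : Fin n × Fin m → ℝ)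
    (hx : MKPLexMinOptimal s v c e E x)
    (hx' : MKPLexMinOptimal s v c e E' x') :
    v i * ∑ j ∈ Finset.univ.filter (fun j => (i, j) ∈ E), x' (i, j)
      ≤ v i * ∑ j ∈ Finset.univ.filter (fun j => (i, j) ∈ E), x (i, j) := by
  classical
  apply mul_le_mul_of_nonneg_left _ (hv i)
  by_contra hlt
  push Not at hlt
  have F := hx.1
  have F' := hx'.1
  have hEE : ∀ p : Fin n × Fin m, p.1 ≠ i → (p ∈ E ↔ p ∈ E') := by
    intro p hp
    have : p ∉ Ei' := fun h => hp (hEi' p h)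
    simp [hE', this, hp]
  clear hE'
  obtain ⟨D, hD⟩ : ∃ D : Fin n × Fin m → ℝ,
      D = fun p => if p ∈ E ∧ p ∈ E' then x' p - x p else 0 := ⟨_, rfl⟩
  obtain ⟨b, hb⟩ : ∃ b : Fin m → ℝ,
      b = fun j => if (i, j) ∈ E ∧ (i, j) ∉ E' then x (i, j) else 0 := ⟨_, rfl⟩
  have hb0 : ∀ j, 0 ≤ b j := fun j => by
    rw [hb]; dsimp only; split_ifs
    · exact (F.1 _).1
    · exact le_rfl
  have hDi : ∑ j, D (i, j) - ∑ j, b j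
      = ∑ j ∈ Finset.univ.filter (fun j => (i, j) ∈ E), x' (i, j)
        - ∑ j ∈ Finset.univ.filter (fun j => (i, j) ∈ E), x (i, j) := by
    rw [Finset.sum_filter, Finset.sum_filter, ← Finset.sum_sub_distrib,
      ← Finset.sum_sub_distrib]
    refine Finset.sum_congr rfl fun j _ => ?_
    rw [hD, hb]
    have := F'.2.1 (i, j)
    by_cases h1 : (i, j) ∈ E <;> by_cases h2 : (i, j) ∈ E' <;> simp [h1, h2, this]
  have hxE : ∀ y : Fin n × Fin m → ℝ, (∀ p, 0 ≤ y p ∧ y p ≤ 1) →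
      ∑ j ∈ Finset.univ.filter (fun j => (i, j) ∈ E), y (i, j) ≤ ∑ j, y (i, j) :=
    fun y hy => Finset.sum_le_sum_of_subset_of_nonneg (Finset.subset_univ _)
      fun j _ _ => (hy _).1
  have hxi : ∑ j, x (i, j) < 1 := by
    have h1 : ∑ j ∈ Finset.univ.filter (fun j => (i, j) ∈ E), x (i, j) = ∑ j, x (i, j) := by
      rw [Finset.sum_filter]
      refine Finset.sum_congr rfl fun j _ => ?_
      split_ifs with h
      · rfl
      · exact (F.2.1 _ h).symm
    linarith [hxE x' F'.1, F'.2.2.1 i]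
  -- reached jobs are tight
  have tJ : ∀ r, r ≠ i → ReachJob D i r → ∑ j, x' (r, j) = 1 := by
    intro r hr ⟨f, f1, f2, f3⟩
    by_contra hne
    have hlt' : ∑ j, x' (r, j) < 1 := lt_of_le_of_ne (F'.2.2.1 r) hne
    have f0 := flow_zero s v c hs e E E' x x' D f hx hx' hD f1
      (fun a ha => by
        rw [f2] at ha
        by_cases h : a = i
        · rwa [h]
        · simp only [h, if_false] at ha
          split_ifs at ha <;> linarith)
      (fun a ha => by
        rw [f2] at ha
        by_cases h : a = r
        · rwa [h]
        · simp only [h, if_false] at ha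
          split_ifs at ha <;> linarith)
      (fun j hj => by rw [f3] at hj; exact absurd hj (lt_irrefl _))
      (fun j => by rw [f3])
    have := f2 i
    simp [f0, hr.symm] at this
  have tM : ∀ k, ReachMachine D i k → ∑ r, s r * x (r, k) = c k := by
    intro k ⟨f, f1, f2, f3⟩
    by_contra hne
    have hlt' : ∑ r, s r * x (r, k) < c k := lt_of_le_of_ne (F.2.2.2 k) hne
    have f0 := flow_zero s v c hs e E E' x x' D f hx hx' hD f1
      (fun a ha => by
        rw [f2] at ha
        by_cases h : a = i
        · rwa [h]
        · simp [h] at ha)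
      (fun a ha => by
        rw [f2] at ha
        split_ifs at ha <;> linarith)
      (fun j hj => by
        rw [f3] at hj
        by_cases h : j = k
        · rwa [h]
        · simp [h] at hj)
      (fun j => by rw [f3]; split_ifs <;> norm_num)
    have := f2 i
    simp [f0] at this
  -- cut inequality
  have cut : ∑ r, ∑ j, s r * D (r, j) *
      ((if ReachJob D i r then 1 else 0) - (if ReachMachine D i j then 1 else 0)) ≤ 0 := by
    refine Finset.sum_nonpos fun r _ => Finset.sum_nonpos fun j _ => ?_
    by_cases hJ : ReachJob D i r <;> by_cases hM : ReachMachine D i j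
    · simp [hJ, hM]
    · have : D (r, j) ≤ 0 := by
        by_contra h
        exact hM (reach_step hJ (not_le.mp h))
      simp only [hJ, hM, if_true, if_false]
      nlinarith [hs r]
    · have : 0 ≤ D (r, j) := by
        by_contra h
        exact hJ (reach_back hM (not_le.mp h))
      simp only [hJ, hM, if_true, if_false]
      nlinarith [hs r]
    · simp [hJ, hM]
  have cut2 : ∑ r, (if ReachJob D i r then s r * ∑ j, D (r, j) else 0)
      ≤ ∑ j, (if ReachMachine D i j then ∑ r, s r * D (r, j) else 0) := by
    have e1 : ∑ r, (if ReachJob D i r then s r * ∑ j, D (r, j) else 0)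
        = ∑ r, ∑ j, s r * D (r, j) * (if ReachJob D i r then 1 else 0) := by
      refine Finset.sum_congr rfl fun r _ => ?_
      split_ifs <;> simp [Finset.mul_sum]
    have e2 : ∑ j, (if ReachMachine D i j then ∑ r, s r * D (r, j) else 0)
        = ∑ r, ∑ j, s r * D (r, j) * (if ReachMachine D i j then 1 else 0) := by
      rw [Finset.sum_comm]
      refine Finset.sum_congr rfl fun j _ => ?_
      split_ifs <;> simp
    rw [e1, e2]
    simp only [mul_sub, Finset.sum_sub_distrib] at cut
    linarith
  have low : s i * ∑ j, D (i, j)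
      ≤ ∑ r, (if ReachJob D i r then s r * ∑ j, D (r, j) else 0) := by
    have hnn : ∀ r ∈ Finset.univ,
        0 ≤ (if ReachJob D i r then s r * ∑ j, D (r, j) else 0) := by
      intro r _
      split_ifs with h
      · apply mul_nonneg (hs r).le
        by_cases hr : r = i
        · subst hr
          have := Finset.sum_nonneg fun j (_ : j ∈ Finset.univ) => hb0 j
          linarith
        · have : ∑ j, D (r, j) = ∑ j, x' (r, j) - ∑ j, x (r, j) := by
            rw [← Finset.sum_sub_distrib]
            refine Finset.sum_congr rfl fun j _ => ?_
            have q := hEE (r, j) hr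
            rw [hD]
            by_cases h1 : (r, j) ∈ E
            · simp [h1, q.mp h1]
            · have h2 : (r, j) ∉ E' := fun h => h1 (q.mpr h)
              simp [h1, F.2.1 _ h1, F'.2.1 _ h2]
          rw [this, tJ r hr h]
          linarith [F.2.2.1 r]
      · exact le_rfl
    have := Finset.single_le_sum hnn (Finset.mem_univ i)
    simpa [reach_self D i] using this
  have up : ∑ j, (if ReachMachine D i j then ∑ r, s r * D (r, j) else 0)
      ≤ s i * ∑ j, b j := by
    rw [Finset.mul_sum]
    refine Finset.sum_le_sum fun j _ => ?_
    split_ifs with h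
    · have h1 : ∑ r, s r * D (r, j) ≤ ∑ r, (s r * x' (r, j) - s r * x (r, j)
          + if r = i then s i * b j else 0) := by
        refine Finset.sum_le_sum fun r _ => ?_
        have p1 := F.2.1 (r, j)
        have p2 := F'.2.1 (r, j)
        have p3 := mul_nonneg (hs r).le (F'.1 (r, j)).1
        have p4 := mul_nonneg (hs i).le (hb0 j)
        by_cases hr : r = i
        · subst hr
          by_cases h1 : (r, j) ∈ E <;> by_cases h2 : (r, j) ∈ E' <;>
            simp [hD, hb, h1, h2, p1, p2, mul_sub] <;> simpa using p3
        · have q := hEE (r, j) hr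
          by_cases h1 : (r, j) ∈ E
          · simp [hD, h1, q.mp h1, hr, mul_sub]
          · have h2 : (r, j) ∉ E' := fun h => h1 (q.mpr h)
            simp [hD, h1, h2, p1, p2, hr]
      rw [Finset.sum_add_distrib, Finset.sum_sub_distrib, tM j h] at h1
      simp at h1
      linarith [F'.2.2.2 j]
    · exact mul_nonneg (hs i).le (hb0 j)
  have : s i * (∑ j, D (i, j) - ∑ j, b j) ≤ 0 := by
    rw [mul_sub]; linarith
  have := mul_pos (hs i) (show 0 < ∑ j, D (i, j) - ∑ j, b j by linarith)
  linarith
end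

section
/- Fix numbers of jobs n and machines m, values v : Fin n × Fin m → ℝ with v ≥ 0, sizes s : Fin n → ℝ with s > 0, capacities c : Fin m → ℝ with c ≥ 0, and an enumeration e : Fin (n·m) ≃ (Fin n × Fin m) such that the densities v(e(k))/s((e(k)).1) are non-increasing in k. Let E be an edge set and let x be a feasible solution of the SIGAP[E] LP that is lexicographically maximal: for every feasible solution y ≠ x of the SIGAP[E] LP, at the least index k with x(e(k)) ≠ y(e(k)) one has x(e(k)) > y(e(k)). Then for every feasible solution y of the SIGAP[E] LP, ∑_{(i,j)} v(i,j)·y(i,j) ≤ 2 · ∑_{(i,j)} v(i,j)·x(i,j). That is, the greedy algorithm that processes edges in decreasing order of value density, assigning as much of each job as possible, returns a 2-approximate solution to the SIGAP[E] LP. -/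
/-- Feasibility for the SIGAP[E] LP (sizes independent of the machine). -/
def SIGAPLPFeasible {n m : ℕ} (s : Fin n → ℝ) (c : Fin m → ℝ)
    (E : Finset (Fin n × Fin m)) (x : Fin n × Fin m → ℝ) : Prop :=
  (∀ p, 0 ≤ x p ∧ x p ≤ 1) ∧ (∀ p, p ∉ E → x p = 0) ∧
    (∀ i, ∑ j, x (i, j) ≤ 1) ∧ (∀ j, ∑ i, s i * x (i, j) ≤ c j)

open Finset in
/-- Every edge of `E` is tight in the prefix: its job or its machine is saturated. -/
lemma greedy_tight (n m : ℕ) (s : Fin n → ℝ) (c : Fin m → ℝ)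
    (hs : ∀ i, 0 < s i)
    (e : Fin (n * m) ≃ (Fin n × Fin m))
    (E : Finset (Fin n × Fin m))
    (x : Fin n × Fin m → ℝ)
    (hx : SIGAPLPFeasible s c E x)
    (hlexmax : ∀ y, SIGAPLPFeasible s c E y → y ≠ x →
      ∀ k : Fin (n * m), (∀ l, l < k → x (e l) = y (e l)) → x (e k) ≠ y (e k) →
        y (e k) < x (e k)) (a : Fin n) (b : Fin m) (hp : (a, b) ∈ E) :
    1 ≤ ∑ j, (if e.symm (a, j) ≤ e.symm (a, b) then x (a, j) else 0) ∨
    c b ≤ ∑ i, s i * (if e.symm (i, b) ≤ e.symm (a, b) then x (i, b) else 0) := by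
  by_contra hcon
  push Not at hcon
  obtain ⟨h1, h2⟩ := hcon
  obtain ⟨hx0, hxE, hxJ, hxM⟩ := hx
  obtain ⟨δ, hδ, hδ1, hδ2⟩ : ∃ δ : ℝ, 0 < δ ∧
      ∑ j, (if e.symm (a, j) ≤ e.symm (a, b) then x (a, j) else 0) + δ ≤ 1 ∧
      ∑ i, s i * (if e.symm (i, b) ≤ e.symm (a, b) then x (i, b) else 0) + s a * δ ≤ c b := by
    refine ⟨min (1 - ∑ j, (if e.symm (a, j) ≤ e.symm (a, b) then x (a, j) else 0))
      ((c b - ∑ i, s i * (if e.symm (i, b) ≤ e.symm (a, b) then x (i, b) else 0)) / s a),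
      ?_, ?_, ?_⟩
    · exact lt_min (by linarith) (div_pos (by linarith) (hs a))
    · have := min_le_left (1 - ∑ j, (if e.symm (a, j) ≤ e.symm (a, b) then x (a, j) else 0))
        ((c b - ∑ i, s i * (if e.symm (i, b) ≤ e.symm (a, b) then x (i, b) else 0)) / s a)
      linarith
    · have := min_le_right (1 - ∑ j, (if e.symm (a, j) ≤ e.symm (a, b) then x (a, j) else 0))
        ((c b - ∑ i, s i * (if e.symm (i, b) ≤ e.symm (a, b) then x (i, b) else 0)) / s a)
      rw [le_div_iff₀ (hs a)] at this
      linarith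
  let g : Fin n × Fin m → ℝ := fun q => if e.symm q ≤ e.symm (a, b) then x q else 0
  let y : Fin n × Fin m → ℝ := fun q => g q + if q = (a, b) then δ else 0
  have hg0 : ∀ q, 0 ≤ g q := by
    intro q
    simp only [g]
    split_ifs
    · exact (hx0 q).1
    · exact le_rfl
  have hgx : ∀ q, g q ≤ x q := by
    intro q
    simp only [g]
    split_ifs
    · exact le_rfl
    · exact (hx0 q).1
  have hy0 : ∀ q, 0 ≤ y q := by
    intro q
    have := hg0 q
    simp only [y]
    split_ifs <;> linarith
  have hyJ : ∀ i, ∑ j, y (i, j) ≤ 1 := by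
    intro i
    by_cases hi : i = a
    · subst hi
      simp only [y, sum_add_distrib, Prod.mk.injEq, true_and, sum_ite_eq', mem_univ, if_true]
      simpa [g] using hδ1
    · refine le_trans (sum_le_sum fun j _ => ?_) (hxJ i)
      simpa [y, hi] using hgx (i, j)
  have hyM : ∀ j, ∑ i, s i * y (i, j) ≤ c j := by
    intro j
    by_cases hj : j = b
    · subst hj
      simp only [y, mul_add, sum_add_distrib, Prod.mk.injEq, and_true, mul_ite, mul_zero,
        sum_ite_eq', mem_univ, if_true]
      simpa [g] using hδ2
    · refine le_trans (sum_le_sum fun i _ => ?_) (hxM j)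
      have := mul_le_mul_of_nonneg_left (hgx (i, j)) (hs i).le
      simpa [y, hj] using this
  have hyf : SIGAPLPFeasible s c E y := by
    refine ⟨fun q => ⟨hy0 q, ?_⟩, fun q hq => ?_, hyJ, hyM⟩
    · exact le_trans (single_le_sum (f := fun j => y (q.1, j)) (fun j _ => hy0 _)
        (mem_univ q.2)) (hyJ q.1)
    · have hne : q ≠ (a, b) := by
        rintro rfl
        exact hq hp
      simp [y, g, hne, hxE q hq]
  have hyab : y (a, b) = x (a, b) + δ := by simp [y, g]
  have hne : y ≠ x := by
    intro h
    rw [h] at hyab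
    linarith
  have := hlexmax y hyf hne (e.symm (a, b)) (fun l hl => by
    have h3 : e l ≠ (a, b) := by
      intro h
      rw [← h] at hl
      simp at hl
    simp [y, g, h3, hl.le]) (by
    rw [Equiv.apply_symm_apply, hyab]
    linarith)
  rw [Equiv.apply_symm_apply, hyab] at this
  linarith

/-- The greedy (lexicographically maximal in decreasing density order) fractional
solution is a 2-approximation to the SIGAP[E] LP. -/
theorem stmt7 (n m : ℕ) (v : Fin n × Fin m → ℝ) (s : Fin n → ℝ) (c : Fin m → ℝ)
    (hv : ∀ p, 0 ≤ v p) (hs : ∀ i, 0 < s i) (hc : ∀ j, 0 ≤ c j)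
    (e : Fin (n * m) ≃ (Fin n × Fin m))
    (hdens : ∀ k l : Fin (n * m), k ≤ l → v (e l) / s (e l).1 ≤ v (e k) / s (e k).1)
    (E : Finset (Fin n × Fin m))
    (x : Fin n × Fin m → ℝ)
    (hx : SIGAPLPFeasible s c E x)
    (hlexmax : ∀ y, SIGAPLPFeasible s c E y → y ≠ x →
      ∀ k : Fin (n * m), (∀ l, l < k → x (e l) = y (e l)) → x (e k) ≠ y (e k) →
        y (e k) < x (e k)) :
    ∀ y, SIGAPLPFeasible s c E y →
      ∑ p : Fin n × Fin m, v p * y p ≤ 2 * ∑ p : Fin n × Fin m, v p * x p := by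
  intro y hy
  have htight := greedy_tight n m s c hs e E x hx hlexmax
  obtain ⟨hx0, hxE, hxJ, hxM⟩ := hx
  obtain ⟨hy0, hyE, hyJ, hyM⟩ := hy
  have hd : ∀ p q, e.symm q ≤ e.symm p → v p / s p.1 ≤ v q / s q.1 := by
    intro p q h
    simpa using hdens _ _ h
  have hvx : ∀ q, 0 ≤ v q * x q := fun q => mul_nonneg (hv q) (hx0 q).1
  have hB0 : ∀ j, 0 ≤ ∑ i, v (i, j) * x (i, j) := fun j => Finset.sum_nonneg fun i _ => hvx _
  have hA0 : ∀ i, 0 ≤ ∑ j, v (i, j) * x (i, j) := fun i => Finset.sum_nonneg fun j _ => hvx _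
  have key : ∀ i j, v (i, j) * y (i, j) ≤ (∑ j', v (i, j') * x (i, j')) * y (i, j) +
      (∑ i', v (i', j) * x (i', j)) / c j * (s i * y (i, j)) := by
    intro a b
    have hyab := (hy0 (a, b)).1
    have hsy := mul_nonneg (hs a).le hyab
    have ht1 := mul_nonneg (hA0 a) hyab
    have ht2 := mul_nonneg (div_nonneg (hB0 b) (hc b)) hsy
    by_cases hp : (a, b) ∈ E
    swap
    · simp [hyE _ hp]
    have hd0 : 0 ≤ v (a, b) / s a := div_nonneg (hv _) (hs a).le
    have hvd : v (a, b) = v (a, b) / s a * s a := by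
      field_simp [(hs a).ne']
    rcases htight a b hp with h | h
    · have h1 : v (a, b) ≤ ∑ j', v (a, j') * x (a, j') := by
        calc v (a, b) ≤ v (a, b) * ∑ j, (if e.symm (a, j) ≤ e.symm (a, b) then x (a, j) else 0) :=
              le_mul_of_one_le_right (hv _) h
          _ ≤ _ := by
              rw [Finset.mul_sum]
              refine Finset.sum_le_sum fun j _ => ?_
              split_ifs with hle
              · have := hd _ _ hle
                simp only at this
                rw [div_le_div_iff_of_pos_right (hs a)] at this
                exact mul_le_mul_of_nonneg_right this (hx0 _).1
              · simpa using hvx (a, j)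
      have := mul_le_mul_of_nonneg_right h1 hyab
      linarith
    · rcases (hc b).eq_or_lt with h0 | h0
      · have h5 : s a * y (a, b) ≤ c b :=
          le_trans (Finset.single_le_sum (f := fun i => s i * y (i, b))
            (fun i _ => mul_nonneg (hs i).le (hy0 _).1) (Finset.mem_univ a)) (hyM b)
        have h6 : s a * y (a, b) = 0 := by linarith
        have h7 : y (a, b) = 0 := (mul_eq_zero.mp h6).resolve_left (hs a).ne'
        simp [h7]
      · have h1 : v (a, b) / s a ≤ (∑ i', v (i', b) * x (i', b)) / c b := by
          rw [le_div_iff₀ h0]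
          refine le_trans (mul_le_mul_of_nonneg_left h hd0) ?_
          rw [Finset.mul_sum]
          refine Finset.sum_le_sum fun i _ => ?_
          split_ifs with hle
          · have := hd _ _ hle
            simp only at this
            rw [le_div_iff₀ (hs i)] at this
            rw [← mul_assoc]
            exact mul_le_mul_of_nonneg_right this (hx0 _).1
          · simpa using hvx (i, b)
        have h2 := mul_le_mul_of_nonneg_right h1 hsy
        have h3 : v (a, b) * y (a, b) = v (a, b) / s a * (s a * y (a, b)) := by
          rw [← mul_assoc, ← hvd]
        linarith
  have e1 : ∑ p : Fin n × Fin m, v p * x p = ∑ i, ∑ j, v (i, j) * x (i, j) :=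
    Fintype.sum_prod_type _
  have e2 : ∑ p : Fin n × Fin m, v p * x p = ∑ j, ∑ i, v (i, j) * x (i, j) :=
    Fintype.sum_prod_type_right _
  have s1 : ∑ i, ∑ j, (∑ j', v (i, j') * x (i, j')) * y (i, j) ≤
      ∑ p : Fin n × Fin m, v p * x p := by
    rw [e1]
    refine Finset.sum_le_sum fun i _ => ?_
    rw [← Finset.mul_sum]
    exact mul_le_of_le_one_right (hA0 i) (hyJ i)
  have s2 : ∑ i, ∑ j, (∑ i', v (i', j) * x (i', j)) / c j * (s i * y (i, j)) ≤
      ∑ p : Fin n × Fin m, v p * x p := by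
    rw [e2, Finset.sum_comm]
    refine Finset.sum_le_sum fun j _ => ?_
    rw [← Finset.mul_sum]
    refine le_trans (mul_le_mul_of_nonneg_left (hyM j) (div_nonneg (hB0 j) (hc j))) ?_
    rcases (hc j).eq_or_lt with h0 | h0
    · rw [← h0]
      simpa using hB0 j
    · rw [div_mul_cancel₀ _ h0.ne']
  have e3 : ∑ p : Fin n × Fin m, v p * y p = ∑ i, ∑ j, v (i, j) * y (i, j) :=
    Fintype.sum_prod_type _
  have s3 := Finset.sum_le_sum fun i (_ : i ∈ Finset.univ) =>
    Finset.sum_le_sum fun j (_ : j ∈ Finset.univ) => key i j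
  simp only [Finset.sum_add_distrib] at s3
  rw [e3]
  linarith
end

section
/- Fix numbers of jobs n and machines m, values v : Fin n × Fin m → ℝ with v ≥ 0, sizes s : Fin n → ℝ with s > 0, capacities c : Fin m → ℝ with c ≥ 0, and an enumeration e : Fin (n·m) ≃ (Fin n × Fin m) such that the densities v(e(k))/s((e(k)).1) are non-increasing in k. Let E be an edge set, i a job, E'_i a set of pairs with first coordinate i, and E' = (E \ E_i) ∪ E'_i. Let x be the lexicographically maximal feasible solution of the SIGAP[E] LP and x' the lexicographically maximal feasible solution of the SIGAP[E'] LP (lexicographically maximal means: for every other feasible solution y ≠ x, at the least index k with x(e(k)) ≠ y(e(k)) one has x(e(k)) > y(e(k))). Then ∑_{(i,j) ∈ E_i} v(i,j)·x(i,j) ≥ ∑_{(i,j) ∈ E_i} v(i,j)·x'(i,j). That is, the greedy density-ordered algorithm is a truthful fractional mechanism for SIGAP in the private graph model. -/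
/-- Truncation of `z` to the first `k` pairs of the enumeration. -/
noncomputable def TT {n m : ℕ} (e : Fin (n * m) ≃ (Fin n × Fin m)) (z : Fin n × Fin m → ℝ)
    (k : ℕ) (p : Fin n × Fin m) : ℝ := if (e.symm p : ℕ) < k then z p else 0

lemma sum_one {α : Type*} [Fintype α] [DecidableEq α] (f g : α → ℝ) (a : α)
    (h : ∀ b, b ≠ a → f b = g b) : ∑ b, f b = ∑ b, g b + (f a - g a) := by
  rw [← Finset.add_sum_erase Finset.univ f (Finset.mem_univ a),
    ← Finset.add_sum_erase Finset.univ g (Finset.mem_univ a),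
    Finset.sum_congr rfl (fun b hb => h b (Finset.ne_of_mem_erase hb))]
  ring

section
variable {n m : ℕ} (e : Fin (n * m) ≃ (Fin n × Fin m))

lemma TT_self (z : Fin n × Fin m → ℝ) (k : Fin (n * m)) :
    TT e z (k + 1) (e k) = TT e z k (e k) + z (e k) := by
  simp [TT]

lemma TT_ne (z : Fin n × Fin m → ℝ) (k : Fin (n * m)) (p : Fin n × Fin m) (h : p ≠ e k) :
    TT e z (k + 1) p = TT e z k p := by
  have : (e.symm p : ℕ) ≠ k := by
    intro h'
    apply h
    rw [← Fin.ext h']; simp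
  unfold TT
  congr 1
  simp only [eq_iff_iff]
  omega

lemma TT_nonneg (z : Fin n × Fin m → ℝ) (hz : ∀ p, 0 ≤ z p) (k : ℕ) (p) : 0 ≤ TT e z k p := by
  unfold TT; split_ifs <;> simp [hz]

lemma TT_le (z : Fin n × Fin m → ℝ) (hz : ∀ p, 0 ≤ z p) (k : ℕ) (p) : TT e z k p ≤ z p := by
  unfold TT; split_ifs <;> simp [hz]

lemma TT_mono (z : Fin n × Fin m → ℝ) (hz : ∀ p, 0 ≤ z p) (k : ℕ) (p) :
    TT e z k p ≤ TT e z (k+1) p := by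
  unfold TT; split_ifs <;> first | omega | simp [hz]

lemma TT_zero (z : Fin n × Fin m → ℝ) (p) : TT e z 0 p = 0 := by simp [TT]

lemma row_self (z : Fin n × Fin m → ℝ) (k : Fin (n * m)) :
    ∑ j, TT e z (k + 1) ((e k).1, j) = ∑ j, TT e z k ((e k).1, j) + z (e k) := by
  rw [sum_one _ (fun j => TT e z k ((e k).1, j)) (e k).2]
  · have := TT_self e z k
    simp only [Prod.mk.eta]
    linarith
  · intro b hb
    apply TT_ne
    intro h
    exact hb (congrArg Prod.snd h)

lemma row_ne (z : Fin n × Fin m → ℝ) (k : Fin (n * m)) (h : Fin n) (hh : h ≠ (e k).1) :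
    ∑ j, TT e z (k + 1) (h, j) = ∑ j, TT e z k (h, j) := by
  refine Finset.sum_congr rfl fun j _ => TT_ne e z k _ ?_
  intro h'
  exact hh (congrArg Prod.fst h')

lemma col_self (z : Fin n × Fin m → ℝ) (k : Fin (n * m)) :
    ∑ h, TT e z (k + 1) (h, (e k).2) = ∑ h, TT e z k (h, (e k).2) + z (e k) := by
  rw [sum_one _ (fun h => TT e z k (h, (e k).2)) (e k).1]
  · have := TT_self e z k
    simp only [Prod.mk.eta]
    linarith
  · intro b hb
    apply TT_ne
    intro h
    exact hb (congrArg Prod.fst h)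

lemma col_ne (z : Fin n × Fin m → ℝ) (k : Fin (n * m)) (j : Fin m) (hj : j ≠ (e k).2) :
    ∑ h, TT e z (k + 1) (h, j) = ∑ h, TT e z k (h, j) := by
  refine Finset.sum_congr rfl fun h _ => TT_ne e z k _ ?_
  intro h'
  exact hj (congrArg Prod.snd h')

/-- The negative charge. -/
noncomputable def NN (q q' : Fin n × Fin m → ℝ) (i : Fin n) (k : ℕ) : ℝ :=
  ∑ j, max 0 (∑ h, TT e q' k (h, j) - ∑ h, TT e q k (h, j)) +
  ∑ h, if h = i then 0 else max 0 (∑ j, TT e q k (h, j) - ∑ j, TT e q' k (h, j))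

/-- Amount taken by the misreport on false edges. -/
noncomputable def FF (q' : Fin n × Fin m → ℝ) (E : Finset (Fin n × Fin m)) (i : Fin n)
    (k : ℕ) : ℝ :=
  ∑ j, if (i, j) ∈ E then 0 else TT e q' k (i, j)

lemma invariant (s : Fin n → ℝ) (c : Fin m → ℝ) (E : Finset (Fin n × Fin m)) (i : Fin n)
    (q q' : Fin n × Fin m → ℝ) (hq : ∀ p, 0 ≤ q p) (hq' : ∀ p, 0 ≤ q' p)
    (hqE : ∀ p, p ∉ E → q p = 0) (hqE' : ∀ p, p.1 ≠ i → p ∉ E → q' p = 0)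
    (row : ∀ h k, ∑ j, TT e q k (h, j) ≤ s h) (row' : ∀ h k, ∑ j, TT e q' k (h, j) ≤ s h)
    (col : ∀ j k, ∑ h, TT e q k (h, j) ≤ c j) (col' : ∀ j k, ∑ h, TT e q' k (h, j) ≤ c j)
    (gr : ∀ k : Fin (n * m), e k ∈ E → ∑ j, TT e q (k + 1) ((e k).1, j) = s (e k).1 ∨
      ∑ h, TT e q (k + 1) (h, (e k).2) = c (e k).2)
    (gr' : ∀ k : Fin (n * m), e k ∈ E → (e k).1 ≠ i →
      ∑ j, TT e q' (k + 1) ((e k).1, j) = s (e k).1 ∨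
      ∑ h, TT e q' (k + 1) (h, (e k).2) = c (e k).2)
    (k : ℕ) (hk : k ≤ n * m) :
    ∑ j, TT e q k (i, j) = s i ∨ NN e q q' i k ≤ FF e q' E i k := by
  induction k with
  | zero => right; simp [NN, FF, TT_zero]
  | succ k ih =>
    rcases ih (by omega) with ih | ih
    · left
      apply le_antisymm (row _ _)
      rw [← ih]
      exact Finset.sum_le_sum fun j _ => TT_mono e q hq k _
    obtain ⟨K, rfl⟩ : ∃ K : Fin (n * m), (K : ℕ) = k := ⟨⟨k, by omega⟩, rfl⟩
    have hN1 := sum_one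
      (fun j => max 0 (∑ h, TT e q' (K+1) (h, j) - ∑ h, TT e q (K+1) (h, j)))
      (fun j => max 0 (∑ h, TT e q' K (h, j) - ∑ h, TT e q K (h, j))) (e K).2
      (fun b hb => by simp only [col_ne e _ K b hb])
    have hN2 := sum_one
      (fun h => if h = i then 0 else
        max 0 (∑ j, TT e q (K+1) (h, j) - ∑ j, TT e q' (K+1) (h, j)))
      (fun h => if h = i then 0 else
        max 0 (∑ j, TT e q K (h, j) - ∑ j, TT e q' K (h, j))) (e K).1
      (fun b hb => by simp only [row_ne e _ K b hb])
    have c1 := col_self e q K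
    have c2 := col_self e q' K
    have r1 := row_self e q K
    have r2 := row_self e q' K
    have C1 := col (e K).2 (K+1)
    have C2 := col' (e K).2 (K+1)
    have R1 := row (e K).1 (K+1)
    have R2 := row' (e K).1 (K+1)
    have G := gr K
    have G' := gr' K
    unfold NN at ih ⊢
    rw [hN1, hN2]
    have z1 := hqE (e K)
    have z2 := hqE' (e K)
    have p1 := hq (e K)
    have p2 := hq' (e K)
    by_cases hi : (e K).1 = i
    · have hij : (i, (e K).2) = e K := by rw [← hi]
      simp only [hi, if_true, sub_self, add_zero] at *
      by_cases hE : e K ∈ E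
      · have hF : FF e q' E i (K+1) = FF e q' E i K := by
          unfold FF
          refine Finset.sum_congr rfl fun j _ => ?_
          split_ifs with h
          · rfl
          · apply TT_ne
            intro h'
            exact h (h' ▸ hE)
        rcases G hE with G | G
        · exact Or.inl G
        right
        rw [hF]
        rw [max_eq_left (by linarith : ∑ h, TT e q' (K+1) (h, (e K).2) - ∑ h, TT e q (K+1) (h, (e K).2) ≤ 0)]
        have := le_max_left 0 (∑ h, TT e q' K (h, (e K).2) - ∑ h, TT e q K (h, (e K).2))
        linarith
      · right
        have hF : FF e q' E i (K+1) = FF e q' E i K + q' (e K) := by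
          unfold FF
          rw [sum_one _ (fun j => if (i, j) ∈ E then 0 else TT e q' K (i, j)) (e K).2]
          · have := TT_self e q' K
            simp only [hij, hE, if_false]
            linarith
          · intro b hb
            have := TT_ne e q' K (i, b) (fun h => hb (congrArg Prod.snd h))
            simp only [this]
        rw [hF]
        have z1 := z1 hE
        rw [c1, c2, z1]
        have : max 0 (∑ h, TT e q' K (h, (e K).2) + q' (e K) - (∑ h, TT e q K (h, (e K).2) + 0)) ≤ max 0 (∑ h, TT e q' K (h, (e K).2) - ∑ h, TT e q K (h, (e K).2)) + q' (e K) := by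
          apply max_le
          · have := le_max_left 0 (∑ h, TT e q' K (h, (e K).2) - ∑ h, TT e q K (h, (e K).2))
            linarith
          · have := le_max_right 0 (∑ h, TT e q' K (h, (e K).2) - ∑ h, TT e q K (h, (e K).2))
            linarith
        linarith
    · right
      have hF : FF e q' E i (K+1) = FF e q' E i K := by
        unfold FF
        refine Finset.sum_congr rfl fun j _ => ?_
        rw [TT_ne]
        intro h'
        exact hi (congrArg Prod.fst h').symm
      rw [hF]
      simp only [hi, if_false]
      by_cases hE : e K ∈ E
      · have G := G hE
        have G' := G' hE hi
        clear hN1 hN2 hF z1 z2 gr gr' row row' col col'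
        generalize ∑ h, TT e q' (K+1) (h, (e K).2) = a1 at *
        generalize ∑ h, TT e q (K+1) (h, (e K).2) = a2 at *
        generalize ∑ j, TT e q' (K+1) ((e K).1, j) = a3 at *
        generalize ∑ j, TT e q (K+1) ((e K).1, j) = a4 at *
        generalize ∑ h, TT e q' K (h, (e K).2) = b1 at *
        generalize ∑ h, TT e q K (h, (e K).2) = b2 at *
        generalize ∑ j, TT e q' K ((e K).1, j) = b3 at *
        generalize ∑ j, TT e q K ((e K).1, j) = b4 at *
        have m1 := le_max_left 0 (b1 - b2)
        have m2 := le_max_right 0 (b1 - b2)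
        have m3 := le_max_left 0 (b4 - b3)
        have m4 := le_max_right 0 (b4 - b3)
        have : max 0 (a1 - a2) + max 0 (a4 - a3) ≤ max 0 (b1 - b2) + max 0 (b4 - b3) := by
          rcases max_cases 0 (a1 - a2) with ⟨h1, h1'⟩ | ⟨h1, h1'⟩ <;>
          rcases max_cases 0 (a4 - a3) with ⟨h2, h2'⟩ | ⟨h2, h2'⟩ <;> rw [h1, h2] <;>
          rcases G with G | G <;> rcases G' with G' | G' <;> linarith
        linarith
      · rw [c1, c2, r1, r2, z1 hE, z2 hi hE]
        simp only [add_zero]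
        linarith

lemma dominance (s : Fin n → ℝ) (E : Finset (Fin n × Fin m)) (i : Fin n)
    (q q' : Fin n × Fin m → ℝ) (hq' : ∀ p, 0 ≤ q' p)
    (hqE : ∀ p, p ∉ E → q p = 0)
    (row' : ∀ h k, ∑ j, TT e q' k (h, j) ≤ s h)
    (k : ℕ)
    (inv : ∑ j, TT e q k (i, j) = s i ∨ NN e q q' i k ≤ FF e q' E i k) :
    0 ≤ ∑ j, if (i, j) ∈ E then TT e q k (i, j) - TT e q' k (i, j) else 0 := by
  have hD : ∑ j, (if (i, j) ∈ E then TT e q k (i, j) - TT e q' k (i, j) else 0)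
      = ∑ j, TT e q k (i, j) - ∑ j, TT e q' k (i, j) + FF e q' E i k := by
    unfold FF
    rw [← Finset.sum_sub_distrib, ← Finset.sum_add_distrib]
    refine Finset.sum_congr rfl fun j _ => ?_
    split_ifs with h
    · ring
    · have : TT e q k (i, j) = 0 := by simp [TT, hqE _ h]
      rw [this]; ring
  rw [hD]
  have hF : 0 ≤ FF e q' E i k := by
    unfold FF
    refine Finset.sum_nonneg fun j _ => ?_
    split_ifs
    · rfl
    · exact TT_nonneg e q' hq' k _
  rcases inv with h | h
  · have := row' i k
    linarith
  · have t1 : ∑ h, ∑ j, TT e q k (h, j) = ∑ j, ∑ h, TT e q k (h, j) := Finset.sum_comm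
    have t2 : ∑ h, ∑ j, TT e q' k (h, j) = ∑ j, ∑ h, TT e q' k (h, j) := Finset.sum_comm
    have a1 : ∑ j, ∑ h, TT e q' k (h, j) - ∑ j, ∑ h, TT e q k (h, j) ≤
        ∑ j, max 0 (∑ h, TT e q' k (h, j) - ∑ h, TT e q k (h, j)) := by
      rw [← Finset.sum_sub_distrib]
      exact Finset.sum_le_sum fun j _ => le_max_right _ _
    have a2 : ∑ h, ∑ j, TT e q k (h, j) - ∑ h, ∑ j, TT e q' k (h, j)
        - (∑ j, TT e q k (i, j) - ∑ j, TT e q' k (i, j)) ≤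
        ∑ h, if h = i then 0 else max 0 (∑ j, TT e q k (h, j) - ∑ j, TT e q' k (h, j)) := by
      rw [← Finset.sum_sub_distrib]
      have := sum_one (fun h => if h = i then 0 else
        (∑ j, TT e q k (h, j) - ∑ j, TT e q' k (h, j)))
        (fun h => ∑ j, TT e q k (h, j) - ∑ j, TT e q' k (h, j)) i
        (fun b hb => by simp [hb])
      simp only [if_true] at this
      have h2 : ∑ h, (if h = i then 0 else
        (∑ j, TT e q k (h, j) - ∑ j, TT e q' k (h, j))) ≤ ∑ h, if h = i then 0 else max 0 (∑ j, TT e q k (h, j) - ∑ j, TT e q' k (h, j)) := by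
        refine Finset.sum_le_sum fun j _ => ?_
        split_ifs
        · rfl
        · exact le_max_right _ _
      linarith
    unfold NN at h
    linarith

lemma greedy (s : Fin n → ℝ) (c : Fin m → ℝ) (hs : ∀ i, 0 < s i)
    (E : Finset (Fin n × Fin m)) (x : Fin n × Fin m → ℝ)
    (hx : SIGAPLPFeasible s c E x)
    (hlexmax : ∀ y, SIGAPLPFeasible s c E y → y ≠ x →
      ∀ k : Fin (n * m), (∀ l, l < k → x (e l) = y (e l)) → x (e k) ≠ y (e k) →
        y (e k) < x (e k))
    (k : Fin (n * m)) (hk : e k ∈ E) :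
    ∑ j, TT e (fun p => s p.1 * x p) (k + 1) ((e k).1, j) = s (e k).1 ∨
      ∑ h, TT e (fun p => s p.1 * x p) (k + 1) (h, (e k).2) = c (e k).2 := by
  obtain ⟨h01, hE, hrow, hcol⟩ := hx
  have hx0 : ∀ p, 0 ≤ x p := fun p => (h01 p).1
  have hT : ∀ k p, TT e (fun p => s p.1 * x p) k p = s p.1 * TT e x k p := by
    intro k p; unfold TT; split_ifs <;> simp
  simp only [hT, ← Finset.mul_sum]
  by_contra hcon
  push Not at hcon
  obtain ⟨n1, n2⟩ := hcon
  have l1 : ∑ j, TT e x (k + 1) ((e k).1, j) < 1 := by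
    apply lt_of_le_of_ne
    · exact (Finset.sum_le_sum fun j _ => TT_le e x hx0 _ _).trans (hrow _)
    · intro h
      exact n1 (by rw [h, mul_one])
  have l2 : ∑ h, s h * TT e x (k + 1) (h, (e k).2) < c (e k).2 := by
    apply lt_of_le_of_ne _ n2
    exact (Finset.sum_le_sum fun h _ =>
      mul_le_mul_of_nonneg_left (TT_le e x hx0 _ _) (hs h).le).trans (hcol _)
  obtain ⟨ε, hε, e1, e2⟩ : ∃ ε : ℝ, 0 < ε ∧ ∑ j, TT e x (k + 1) ((e k).1, j) + ε ≤ 1 ∧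
      ∑ h, s h * TT e x (k + 1) (h, (e k).2) + s (e k).1 * ε ≤ c (e k).2 := by
    refine ⟨min (1 - ∑ j, TT e x (k + 1) ((e k).1, j))
      ((c (e k).2 - ∑ h, s h * TT e x (k + 1) (h, (e k).2)) / s (e k).1), ?_, ?_, ?_⟩
    · exact lt_min (by linarith) (div_pos (by linarith) (hs _))
    · have := min_le_left (1 - ∑ j, TT e x (k + 1) ((e k).1, j))
        ((c (e k).2 - ∑ h, s h * TT e x (k + 1) (h, (e k).2)) / s (e k).1)
      linarith
    · have := min_le_right (1 - ∑ j, TT e x (k + 1) ((e k).1, j))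
        ((c (e k).2 - ∑ h, s h * TT e x (k + 1) (h, (e k).2)) / s (e k).1)
      rw [le_div_iff₀ (hs _)] at this
      linarith
  let y : Fin n × Fin m → ℝ := fun p => TT e x (k+1) p + if p = e k then ε else 0
  have hyk : y (e k) = x (e k) + ε := by simp [y, TT]
  have hyne : ∀ p, p ≠ e k → y p = TT e x (k+1) p := by
    intro p hp; simp [y, hp]
  have hy0 : ∀ p, 0 ≤ y p := by
    intro p
    have := TT_nonneg e x hx0 (k+1) p
    simp only [y]; split_ifs <;> linarith
  have hyrow : ∀ h, ∑ j, y (h, j) ≤ 1 := by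
    intro h
    by_cases hh : h = (e k).1
    · subst hh
      rw [sum_one _ (fun j => TT e x (k+1) ((e k).1, j)) (e k).2]
      · simp only [Prod.mk.eta, y, if_true]; linarith
      · intro b hb
        exact hyne _ fun h => hb (congrArg Prod.snd h)
    · rw [Finset.sum_congr rfl fun j _ => hyne (h, j) fun h' => hh (congrArg Prod.fst h')]
      exact (Finset.sum_le_sum fun j _ => TT_le e x hx0 _ _).trans (hrow _)
  have hycol : ∀ j, ∑ h, s h * y (h, j) ≤ c j := by
    intro j
    by_cases hj : j = (e k).2
    · subst hj
      rw [sum_one _ (fun h => s h * TT e x (k+1) (h, (e k).2)) (e k).1]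
      · simp only [Prod.mk.eta, y, if_true]; linarith
      · intro b hb
        rw [hyne _ fun h => hb (congrArg Prod.fst h)]
    · rw [Finset.sum_congr rfl fun h _ => by
        rw [hyne (h, j) fun h' => hj (congrArg Prod.snd h')]]
      exact (Finset.sum_le_sum fun h _ =>
        mul_le_mul_of_nonneg_left (TT_le e x hx0 _ _) (hs h).le).trans (hcol _)
  have hfeas : SIGAPLPFeasible s c E y := by
    refine ⟨fun p => ⟨hy0 p, ?_⟩, ?_, hyrow, hycol⟩
    · exact (Finset.single_le_sum (f := fun j => y (p.1, j)) (fun j _ => hy0 _)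
        (Finset.mem_univ p.2)).trans (hyrow p.1)
    · intro p hp
      rw [hyne p (fun h => hp (h ▸ hk))]
      simp [TT, hE p hp]
  have := hlexmax y hfeas (fun h => by rw [h] at hyk; linarith) k ?_ (by rw [hyk]; linarith)
  · linarith
  · intro l hl
    rw [hyne _ (fun h => hl.ne (e.injective h))]
    have : (l : ℕ) < k + 1 := by have : (l : ℕ) < k := hl; omega
    simp [TT, this]

end

lemma abel_nonneg (f g : ℕ → ℝ) (K : ℕ) (hf : Antitone f) (hf0 : ∀ l, 0 ≤ f l)
    (hg : ∀ k ≤ K, 0 ≤ ∑ l ∈ Finset.range k, g l) :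
    0 ≤ ∑ l ∈ Finset.range K, f l * g l := by
  have key : ∀ k ≤ K, f k * ∑ l ∈ Finset.range k, g l ≤ ∑ l ∈ Finset.range k, f l * g l := by
    intro k
    induction k with
    | zero => simp
    | succ k ih =>
      intro hk
      have h1 := ih (by omega)
      have h2 := mul_le_mul_of_nonneg_right (hf (Nat.le_succ k)) (hg (k+1) hk)
      rw [Finset.sum_range_succ] at h2 ⊢
      rw [Finset.sum_range_succ (fun l => f l * g l)]
      simp only [Nat.succ_eq_add_one] at h2
      linarith
  exact (mul_nonneg (hf0 K) (hg K le_rfl)).trans (key K le_rfl)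

/-- The greedy density-ordered (lexicographically maximal) algorithm is a
truthful fractional mechanism for SIGAP in the private graph model. -/
theorem stmt8 (n m : ℕ) (v : Fin n × Fin m → ℝ) (s : Fin n → ℝ) (c : Fin m → ℝ)
    (hv : ∀ p, 0 ≤ v p) (hs : ∀ i, 0 < s i) (hc : ∀ j, 0 ≤ c j)
    (e : Fin (n * m) ≃ (Fin n × Fin m))
    (hdens : ∀ k l : Fin (n * m), k ≤ l → v (e l) / s (e l).1 ≤ v (e k) / s (e k).1)
    (E Ei' : Finset (Fin n × Fin m)) (i : Fin n)
    (hEi' : ∀ q ∈ Ei', q.1 = i)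
    (E' : Finset (Fin n × Fin m))
    (hE' : E' = (E \ E.filter (fun q => q.1 = i)) ∪ Ei')
    (x x' : Fin n × Fin m → ℝ)
    (hx : SIGAPLPFeasible s c E x)
    (hlexmax : ∀ y, SIGAPLPFeasible s c E y → y ≠ x →
      ∀ k : Fin (n * m), (∀ l, l < k → x (e l) = y (e l)) → x (e k) ≠ y (e k) →
        y (e k) < x (e k))
    (hx' : SIGAPLPFeasible s c E' x')
    (hlexmax' : ∀ y, SIGAPLPFeasible s c E' y → y ≠ x' →
      ∀ k : Fin (n * m), (∀ l, l < k → x' (e l) = y (e l)) → x' (e k) ≠ y (e k) →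
        y (e k) < x' (e k)) :
    ∑ p ∈ E.filter (fun q => q.1 = i), v p * x' p
      ≤ ∑ p ∈ E.filter (fun q => q.1 = i), v p * x p := by
  have hq : ∀ p, 0 ≤ s p.1 * x p := fun p => mul_nonneg (hs _).le (hx.1 p).1
  have hq' : ∀ p, 0 ≤ s p.1 * x' p := fun p => mul_nonneg (hs _).le (hx'.1 p).1
  have mem' : ∀ p : Fin n × Fin m, p.1 ≠ i → (p ∈ E' ↔ p ∈ E) := by
    intro p hp
    subst hE'
    have : p ∉ Ei' := fun h => hp (hEi' p h)
    simp [hp, this]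
  have rowg : ∀ (F : Finset (Fin n × Fin m)) (z : Fin n × Fin m → ℝ), SIGAPLPFeasible s c F z →
      ∀ h k, ∑ j, TT e (fun p => s p.1 * z p) k (h, j) ≤ s h := by
    intro F z hz h k
    calc _ ≤ ∑ j, s h * z (h, j) := Finset.sum_le_sum fun j _ =>
            TT_le e (fun p => s p.1 * z p) (fun p => mul_nonneg (hs _).le (hz.1 p).1) k _
      _ = s h * ∑ j, z (h, j) := by rw [Finset.mul_sum]
      _ ≤ s h * 1 := mul_le_mul_of_nonneg_left (hz.2.2.1 h) (hs h).le
      _ = s h := mul_one _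
  have colg : ∀ (F : Finset (Fin n × Fin m)) (z : Fin n × Fin m → ℝ), SIGAPLPFeasible s c F z →
      ∀ j k, ∑ h, TT e (fun p => s p.1 * z p) k (h, j) ≤ c j := by
    intro F z hz j k
    exact (Finset.sum_le_sum fun h _ =>
      TT_le e (fun p => s p.1 * z p) (fun p => mul_nonneg (hs _).le (hz.1 p).1) k _).trans
        (hz.2.2.2 j)
  have dom : ∀ k ≤ n * m, 0 ≤ ∑ j, if (i, j) ∈ E then
      TT e (fun p => s p.1 * x p) k (i, j) - TT e (fun p => s p.1 * x' p) k (i, j) else 0 := by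
    intro k hk
    apply dominance e s E i _ _ hq' (fun p hp => by simp [hx.2.1 p hp]) (rowg E' x' hx')
    exact invariant e s c E i _ _ hq hq' (fun p hp => by simp [hx.2.1 p hp])
      (fun p hp hpE => by simp [hx'.2.1 p (fun h => hpE ((mem' p hp).1 h))])
      (rowg E x hx) (rowg E' x' hx') (colg E x hx) (colg E' x' hx')
      (fun k hk => greedy e s c hs E x hx hlexmax k hk)
      (fun k hk hki => greedy e s c hs E' x' hx' hlexmax' k ((mem' _ hki).2 hk)) k hk
  let d : Fin n × Fin m → ℝ := fun p =>
    if p ∈ E.filter (fun q => q.1 = i) then s p.1 * x p - s p.1 * x' p else 0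
  let f : ℕ → ℝ := fun l => if h : l < n * m then v (e ⟨l, h⟩) / s (e ⟨l, h⟩).1 else 0
  let g : ℕ → ℝ := fun l => if h : l < n * m then d (e ⟨l, h⟩) else 0
  have hf0 : ∀ l, 0 ≤ f l := by
    intro l
    simp only [f]
    split_ifs
    · exact div_nonneg (hv _) (hs _).le
    · rfl
  have hf : Antitone f := by
    intro a b hab
    by_cases hb : b < n * m
    · have ha : a < n * m := by omega
      simp only [f, ha, hb, dif_pos]
      exact hdens _ _ hab
    · have : f b = 0 := by simp [f, hb]
      rw [this]; exact hf0 a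
  have hg : ∀ k ≤ n * m, 0 ≤ ∑ l ∈ Finset.range k, g l := by
    intro k hk
    refine (dom k hk).trans_eq ?_
    have h1 : ∑ l ∈ Finset.range k, g l
        = ∑ l ∈ Finset.range (n * m), if l < k then g l else 0 := by
      rw [← Finset.sum_filter]
      refine Finset.sum_congr ?_ fun _ _ => rfl
      ext l; simp; omega
    rw [h1, ← Fin.sum_univ_eq_sum_range (fun l => if l < k then g l else 0)]
    have h2 : ∑ l : Fin (n * m), (if (l : ℕ) < k then g l else 0)
        = ∑ p, TT e d k p := by
      rw [← e.sum_comp]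
      refine Finset.sum_congr rfl fun l _ => ?_
      simp [TT, g]
    rw [h2, Fintype.sum_prod_type]
    rw [Finset.sum_eq_single i]
    · refine Finset.sum_congr rfl fun j _ => ?_
      by_cases h : (i, j) ∈ E <;> by_cases h' : (e.symm (i, j) : ℕ) < k <;> simp [TT, d, h, h']
    · intro b _ hb
      refine Finset.sum_eq_zero fun j _ => ?_
      simp [TT, d, hb]
    · simp
  have main := abel_nonneg f g (n * m) hf hf0 hg
  rw [← Fin.sum_univ_eq_sum_range (fun l => f l * g l)] at main
  have h3 : ∑ l : Fin (n * m), f l * g l = ∑ p, v p / s p.1 * d p := by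
    rw [← e.sum_comp]
    refine Finset.sum_congr rfl fun l _ => ?_
    simp [f, g]
  rw [h3] at main
  rw [← sub_nonneg, ← Finset.sum_sub_distrib]
  refine main.trans_eq ?_
  rw [← Finset.sum_filter_add_sum_filter_not Finset.univ (fun p => p ∈ E.filter (fun q => q.1 = i))]
  have h4 : ∑ p ∈ Finset.univ.filter (fun p => ¬ p ∈ E.filter (fun q => q.1 = i)),
      v p / s p.1 * d p = 0 := by
    refine Finset.sum_eq_zero fun p hp => ?_
    have hp := (Finset.mem_filter.1 hp).2
    simp only [d, if_neg hp, mul_zero]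
  rw [h4, add_zero, Finset.filter_mem_eq_inter, Finset.univ_inter]
  refine Finset.sum_congr rfl fun p hp => ?_
  simp only [d, if_pos hp]
  have := (hs p.1).ne'
  field_simp
end

section
/- Fix numbers of jobs n and machines m, values v : Fin n → ℝ with v ≥ 0, machine-dependent sizes s : Fin n × Fin m → ℝ with s > 0, capacities c : Fin m → ℝ with c ≥ 0, and an enumeration e : Fin (n·m) ≃ (Fin n × Fin m) such that the densities v((e(k)).1)/s(e(k)) are non-increasing in k. Let E be an edge set and let x be a feasible solution of the VIGAP[E] LP that is lexicographically maximal: for every feasible solution y ≠ x of the VIGAP[E] LP, at the least index k with x(e(k)) ≠ y(e(k)) one has x(e(k)) > y(e(k)). Then for every feasible solution y of the VIGAP[E] LP, ∑_{(i,j)} v(i)·y(i,j) ≤ 2 · ∑_{(i,j)} v(i)·x(i,j). That is, the greedy density-ordered algorithm adapted to the value-invariant GAP provides a 2-approximation to the VIGAP[E] LP. -/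
/-- Feasibility for the VIGAP[E] LP (machine-dependent sizes). -/
def VIGAPLPFeasible {n m : ℕ} (s : Fin n × Fin m → ℝ) (c : Fin m → ℝ)
    (E : Finset (Fin n × Fin m)) (x : Fin n × Fin m → ℝ) : Prop :=
  (∀ p, 0 ≤ x p ∧ x p ≤ 1) ∧ (∀ p, p ∉ E → x p = 0) ∧
    (∀ i, ∑ j, x (i, j) ≤ 1) ∧ (∀ j, ∑ i, s (i, j) * x (i, j) ≤ c j)

theorem vigap_key {n m : ℕ} (s : Fin n × Fin m → ℝ) (c : Fin m → ℝ)
    (hs : ∀ p, 0 < s p)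
    (e : Fin (n * m) ≃ (Fin n × Fin m))
    (E : Finset (Fin n × Fin m))
    (x : Fin n × Fin m → ℝ)
    (hx : VIGAPLPFeasible s c E x)
    (hlexmax : ∀ y, VIGAPLPFeasible s c E y → y ≠ x →
      ∀ k : Fin (n * m), (∀ l, l < k → x (e l) = y (e l)) → x (e k) ≠ y (e k) →
        y (e k) < x (e k)) (i : Fin n) (j : Fin m) (hp : (i, j) ∈ E) :
    1 ≤ ∑ j', x (i, j') ∨
    c j ≤ ∑ i', if e.symm (i', j) ≤ e.symm (i, j) then s (i', j) * x (i', j) else 0 := by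
  obtain ⟨h01, hE, hjob, hmach⟩ := hx
  by_contra! hcon
  obtain ⟨ha, hb⟩ := hcon
  set S1 := ∑ j', x (i, j') with hS1
  set S2 := ∑ i', (if e.symm (i', j) ≤ e.symm (i, j) then s (i', j) * x (i', j) else 0) with hS2
  have hsp := hs (i, j)
  obtain ⟨δ, hδ0, hδa, hδb⟩ : ∃ δ : ℝ, 0 < δ ∧ S1 + δ ≤ 1 ∧ S2 + s (i, j) * δ ≤ c j := by
    refine ⟨min (1 - S1) ((c j - S2) / s (i, j)), ?_, ?_, ?_⟩
    · exact lt_min (by linarith) (div_pos (by linarith) hsp)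
    · linarith [min_le_left (1 - S1) ((c j - S2) / s (i, j))]
    · have h := mul_le_mul_of_nonneg_left (min_le_right (1 - S1) ((c j - S2) / s (i, j))) hsp.le
      rw [mul_div_cancel₀ _ hsp.ne'] at h
      linarith
  let y : Fin n × Fin m → ℝ := fun q =>
    (if e.symm q ≤ e.symm (i, j) then x q else 0) + (if q = (i, j) then δ else 0)
  have hy0 : ∀ q, 0 ≤ y q := by
    intro q
    have := (h01 q).1
    simp only [y]
    split_ifs <;> linarith
  have hyjob : ∀ i', ∑ j', y (i', j') ≤ 1 := by
    intro i'
    simp only [y, Finset.sum_add_distrib]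
    have h1 : ∑ j', (if e.symm (i', j') ≤ e.symm (i, j) then x (i', j') else 0)
        ≤ ∑ j', x (i', j') := by
      apply Finset.sum_le_sum
      intro j' _
      have := (h01 (i', j')).1
      split_ifs <;> linarith
    by_cases hi : i' = i
    · subst hi
      have h2 : ∑ j', (if ((i', j') : Fin n × Fin m) = (i', j) then δ else 0) = δ := by
        simp
      rw [h2]
      linarith
    · have h2 : ∑ j', (if ((i', j') : Fin n × Fin m) = (i, j) then δ else 0) = 0 := by
        simp [hi]
      rw [h2]
      linarith [hjob i']
  have hymach : ∀ j', ∑ i', s (i', j') * y (i', j') ≤ c j' := by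
    intro j'
    simp only [y, mul_add, Finset.sum_add_distrib, mul_ite, mul_zero]
    by_cases hj : j' = j
    · subst hj
      have h2 : ∑ i', (if ((i', j') : Fin n × Fin m) = (i, j') then s (i', j') * δ else 0)
          = s (i, j') * δ := by
        simp
      rw [h2]
      exact hδb
    · have h2 : ∑ i', (if ((i', j') : Fin n × Fin m) = (i, j) then s (i', j') * δ else 0) = 0 := by
        simp [hj]
      rw [h2, add_zero]
      refine le_trans (Finset.sum_le_sum ?_) (hmach j')
      intro i' _
      have := mul_nonneg (hs (i', j')).le (h01 (i', j')).1
      split_ifs <;> linarith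
  have hyp : y (i, j) = x (i, j) + δ := by simp [y]
  have hyf : VIGAPLPFeasible s c E y := by
    refine ⟨fun q => ⟨hy0 q, ?_⟩, ?_, hyjob, hymach⟩
    · exact le_trans (Finset.single_le_sum (f := fun j' => y (q.1, j'))
        (fun j' _ => hy0 _) (Finset.mem_univ q.2)) (hyjob q.1)
    · intro q hq
      have hne : q ≠ (i, j) := by rintro rfl; exact hq hp
      simp [y, hE q hq, hne]
  have hne : y ≠ x := by
    intro h
    rw [h] at hyp
    linarith
  have := hlexmax y hyf hne (e.symm (i, j)) (by
    intro l hl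
    have hle := hl.le
    have hne : e l ≠ (i, j) := by
      intro h
      rw [← h] at hl
      simp at hl
    simp [y, hle, hne]) (by
    simp only [Equiv.apply_symm_apply]
    rw [hyp]
    linarith)
  simp only [Equiv.apply_symm_apply] at this
  linarith

/-- The greedy density-ordered (lexicographically maximal) fractional solution is a
2-approximation to the VIGAP[E] LP. -/
theorem stmt9 (n m : ℕ) (v : Fin n → ℝ) (s : Fin n × Fin m → ℝ) (c : Fin m → ℝ)
    (hv : ∀ i, 0 ≤ v i) (hs : ∀ p, 0 < s p) (hc : ∀ j, 0 ≤ c j)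
    (e : Fin (n * m) ≃ (Fin n × Fin m))
    (hdens : ∀ k l : Fin (n * m), k ≤ l → v (e l).1 / s (e l) ≤ v (e k).1 / s (e k))
    (E : Finset (Fin n × Fin m))
    (x : Fin n × Fin m → ℝ)
    (hx : VIGAPLPFeasible s c E x)
    (hlexmax : ∀ y, VIGAPLPFeasible s c E y → y ≠ x →
      ∀ k : Fin (n * m), (∀ l, l < k → x (e l) = y (e l)) → x (e k) ≠ y (e k) →
        y (e k) < x (e k)) :
    ∀ y, VIGAPLPFeasible s c E y →
      ∑ p : Fin n × Fin m, v p.1 * y p ≤ 2 * ∑ p : Fin n × Fin m, v p.1 * x p := by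
  classical
  intro y hy
  obtain ⟨h01, hE, hjob, hmach⟩ := id hx
  obtain ⟨y01, yE, yjob, ymach⟩ := hy
  have key := vigap_key s c hs e E x hx hlexmax
  have hα : ∀ i, ∃ α : ℝ, 0 ≤ α ∧ α ≤ ∑ j, v i * x (i, j) ∧
      (1 ≤ ∑ j, x (i, j) → v i ≤ α) := by
    intro i
    rw [← Finset.mul_sum]
    by_cases h : 1 ≤ ∑ j, x (i, j)
    · exact ⟨v i, hv i, le_mul_of_one_le_right (hv i) h, fun _ => le_rfl⟩
    · exact ⟨0, le_rfl, mul_nonneg (hv i) (Finset.sum_nonneg fun j _ => (h01 _).1),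
        fun h' => absurd h' h⟩
  have hβ : ∀ j, ∃ d : ℝ, 0 ≤ d ∧ d * c j ≤ ∑ i, v i * x (i, j) ∧
      ∀ i, (c j ≤ ∑ i', if e.symm (i', j) ≤ e.symm (i, j) then s (i', j) * x (i', j) else 0) →
        v i ≤ d * s (i, j) := by
    intro j
    let B : Finset (Fin n) := Finset.univ.filter fun i =>
      c j ≤ ∑ i', if e.symm (i', j) ≤ e.symm (i, j) then s (i', j) * x (i', j) else 0
    by_cases hB : B.Nonempty
    · obtain ⟨i, hi, hmax⟩ := Finset.exists_max_image B (fun i => v i / s (i, j)) hB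
      have hd : 0 ≤ v i / s (i, j) := div_nonneg (hv i) (hs _).le
      refine ⟨v i / s (i, j), hd, ?_, ?_⟩
      · have hi' := (Finset.mem_filter.mp hi).2
        refine le_trans (mul_le_mul_of_nonneg_left hi' hd) ?_
        rw [Finset.mul_sum]
        apply Finset.sum_le_sum
        intro i' _
        have hx0 := (h01 (i', j)).1
        split_ifs with h
        · have hden := hdens _ _ h
          simp only [Equiv.apply_symm_apply] at hden
          rw [le_div_iff₀ (hs _)] at hden
          rw [← mul_assoc]
          exact mul_le_mul_of_nonneg_right hden hx0
        · rw [mul_zero]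
          exact mul_nonneg (hv _) hx0
      · intro i' hi'
        have := hmax i' (Finset.mem_filter.mpr ⟨Finset.mem_univ _, hi'⟩)
        exact (div_le_iff₀ (hs _)).mp this
    · refine ⟨0, le_rfl, ?_, ?_⟩
      · rw [zero_mul]
        exact Finset.sum_nonneg fun i _ => mul_nonneg (hv i) (h01 _).1
      · intro i hi
        exact absurd ⟨i, Finset.mem_filter.mpr ⟨Finset.mem_univ _, hi⟩⟩ hB
  choose α hα0 hαx hαv using hα
  choose d hd0 hdx hdv using hβ
  have hterm : ∀ i j, v i * y (i, j) ≤ α i * y (i, j) + d j * (s (i, j) * y (i, j)) := by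
    intro i j
    by_cases hp : (i, j) ∈ E
    · have h : v i ≤ α i + d j * s (i, j) := by
        have h1 := mul_nonneg (hd0 j) (hs (i, j)).le
        have h2 := hα0 i
        rcases key i j hp with h | h
        · linarith [hαv i h]
        · linarith [hdv j i h]
      have := mul_le_mul_of_nonneg_right h (y01 (i, j)).1
      linarith
    · simp [yE _ hp]
  have hA : ∑ i, ∑ j, α i * y (i, j) ≤ ∑ i, ∑ j, v i * x (i, j) := by
    apply Finset.sum_le_sum
    intro i _
    rw [← Finset.mul_sum]
    exact (mul_le_of_le_one_right (hα0 i) (yjob i)).trans (hαx i)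
  have hD : ∑ i, ∑ j, d j * (s (i, j) * y (i, j)) ≤ ∑ i, ∑ j, v i * x (i, j) := by
    rw [Finset.sum_comm, Finset.sum_comm (f := fun i j => v i * x (i, j))]
    apply Finset.sum_le_sum
    intro j _
    rw [← Finset.mul_sum]
    exact (mul_le_mul_of_nonneg_left (ymach j) (hd0 j)).trans (hdx j)
  rw [Fintype.sum_prod_type, Fintype.sum_prod_type]
  have hS : ∑ i, ∑ j, v i * y (i, j)
      ≤ ∑ i, ∑ j, (α i * y (i, j) + d j * (s (i, j) * y (i, j))) :=
    Finset.sum_le_sum fun i _ => Finset.sum_le_sum fun j _ => hterm i j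
  simp only [Finset.sum_add_distrib] at hS
  linarith
end

section
/- Fix numbers of jobs n and machines m, values v : Fin n → ℝ with v ≥ 0, machine-dependent sizes s : Fin n × Fin m → ℝ with s ≥ 0, capacities c : Fin m → ℝ with c ≥ 0, and a linear order ≺ on the set of assignments x : Fin n → Option (Fin m). Let E be an edge set, i a job, E'_i a set of pairs with first coordinate i, and E' = (E \ E_i) ∪ E'_i. Suppose x is a welfare-maximizing feasible assignment for VIGAP[E] that is ≺-least among all welfare-maximizing feasible assignments for VIGAP[E], and x' is a welfare-maximizing feasible assignment for VIGAP[E'] that is ≺-least among all welfare-maximizing feasible assignments for VIGAP[E']. If there exists a machine j with (i,j) ∈ E and x'(i) = some j, then x(i) ≠ none. That is, solving the value-invariant GAP optimally, breaking ties consistently independent of the reported edges, gives a truthful mechanism in the private graph model. -/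
/-- Feasibility of an assignment for VIGAP[E] (machine-dependent sizes). -/
def VIGAPFeasible {n m : ℕ} (s : Fin n × Fin m → ℝ) (c : Fin m → ℝ)
    (E : Finset (Fin n × Fin m)) (x : Fin n → Option (Fin m)) : Prop :=
  (∀ i j, x i = some j → (i, j) ∈ E) ∧
    ∀ j, ∑ i ∈ Finset.univ.filter (fun i => x i = some j), s (i, j) ≤ c j

/-- Welfare of an assignment in VIGAP: each assigned job contributes its value. -/
def VIGAPWelfare {n m : ℕ} (v : Fin n → ℝ) (x : Fin n → Option (Fin m)) : ℝ :=
  ∑ i ∈ Finset.univ.filter (fun i => x i ≠ none), v i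

/-- Solving VIGAP optimally, breaking ties consistently via an arbitrary total
order on assignments, is truthful in the private graph model. -/
theorem stmt10 (n m : ℕ) (v : Fin n → ℝ) (s : Fin n × Fin m → ℝ) (c : Fin m → ℝ)
    (hv : ∀ i, 0 ≤ v i) (hs : ∀ p, 0 ≤ s p) (hc : ∀ j, 0 ≤ c j)
    (lt : (Fin n → Option (Fin m)) → (Fin n → Option (Fin m)) → Prop)
    (hlt : IsStrictTotalOrder (Fin n → Option (Fin m)) lt)
    (E Ei' : Finset (Fin n × Fin m)) (i : Fin n)
    (hEi' : ∀ e ∈ Ei', e.1 = i)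
    (E' : Finset (Fin n × Fin m))
    (hE' : E' = (E \ E.filter (fun e => e.1 = i)) ∪ Ei')
    (x x' : Fin n → Option (Fin m))
    (hx : VIGAPFeasible s c E x)
    (hxopt : ∀ y, VIGAPFeasible s c E y → VIGAPWelfare v y ≤ VIGAPWelfare v x)
    (hxmin : ∀ y, VIGAPFeasible s c E y → VIGAPWelfare v y = VIGAPWelfare v x → y ≠ x → lt x y)
    (hx' : VIGAPFeasible s c E' x')
    (hx'opt : ∀ y, VIGAPFeasible s c E' y → VIGAPWelfare v y ≤ VIGAPWelfare v x')
    (hx'min : ∀ y, VIGAPFeasible s c E' y → VIGAPWelfare v y = VIGAPWelfare v x' → y ≠ x' → lt x' y)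
    (hj : ∃ j, (i, j) ∈ E ∧ x' i = some j) :
    x i ≠ none := by
  intro hi
  obtain ⟨j, hjE, hj⟩ := hj
  have h1 : VIGAPFeasible s c E' x := by
    refine ⟨fun k l hkl => ?_, hx.2⟩
    have hk : k ≠ i := by
      rintro rfl
      rw [hi] at hkl
      cases hkl
    have := hx.1 k l hkl
    simp [hE', this, hk]
  have h2 : VIGAPFeasible s c E x' := by
    refine ⟨fun k l hkl => ?_, hx'.2⟩
    by_cases hk : k = i
    · subst hk
      rw [hj] at hkl
      cases hkl
      exact hjE
    · have h := hx'.1 k l hkl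
      rw [hE', Finset.mem_union] at h
      rcases h with h | h
      · exact (Finset.mem_sdiff.mp h).1
      · exact absurd (hEi' _ h) hk
  have hw : VIGAPWelfare v x' = VIGAPWelfare v x :=
    le_antisymm (hxopt _ h2) (hx'opt _ h1)
  have hne : x' ≠ x := by
    rintro rfl
    rw [hi] at hj
    cases hj
  have a := hxmin x' h2 hw hne
  have b := hx'min x h1 hw.symm hne.symm
  exact hlt.toIsStrictOrder.toIrrefl.irrefl x (hlt.toIsStrictOrder.toIsTrans.trans _ _ _ a b)
end

section
/- Let d be a positive integer and let P ⊆ (Fin d → ℝ) be a nonempty compact convex set contained in the nonnegative orthant and downward closed (if y ∈ P and 0 ≤ x ≤ y componentwise, then x ∈ P). Let α ≥ 1 be a real number such that P has integrality gap at most α: for every c : Fin d → ℝ, sup_{x ∈ P} ∑_k c(k)·x(k) ≤ α · sup_{z ∈ P ∩ ℤ^d} ∑_k c(k)·z(k), where P ∩ ℤ^d denotes the set of points of P all of whose coordinates are integers. Then for every x ∈ P, the point (1/α)·x lies in the convex hull of P ∩ ℤ^d. Equivalently, for every x ∈ P/α there exists a (finitely supported) probability distribution over integer points of P whose expectation equals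 x. -/
/-- Lavi–Swamy containment lemma: if a packing polytope `P` has integrality gap
at most `α`, then the scaled-down polytope `P/α` is contained in the convex hull
of the integer points of `P`. -/
theorem stmt11 (d : ℕ) (hd : 0 < d) (P : Set (Fin d → ℝ))
    (hne : P.Nonempty) (hcomp : IsCompact P) (hconv : Convex ℝ P)
    (hpos : ∀ x ∈ P, ∀ k, 0 ≤ x k)
    (hdc : ∀ y ∈ P, ∀ x : Fin d → ℝ, (∀ k, 0 ≤ x k) → (∀ k, x k ≤ y k) → x ∈ P)
    (α : ℝ) (hα : 1 ≤ α)
    (hgap : ∀ c : Fin d → ℝ,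
      sSup ((fun x => ∑ k, c k * x k) '' P) ≤
        α * sSup ((fun x => ∑ k, c k * x k) '' {z ∈ P | ∀ k, ∃ q : ℤ, z k = (q : ℝ)})) :
    ∀ x ∈ P, α⁻¹ • x ∈ convexHull ℝ {z ∈ P | ∀ k, ∃ q : ℤ, z k = (q : ℝ)} := by
  intro x hx
  set S : Set (Fin d → ℝ) := {z ∈ P | ∀ k, ∃ q : ℤ, z k = (q : ℝ)} with hS
  have hSf : S.Finite := by
    have hk : ∀ k : Fin d, (((↑) : ℤ → ℝ) ''
        (((↑) : ℤ → ℝ) ⁻¹' ((fun z : Fin d → ℝ => z k) '' P))).Finite := fun k =>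
      (isCompact_iff_finite.1 (Int.isClosedEmbedding_coe_real.isCompact_preimage
        (hcomp.image (continuous_apply k)))).image _
    refine (Set.Finite.pi hk).subset ?_
    rintro z ⟨hz, hq⟩ k -
    obtain ⟨q, hq⟩ := hq k
    exact ⟨q, ⟨z, hz, hq⟩, hq.symm⟩
  have h0 : (0 : Fin d → ℝ) ∈ S := by
    obtain ⟨y, hy⟩ := hne
    exact ⟨hdc y hy 0 (fun k => le_rfl) (fun k => hpos y hy k), fun k => ⟨0, by simp⟩⟩
  by_contra hn
  obtain ⟨f, u, hfu, hux⟩ := geometric_hahn_banach_closed_point (convex_convexHull ℝ S)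
    (hSf.isClosed_convexHull ℝ) hn
  have hf : ∀ y : Fin d → ℝ, ∑ k, f (Pi.single k 1) * y k = f y := by
    intro y
    have := LinearMap.pi_apply_eq_sum_univ (f : (Fin d → ℝ) →ₗ[ℝ] ℝ) y
    simp only [ContinuousLinearMap.coe_coe, smul_eq_mul] at this
    rw [this]
    refine Finset.sum_congr rfl fun k _ => ?_
    rw [mul_comm]
    congr 2
    ext j
    simp [Pi.single_apply, eq_comm]
  have hg := hgap (fun k => f (Pi.single k 1))
  simp only [hf] at hg
  have hα0 : 0 < α := by linarith
  have h2 : f x ≤ sSup ((fun x => f x) '' P) :=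
    le_csSup (hcomp.image f.continuous).bddAbove ⟨x, hx, rfl⟩
  have h3 : sSup ((fun x => f x) '' S) ≤ u := by
    refine csSup_le ⟨_, 0, h0, rfl⟩ ?_
    rintro _ ⟨z, hz, rfl⟩
    exact (hfu z (subset_convexHull ℝ S hz)).le
  have h4 : f x ≤ α * u := (h2.trans hg).trans (mul_le_mul_of_nonneg_left h3 hα0.le)
  rw [map_smul, smul_eq_mul, lt_inv_mul_iff₀ hα0] at hux
  linarith
end

section
/- Fix numbers of jobs n and machines m, values v : Fin n × Fin m → ℝ with v ≥ 0, sizes s : Fin n × Fin m → ℝ with s > 0, capacities c : Fin m → ℝ with c ≥ 0, and a real β ≥ 1. Suppose F maps each edge set E to a feasible solution F(E) of the GAP[E] LP such that (i) β · ∑_{(i,j)} v(i,j)·F(E)(i,j) ≥ sup over feasible solutions y of GAP[E] LP of ∑_{(i,j)} v(i,j)·y(i,j), and (ii) F is truthful: for every E, every job i, and every set E'_i of pairs with first coordinate i, letting E' = (E \ E_i) ∪ E'_i, ∑_{(i,j) ∈ E_i} v(i,j)·F(E)(i,j) ≥ ∑_{(i,j) ∈ E_i} v(i,j)·F(E')(i,j).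 Then there exists a map A from edge sets to finitely supported probability distributions over integral feasible assignments such that every assignment in the support of A(E) is feasible for GAP[E], A is truthful in expectation (for every E, i, E'_i as above, the expected value ∑_{(i,j) ∈ E_i} v(i,j)·x(i,j) under A(E) is at least that under A(E')), and for every E, 2β · E_{x ~ A(E)}[∑_{(i,j)} v(i,j)·x(i,j)] ≥ the maximum welfare of an integral feasible assignment for GAP[E]. -/
/-- Feasibility for the GAP[E] LP. -/
def GAPLPFeasible {n m : ℕ} (s : Fin n × Fin m → ℝ) (c : Fin m → ℝ)
    (E : Finset (Fin n × Fin m)) (x : Fin n × Fin m → ℝ) : Prop :=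
  (∀ p, 0 ≤ x p ∧ x p ≤ 1) ∧ (∀ p, p ∉ E → x p = 0) ∧
    (∀ i, ∑ j, x (i, j) ≤ 1) ∧ (∀ j, ∑ i, s (i, j) * x (i, j) ≤ c j)

/-- Welfare of a (fractional or integral) GAP solution. -/
def GAPWelfare {n m : ℕ} (v : Fin n × Fin m → ℝ) (x : Fin n × Fin m → ℝ) : ℝ :=
  ∑ p : Fin n × Fin m, v p * x p


noncomputable section

namespace GapAux

def clamp (a : ℝ) : ℝ := max 0 (min 1 a)

lemma clamp_mono {a b : ℝ} (h : a ≤ b) : clamp a ≤ clamp b := by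
  unfold clamp; gcongr

lemma clamp_sum (a : ℝ) (N : ℕ) :
    ∑ t ∈ Finset.range N, clamp (a - t) = max 0 (min (N : ℝ) a) := by
  induction N with
  | zero => simp
  | succ N ih =>
    rw [Finset.sum_range_succ, ih]
    have hN : (0 : ℝ) ≤ N := Nat.cast_nonneg N
    unfold clamp
    push_cast
    simp only [max_def, min_def]
    split_ifs <;> linarith

lemma slot_antitone (n : ℕ) (s x : Fin n → ℝ) (hs : Antitone s)
    (hx : ∀ i, 0 ≤ x i ∧ x i ≤ 1) :
    ∃ y : Fin n → ℕ → ℝ, (∀ i t, 0 ≤ y i t) ∧ (∀ i, ∑ t ∈ Finset.range n, y i t = x i) ∧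
      (∀ t, ∑ i, y i t ≤ 1) ∧ (∀ i k t, 0 < y i (t+1) → 0 < y k t → s i ≤ s k) ∧
      (∀ i t, 0 < y i (t+1) → ∑ k, y k t = 1) := by
  let X : ℕ → ℝ := fun i => if h : i < n then x ⟨i, h⟩ else 0
  have hX : ∀ i, 0 ≤ X i ∧ X i ≤ 1 := by
    intro i
    by_cases h : i < n
    · simp only [X, h, dite_true]; exact hx _
    · simp [X, h]
  let P : ℕ → ℝ := fun k => ∑ i ∈ Finset.range k, X i
  have hPs : ∀ k, P (k+1) = P k + X k := fun k => Finset.sum_range_succ _ _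
  have hPmono : Monotone P := monotone_nat_of_le_succ (fun k => by
    rw [hPs]; linarith [(hX k).1])
  have hP0 : P 0 = 0 := by simp [P]
  have hPnn : ∀ k, 0 ≤ P k := fun k => hP0 ▸ hPmono (Nat.zero_le k)
  have hPle : ∀ k, P k ≤ k := by
    intro k
    induction k with
    | zero => simp [hP0]
    | succ k ih => rw [hPs]; push_cast; linarith [(hX k).2]
  have hsum : ∀ t : ℕ, ∑ i : Fin n, (clamp (P (i+1) - t) - clamp (P i - t))
      = clamp (P n - t) := by
    intro t
    rw [← Finset.sum_range (fun i => clamp (P (i+1) - t) - clamp (P i - t)),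
      Finset.sum_range_sub (fun i => clamp (P i - t)), hP0]
    have : clamp (0 - (t:ℝ)) = 0 := by
      unfold clamp
      have : (0:ℝ) ≤ t := Nat.cast_nonneg t
      exact max_eq_left ((min_le_right _ _).trans (by linarith))
    rw [this, sub_zero]
  have hfull : ∀ k, k ≤ n → ∑ t ∈ Finset.range n, clamp (P k - t) = P k := by
    intro k hk
    rw [clamp_sum, min_eq_right, max_eq_right (hPnn k)]
    exact (hPle k).trans (by exact_mod_cast hk)
  have hpos1 : ∀ (i t : ℕ), 0 < clamp (P (i+1) - t) - clamp (P i - t) → (t:ℝ) < P (i+1) := by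
    intro i t h
    by_contra hc
    push Not at hc
    have h1 : clamp (P (i+1) - t) = 0 :=
      max_eq_left ((min_le_right _ _).trans (by linarith))
    have h2 : 0 ≤ clamp (P i - t) := le_max_left _ _
    linarith
  have hpos2 : ∀ (i t : ℕ), 0 < clamp (P (i+1) - t) - clamp (P i - t) → P i < t + 1 := by
    intro i t h
    by_contra hc
    push Not at hc
    have h1 : clamp (P i - t) = 1 := by
      unfold clamp; rw [min_eq_left (by linarith)]; norm_num
    have h2 : clamp (P (i+1) - t) ≤ 1 := max_le zero_le_one (min_le_left _ _)
    linarith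
  refine ⟨fun i t => clamp (P (i+1) - t) - clamp (P i - t), ?_, ?_, ?_, ?_, ?_⟩
  · intro i t
    exact sub_nonneg.2 (clamp_mono (by linarith [hPmono (Nat.le_succ i)]))
  · intro i
    rw [Finset.sum_sub_distrib, hfull _ i.2, hfull _ i.2.le, hPs]
    simp [X]
  · intro t
    rw [hsum]
    exact max_le zero_le_one (min_le_left _ _)
  · intro i k t h1 h2
    apply hs
    have a := hpos1 _ _ h1
    have b := hpos2 _ _ h2
    push_cast at a
    by_contra hc
    push Not at hc
    have : P (i+1) ≤ P k := hPmono (by exact_mod_cast hc)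
    linarith
  · intro i t h
    have a := hpos1 _ _ h
    have : P (i+1) ≤ P n := hPmono i.2
    rw [hsum]
    push_cast at a
    unfold clamp
    rw [min_eq_left (by linarith)]; norm_num

lemma slot (n : ℕ) (s x : Fin n → ℝ) (hx : ∀ i, 0 ≤ x i ∧ x i ≤ 1) :
    ∃ y : Fin n → ℕ → ℝ, (∀ i t, 0 ≤ y i t) ∧ (∀ i, ∑ t ∈ Finset.range n, y i t = x i) ∧
      (∀ t, ∑ i, y i t ≤ 1) ∧ (∀ i k t, 0 < y i (t+1) → 0 < y k t → s i ≤ s k) ∧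
      (∀ i t, 0 < y i (t+1) → ∑ k, y k t = 1) := by
  let σ := Tuple.sort (fun i => - s i)
  have hσ : Antitone (s ∘ σ) := by
    intro a b hab
    have := Tuple.monotone_sort (fun i => - s i) hab
    simp only [Function.comp] at this ⊢
    exact neg_le_neg_iff.1 this
  obtain ⟨y, h1, h2, h3, h4, h5⟩ := slot_antitone n (s ∘ σ) (x ∘ σ) hσ (fun i => hx _)
  have hs : ∀ t, ∑ i, y (σ.symm i) t = ∑ i, y i t := fun t =>
    Equiv.sum_comp σ.symm (fun i => y i t)
  refine ⟨fun i t => y (σ.symm i) t, fun i t => h1 _ _, ?_, ?_, ?_, ?_⟩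
  · intro i; simpa using h2 (σ.symm i)
  · intro t; rw [hs]; exact h3 t
  · intro i k t a b; simpa using h4 _ _ t a b
  · intro i t a; rw [hs]; exact h5 _ t a

lemma load (n : ℕ) (s x : Fin n → ℝ) (y : Fin n → ℕ → ℝ) (hs : ∀ i, 0 < s i)
    (h1 : ∀ i t, 0 ≤ y i t) (h2 : ∀ i, ∑ t ∈ Finset.range n, y i t = x i)
    (h4 : ∀ i k t, 0 < y i (t+1) → 0 < y k t → s i ≤ s k)
    (h5 : ∀ i t, 0 < y i (t+1) → ∑ k, y k t = 1)
    (R : Fin n → ℕ → Prop) (hR : ∀ i k t, R i t → R k t → i = k)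
    (hpos : ∀ i t, R i t → 0 < y i t) (hlt : ∀ i t, R i t → t < n)
    (z : Fin n → ℝ) (hz : ∀ i, z i ≤ 1) (hz0 : ∀ i, 0 < z i → ∃ t, R i (t+1)) :
    ∑ i, s i * z i ≤ ∑ i, s i * x i := by
  classical
  have e1 : ∑ i, s i * x i = ∑ t ∈ Finset.range n, ∑ i, y i t * s i := by
    rw [Finset.sum_comm]
    refine Finset.sum_congr rfl fun i _ => ?_
    rw [← Finset.sum_mul, h2, mul_comm]
  have e2 : ∑ i, s i * z i ≤ ∑ t ∈ Finset.range n, ∑ i, if R i (t+1) then s i else 0 := by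
    rw [Finset.sum_comm]
    refine Finset.sum_le_sum fun i _ => ?_
    have hnn : ∀ t ∈ Finset.range n, 0 ≤ (if R i (t+1) then s i else 0) := by
      intro t _; split_ifs; exacts [(hs i).le, le_rfl]
    by_cases hzi : 0 < z i
    · obtain ⟨t, ht⟩ := hz0 i hzi
      have := Finset.single_le_sum hnn (Finset.mem_range.2 (by have := hlt _ _ ht; omega : t < n))
      rw [if_pos ht] at this
      nlinarith [hs i, hz i]
    · have := Finset.sum_nonneg hnn
      push Not at hzi
      nlinarith [hs i]
  rw [e1]
  refine e2.trans (Finset.sum_le_sum fun t _ => ?_)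
  by_cases h : ∃ i, R i (t+1)
  · obtain ⟨i, hi⟩ := h
    have : ∑ k, (if R k (t+1) then s k else 0) = s i := by
      rw [Finset.sum_eq_single i]
      · simp [hi]
      · intro k _ hk
        rw [if_neg]
        intro hk'; exact hk (hR _ _ _ hk' hi)
      · simp
    rw [this]
    have hp := hpos _ _ hi
    calc s i = ∑ k, y k t * s i := by rw [← Finset.sum_mul, h5 i t hp, one_mul]
      _ ≤ _ := by
        refine Finset.sum_le_sum fun k _ => ?_
        rcases (h1 k t).eq_or_lt with hk | hk
        · rw [← hk]; simp
        · exact mul_le_mul_of_nonneg_left (h4 _ _ _ hp hk) hk.le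
  · push Not at h
    rw [Finset.sum_eq_zero (fun i _ => if_neg (h i))]
    exact Finset.sum_nonneg fun i _ => mul_nonneg (h1 _ _) (hs i).le

lemma birk {I J : Type} [Fintype I] [Fintype J] [DecidableEq I] [DecidableEq J] (A : I → J → ℝ)
    (h0 : ∀ i j, 0 ≤ A i j) (hr : ∀ i, ∑ j, A i j ≤ 1) (hc : ∀ j, ∑ i, A i j ≤ 1) :
    ∃ (w : Equiv.Perm (I ⊕ J) → ℝ), (∀ σ, 0 ≤ w σ) ∧ ∑ σ, w σ = 1 ∧
      ∀ i j, ∑ σ, w σ * (if σ (Sum.inl i) = Sum.inr j then 1 else 0) = A i j := by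
  let M : Matrix (I ⊕ J) (I ⊕ J) ℝ := Matrix.fromBlocks
    (Matrix.diagonal fun i => 1 - ∑ j, A i j) (Matrix.of A)
    (Matrix.of fun j i => A i j) (Matrix.diagonal fun j => 1 - ∑ i, A i j)
  have hM : M ∈ doublyStochastic ℝ (I ⊕ J) := by
    rw [mem_doublyStochastic_iff_sum]
    refine ⟨?_, ?_, ?_⟩
    · rintro (i | j) (i' | j')
      · simp only [M, Matrix.fromBlocks_apply₁₁, Matrix.diagonal_apply]
        split_ifs
        · linarith [hr i]
        · exact le_rfl
      · exact h0 _ _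
      · exact h0 _ _
      · simp only [M, Matrix.fromBlocks_apply₂₂, Matrix.diagonal_apply]
        split_ifs
        · linarith [hc j]
        · exact le_rfl
    · rintro (i | j) <;> simp [M, Matrix.diagonal_apply]
    · rintro (i | j) <;> simp [M, Matrix.diagonal_apply]
  obtain ⟨w, hw0, hw1, hw⟩ := exists_eq_sum_perm_of_mem_doublyStochastic hM
  refine ⟨w, hw0, hw1, fun i j => ?_⟩
  have := congrFun (congrFun hw (Sum.inl i)) (Sum.inr j)
  rw [Matrix.sum_apply] at this
  simpa [M, Equiv.Perm.permMatrix, PEquiv.toMatrix_apply, Equiv.toPEquiv, eq_comm] using this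

end GapAux

namespace GapAux

lemma pack {V ι : Type} [Fintype ι] (w : ι → ℝ) (hw : ∀ k, 0 ≤ w k) (hw1 : ∑ k, w k = 1)
    (z : ι → V) :
    ∃ (D : Finset V) (p : V → ℝ), (∀ x ∈ D, ∃ k, 0 < w k ∧ z k = x) ∧ (∀ x, 0 ≤ p x) ∧
      ∑ x ∈ D, p x = 1 ∧ ∀ f : V → ℝ, ∑ x ∈ D, p x * f x = ∑ k, w k * f (z k) := by
  classical
  let D : Finset V := (Finset.univ.filter fun k => 0 < w k).image z
  let p : V → ℝ := fun x => ∑ k, if z k = x then w k else 0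
  have key : ∀ f : V → ℝ, ∑ x ∈ D, p x * f x = ∑ k, w k * f (z k) := by
    intro f
    simp only [p, Finset.sum_mul]
    rw [Finset.sum_comm]
    refine Finset.sum_congr rfl fun k _ => ?_
    rcases (hw k).eq_or_lt with h | h
    · simp [← h]
    · have hm : z k ∈ D := Finset.mem_image_of_mem _ (by simpa using h)
      simp [ite_mul, hm]
  refine ⟨D, p, ?_, ?_, ?_, key⟩
  · intro x hx
    simpa [D] using hx
  · intro x
    exact Finset.sum_nonneg fun k _ => by split_ifs; exacts [hw k, le_rfl]
  · simpa [hw1] using key (fun _ => 1)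

open Classical in
lemma rounding {n m : ℕ} (s : Fin n × Fin m → ℝ) (c : Fin m → ℝ) (hs : ∀ p, 0 < s p)
    (hc : ∀ j, 0 ≤ c j) (E : Finset (Fin n × Fin m)) (hE : ∀ q ∈ E, s q ≤ c q.2)
    (x : Fin n × Fin m → ℝ) (hx : GAPLPFeasible s c E x) :
    ∃ (D : Finset (Fin n × Fin m → ℝ)) (p : (Fin n × Fin m → ℝ) → ℝ),
      (∀ z ∈ D, GAPLPFeasible s c E z ∧ ∀ q, z q = 0 ∨ z q = 1) ∧ (∀ z, 0 ≤ p z) ∧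
      ∑ z ∈ D, p z = 1 ∧ ∀ q, ∑ z ∈ D, p z * z q = x q / 2 := by
  obtain ⟨hx1, hx2, hx3, hx4⟩ := hx
  choose y y1 y2 y3 y4 y5 using fun j : Fin m =>
    slot n (fun i => s (i, j)) (fun i => x (i, j)) (fun i => hx1 _)
  have ysum : ∀ i j, ∑ t : Fin n, y j i t = x (i, j) := by
    intro i j
    rw [← y2 j i, Finset.sum_range]
  obtain ⟨w, hw0, hw1, hw⟩ := birk (I := Fin n) (J := Fin m × Fin n)
    (fun i jt => y jt.1 i jt.2) (fun i jt => y1 _ _ _)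
    (fun i => by
      rw [Fintype.sum_prod_type]
      simp only [ysum]
      exact hx3 i)
    (fun jt => y3 _ _)
  have wpos : ∀ σ, 0 < w σ → ∀ i j t, σ (Sum.inl i) = Sum.inr (j, t) → 0 < y j i t := by
    intro σ hσ i j t h
    have := hw i (j, t)
    simp only at this
    rw [← this]
    refine Finset.sum_pos' (fun τ _ => mul_nonneg (hw0 τ) (by split_ifs <;> norm_num))
      ⟨σ, Finset.mem_univ _, ?_⟩
    simpa [h] using hσ
  let z : Equiv.Perm (Fin n ⊕ Fin m × Fin n) × Bool → Fin n × Fin m → ℝ := fun k q =>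
    if ∃ t : Fin n, k.1 (Sum.inl q.1) = Sum.inr (q.2, t) ∧ (t.val = 0 ↔ k.2 = true) then 1 else 0
  have z01 : ∀ k q, z k q = 0 ∨ z k q = 1 := by
    intro k q
    by_cases h : ∃ t : Fin n, k.1 (Sum.inl q.1) = Sum.inr (q.2, t) ∧ (t.val = 0 ↔ k.2 = true)
    · right; simp only [z]; rw [if_pos h]
    · left; simp only [z]; rw [if_neg h]
  have zpos : ∀ k q, 0 < z k q →
      ∃ t : Fin n, k.1 (Sum.inl q.1) = Sum.inr (q.2, t) ∧ (t.val = 0 ↔ k.2 = true) := by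
    intro k q h
    by_contra hh
    simp only [z] at h
    rw [if_neg hh] at h
    exact lt_irrefl _ h
  have znn : ∀ k q, 0 ≤ z k q := fun k q => by rcases z01 k q with h | h <;> rw [h]; norm_num
  have zle : ∀ k q, z k q ≤ 1 := fun k q => by rcases z01 k q with h | h <;> rw [h]; norm_num
  have zx : ∀ k q, 0 < w k.1 → 0 < z k q → 0 < x q := by
    rintro k ⟨i, j⟩ hk h
    obtain ⟨t, ht, -⟩ := zpos k _ h
    have := wpos _ hk _ _ _ ht
    rw [← ysum]
    exact Finset.sum_pos' (fun t _ => y1 _ _ _) ⟨t, Finset.mem_univ _, this⟩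
  have zE : ∀ k q, 0 < w k.1 → 0 < z k q → q ∈ E := by
    intro k q hk h
    by_contra hh
    have := zx k q hk h
    rw [hx2 q hh] at this
    exact lt_irrefl _ this
  have zfeas : ∀ k, 0 < w k.1 → GAPLPFeasible s c E (z k) := by
    intro k hk
    refine ⟨fun q => ⟨znn k q, zle k q⟩, ?_, ?_, ?_⟩
    · intro q hq
      by_contra hne
      exact hq (zE k q hk (lt_of_le_of_ne (znn k q) (Ne.symm hne)))
    · intro i
      by_cases h : ∃ j, 0 < z k (i, j)
      · obtain ⟨j, hj⟩ := h
        rw [Finset.sum_eq_single j]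
        · exact zle _ _
        · intro j' _ hne
          by_contra h0
          obtain ⟨t, ht, -⟩ := zpos k _ hj
          obtain ⟨t', ht', -⟩ := zpos k _ (lt_of_le_of_ne (znn k (i, j')) (Ne.symm h0))
          simp only at ht ht'
          rw [ht] at ht'
          simp only [Sum.inr.injEq, Prod.mk.injEq] at ht'
          exact hne ht'.1.symm
        · simp
      · push Not at h
        exact (Finset.sum_nonpos fun j _ => h j).trans zero_le_one
    · intro j
      obtain ⟨σ, b⟩ := k
      cases b with
      | true =>
        by_cases h : ∃ i, 0 < z (σ, true) (i, j)
        · obtain ⟨i, hi⟩ := h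
          rw [Finset.sum_eq_single i]
          · have h1 := hE _ (zE _ _ hk hi)
            have h2 := zle (σ, true) (i, j)
            simp only at h1
            nlinarith [hs (i, j)]
          · intro i' _ hne
            by_contra h0
            have h0' : z (σ, true) (i', j) ≠ 0 := fun h => h0 (by rw [h, mul_zero])
            obtain ⟨t, ht, hb⟩ := zpos _ _ hi
            obtain ⟨t', ht', hb'⟩ := zpos _ _ (lt_of_le_of_ne (znn _ _) (Ne.symm h0'))
            simp only [iff_true] at ht ht' hb hb'
            have : t = t' := Fin.ext (by omega)
            subst this
            rw [← ht'] at ht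
            exact hne (Sum.inl_injective (σ.injective ht)).symm
          · simp
        · push Not at h
          exact (Finset.sum_nonpos fun i _ =>
            mul_nonpos_of_nonneg_of_nonpos (hs _).le (h i)).trans (hc j)
      | false =>
        refine le_trans ?_ (hx4 j)
        refine load n (fun i => s (i, j)) (fun i => x (i, j)) (y j) (fun i => hs _)
          (y1 j) (y2 j) (y4 j) (y5 j)
          (fun i t => ∃ h : t < n, σ (Sum.inl i) = Sum.inr (j, ⟨t, h⟩)) ?_ ?_ ?_
          (fun i => z (σ, false) (i, j)) (fun i => zle _ _) ?_
        · rintro i k t ⟨h, h1⟩ ⟨h', h2⟩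
          rw [← h2] at h1
          exact Sum.inl_injective (σ.injective h1)
        · rintro i t ⟨h, h1⟩
          exact wpos σ hk _ _ _ h1
        · rintro i t ⟨h, h1⟩; exact h
        · intro i hi
          obtain ⟨⟨t, htn⟩, ht, hb⟩ := zpos _ _ hi
          simp only [Bool.false_eq_true, iff_false] at hb ht
          obtain ⟨t', rfl⟩ := Nat.exists_eq_succ_of_ne_zero hb
          exact ⟨t', htn, ht⟩
  have zsum : ∀ σ i j, z (σ, true) (i, j) + z (σ, false) (i, j)
      = ∑ t : Fin n, if σ (Sum.inl i) = Sum.inr (j, t) then 1 else 0 := by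
    intro σ i j
    simp only [z]
    by_cases h : ∃ t : Fin n, σ (Sum.inl i) = Sum.inr (j, t)
    · obtain ⟨t, ht⟩ := h
      rw [ht]
      by_cases h0 : t.val = 0 <;> simp [h0]
    · push Not at h
      simp [h]
  obtain ⟨D, p, hD, hp0, hp1, hp⟩ := pack
    (fun k : Equiv.Perm (Fin n ⊕ Fin m × Fin n) × Bool => w k.1 / 2)
    (fun k => by have := hw0 k.1; positivity)
    (by rw [Fintype.sum_prod_type]; simpa [mul_div_cancel₀] using hw1) z
  refine ⟨D, p, ?_, hp0, hp1, ?_⟩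
  · intro u hu
    obtain ⟨k, hk, rfl⟩ := hD u hu
    exact ⟨zfeas k (by linarith), z01 k⟩
  · rintro ⟨i, j⟩
    rw [hp (fun u => u (i, j)), Fintype.sum_prod_type]
    simp only [Fintype.sum_bool]
    have : ∀ σ, w σ / 2 * z (σ, true) (i, j) + w σ / 2 * z (σ, false) (i, j)
        = (∑ t : Fin n, w σ * if σ (Sum.inl i) = Sum.inr (j, t) then 1 else 0) / 2 := by
      intro σ
      rw [← Finset.mul_sum, ← zsum]; ring
    simp only [this]
    rw [← Finset.sum_div, Finset.sum_comm]
    simp only [hw i (j, _)]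
    rw [ysum]

end GapAux

end

/-- Reduction from truthful fractional mechanisms to truthful-in-expectation
integral mechanisms: a truthful β-approximate fractional mechanism `F` for the
GAP LP yields a truthful-in-expectation 2β-approximate randomized mechanism
over integral feasible assignments. -/
theorem stmt13 (n m : ℕ) (v s : Fin n × Fin m → ℝ) (c : Fin m → ℝ)
    (hv : ∀ p, 0 ≤ v p) (hs : ∀ p, 0 < s p) (hc : ∀ j, 0 ≤ c j)
    (β : ℝ) (hβ : 1 ≤ β)
    (F : Finset (Fin n × Fin m) → (Fin n × Fin m → ℝ))
    (hfeas : ∀ E, GAPLPFeasible s c E (F E))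
    (happrox : ∀ E y, GAPLPFeasible s c E y → GAPWelfare v y ≤ β * GAPWelfare v (F E))
    (htruth : ∀ (E Ei' : Finset (Fin n × Fin m)) (i : Fin n), (∀ q ∈ Ei', q.1 = i) →
      ∑ q ∈ E.filter (fun q => q.1 = i),
          v q * F ((E \ E.filter (fun q => q.1 = i)) ∪ Ei') q
        ≤ ∑ q ∈ E.filter (fun q => q.1 = i), v q * F E q) :
    ∃ (D : Finset (Fin n × Fin m) → Finset (Fin n × Fin m → ℝ))
      (p : Finset (Fin n × Fin m) → (Fin n × Fin m → ℝ) → ℝ),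
      (∀ E x, x ∈ D E → GAPLPFeasible s c E x ∧ ∀ q, x q = 0 ∨ x q = 1) ∧
      (∀ E x, 0 ≤ p E x) ∧
      (∀ E, ∑ x ∈ D E, p E x = 1) ∧
      (∀ (E Ei' : Finset (Fin n × Fin m)) (i : Fin n), (∀ q ∈ Ei', q.1 = i) →
        ∑ x ∈ D ((E \ E.filter (fun q => q.1 = i)) ∪ Ei'),
            p ((E \ E.filter (fun q => q.1 = i)) ∪ Ei') x *
              ∑ q ∈ E.filter (fun q => q.1 = i), v q * x q
          ≤ ∑ x ∈ D E, p E x * ∑ q ∈ E.filter (fun q => q.1 = i), v q * x q) ∧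
      (∀ E z, GAPLPFeasible s c E z → (∀ q, z q = 0 ∨ z q = 1) →
        GAPWelfare v z ≤ 2 * β * ∑ x ∈ D E, p E x * GAPWelfare v x) := by
  classical
  let S : Finset (Fin n × Fin m) → Finset (Fin n × Fin m) := fun E => E.filter fun q => s q ≤ c q.2
  have hS : ∀ E, ∀ q ∈ S E, s q ≤ c q.2 := fun E q hq => (Finset.mem_filter.1 hq).2
  choose D p hD hp0 hp1 hp using fun E =>
    GapAux.rounding s c hs hc (S E) (hS E) (F (S E)) (hfeas (S E))
  have lin : ∀ (E T : Finset (Fin n × Fin m)), ∑ x ∈ D E, p E x * ∑ q ∈ T, v q * x q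
      = (∑ q ∈ T, v q * F (S E) q) / 2 := by
    intro E T
    simp only [Finset.mul_sum]
    rw [Finset.sum_comm, Finset.sum_div]
    refine Finset.sum_congr rfl fun q _ => ?_
    rw [mul_div_assoc, ← hp E q, Finset.mul_sum]
    exact Finset.sum_congr rfl fun x _ => by ring
  refine ⟨D, p, ?_, hp0, hp1, ?_, ?_⟩
  · intro E x hx
    obtain ⟨⟨h1, h2, h3, h4⟩, h5⟩ := hD E x hx
    exact ⟨⟨h1, fun q hq => h2 q (fun h => hq (Finset.mem_filter.1 h).1), h3, h4⟩, h5⟩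
  · intro E Ei' i hEi
    rw [lin, lin]
    have hset : S ((E \ E.filter (fun q => q.1 = i)) ∪ Ei')
        = (S E \ (S E).filter (fun q => q.1 = i)) ∪ S Ei' := by
      ext q
      simp only [S, Finset.mem_filter, Finset.mem_union, Finset.mem_sdiff]
      tauto
    have hred : ∀ G, ∑ q ∈ E.filter (fun q => q.1 = i), v q * F (S G) q
        = ∑ q ∈ (S E).filter (fun q => q.1 = i), v q * F (S G) q := by
      intro G
      symm
      apply Finset.sum_subset
      · intro q hq
        simp only [S, Finset.mem_filter] at hq ⊢
        tauto
      · intro q hq hq'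
        have : q ∉ S G := by
          intro hG
          have := hS G q hG
          simp only [S, Finset.mem_filter] at hq hq'
          tauto
        rw [(hfeas (S G)).2.1 q this, mul_zero]
    rw [hred, hred, hset]
    have := htruth (S E) (S Ei') i (fun q hq => hEi q (Finset.mem_filter.1 hq).1)
    linarith
  · intro E z hz hz01
    have hz' : GAPLPFeasible s c (S E) z := by
      obtain ⟨h1, h2, h3, h4⟩ := hz
      refine ⟨h1, ?_, h3, h4⟩
      rintro ⟨i, j⟩ hq
      rcases hz01 (i, j) with h | h
      · exact h
      · by_cases hE : (i, j) ∈ E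
        · exfalso
          apply hq
          refine Finset.mem_filter.2 ⟨hE, ?_⟩
          have := Finset.single_le_sum (f := fun i => s (i, j) * z (i, j))
            (fun k _ => mul_nonneg (hs _).le (h1 _).1) (Finset.mem_univ i)
          simp only [h, mul_one] at this
          exact this.trans (h4 j)
        · exact h2 _ hE
    have h := happrox (S E) z hz'
    have e : ∑ x ∈ D E, p E x * GAPWelfare v x = GAPWelfare v (F (S E)) / 2 :=
      lin E Finset.univ
    rw [e]
    linarith
end

section
/- Fix numbers of jobs n and machines m, values v : Fin n → ℝ with v ≥ 0, sizes s : Fin n → ℝ with s > 0, and capacities c : Fin m → ℝ with c ≥ 0. There exists a map A from edge sets E ⊆ Fin n × Fin m to finitely supported probability distributions over assignments x : Fin n → Option (Fin m) such that: (i) every assignment in the support of A(E) is feasible for MKP[E]; (ii) A is truthful in expectation: for every E, every job i, and every set E'_i of pairs with first coordinate i, letting E' = (E \ E_i) ∪ E'_i, the expected value of v(i)·[x assigns i to some machine j with (i,j) ∈ E] under A(E) is at least the expected value of v(i)·[x assigns i to some machine j with (i,j) ∈ E] under A(E'); and (iii) for every E, 2 · E_{x ~ A(E)}[welfare(x)]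 ≥ the maximum welfare of a feasible assignment for MKP[E]. That is, there is a 2-approximate mechanism without money for the multiple knapsack problem that is truthful-in-expectation in the private graph model. -/
/-- Fractional flows on the edge set `F`. -/
structure IsFlow {n m : ℕ} (s : Fin n → ℝ) (c : Fin m → ℝ) (F : Finset (Fin n × Fin m))
    (u : Fin n → Fin m → ℝ) : Prop where
  nonneg : ∀ i j, 0 ≤ u i j
  supp : ∀ i j, (i, j) ∉ F → u i j = 0
  row : ∀ i, ∑ j, u i j ≤ s i
  col : ∀ j, ∑ i, u i j ≤ c j

lemma flow_exists_opt {n m : ℕ} (s : Fin n → ℝ) (c : Fin m → ℝ) (hs : ∀ i, 0 < s i)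
    (hc : ∀ j, 0 ≤ c j) (F : Finset (Fin n × Fin m)) (W : Fin n → ℝ) :
    ∃ y, IsFlow s c F y ∧ ∀ z, IsFlow s c F z →
      ∑ i, W i * ∑ j, z i j ≤ ∑ i, W i * ∑ j, y i j := by
  have hset : {u | IsFlow s c F u} = {u : Fin n → Fin m → ℝ | (∀ i j, 0 ≤ u i j) ∧
      (∀ i j, (i, j) ∉ F → u i j = 0) ∧ (∀ i, ∑ j, u i j ≤ s i) ∧ (∀ j, ∑ i, u i j ≤ c j)} := by
    ext u
    exact ⟨fun h => ⟨h.1, h.2, h.3, h.4⟩, fun h => ⟨h.1, h.2.1, h.2.2.1, h.2.2.2⟩⟩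
  have hclosed : IsClosed {u | IsFlow s c F u} := by
    rw [hset]
    simp only [Set.ofPred_and, Set.ofPred_forall]
    refine IsClosed.inter ?_ (IsClosed.inter ?_ (IsClosed.inter ?_ ?_))
    · exact isClosed_iInter fun i => isClosed_iInter fun j =>
        isClosed_le (by fun_prop) (by fun_prop)
    · exact isClosed_iInter fun i => isClosed_iInter fun j => isClosed_iInter fun _ =>
        isClosed_eq (by fun_prop) (by fun_prop)
    · exact isClosed_iInter fun i => isClosed_le (by fun_prop) (by fun_prop)
    · exact isClosed_iInter fun i => isClosed_le (by fun_prop) (by fun_prop)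
  have hcomp : IsCompact {u | IsFlow s c F u} := by
    refine IsCompact.of_isClosed_subset
      (isCompact_Icc (a := (0 : Fin n → Fin m → ℝ)) (b := fun i _ => s i)) hclosed ?_
    intro u hu
    refine ⟨fun i j => hu.nonneg i j, fun i j => ?_⟩
    exact (Finset.single_le_sum (f := fun j => u i j) (fun j _ => hu.nonneg i j)
      (Finset.mem_univ j)).trans (hu.row i)
  have hne : {u | IsFlow s c F u}.Nonempty :=
    ⟨fun _ _ => 0, ⟨by simp, by simp, by simpa using fun i => (hs i).le, by simpa using hc⟩⟩
  obtain ⟨y, hy, hmax⟩ := hcomp.exists_isMaxOn hne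
    (f := fun u : Fin n → Fin m → ℝ => ∑ i, W i * ∑ j, u i j) (by fun_prop)
  exact ⟨y, hy, fun z hz => hmax hz⟩

lemma eventually_small {a b d : ℝ} (hab : a ≤ b) (h : 0 < d → a < b) :
    ∀ᶠ ε in nhdsWithin (0 : ℝ) (Set.Ioi 0), a + ε * d ≤ b := by
  by_cases hd : 0 < d
  · have h1 : Filter.Tendsto (fun ε : ℝ => a + ε * d) (nhdsWithin 0 (Set.Ioi 0)) (nhds a) := by
      have : Filter.Tendsto (fun ε : ℝ => a + ε * d) (nhds 0) (nhds (a + 0 * d)) :=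
        Continuous.tendsto (by fun_prop) 0
      simp only [zero_mul, add_zero] at this
      exact this.mono_left nhdsWithin_le_nhds
    exact (h1.eventually (gt_mem_nhds (h hd))).mono fun _ h => h.le
  · filter_upwards [self_mem_nhdsWithin] with ε hε
    have : (0 : ℝ) < ε := hε
    nlinarith

lemma flow_perturb {n m : ℕ} {s : Fin n → ℝ} {c : Fin m → ℝ} {F : Finset (Fin n × Fin m)}
    {W : Fin n → ℝ} {y z d : Fin n → Fin m → ℝ}
    (hy : IsFlow s c F y) (hz : IsFlow s c F z)
    (hopt : ∀ z, IsFlow s c F z → ∑ i, W i * ∑ j, z i j ≤ ∑ i, W i * ∑ j, y i j)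
    (hpos : ∀ i j, 0 < d i j → y i j < z i j) (hneg : ∀ i j, d i j < 0 → z i j < y i j)
    (hrow : ∀ i, 0 < ∑ j, d i j → ∑ j, y i j < s i)
    (hcol : ∀ j, 0 < ∑ i, d i j → ∑ i, y i j < c j) :
    ∑ i, W i * ∑ j, d i j ≤ 0 := by
  have e1 : ∀ᶠ ε in nhdsWithin (0 : ℝ) (Set.Ioi 0), ∀ i j, -y i j + ε * (- d i j) ≤ 0 := by
    rw [Filter.eventually_all]; intro i
    rw [Filter.eventually_all]; intro j
    refine eventually_small (by linarith [hy.nonneg i j]) fun h => ?_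
    linarith [hneg i j (by linarith), hz.nonneg i j]
  have e2 : ∀ᶠ ε in nhdsWithin (0 : ℝ) (Set.Ioi 0), ∀ i, ∑ j, y i j + ε * ∑ j, d i j ≤ s i := by
    rw [Filter.eventually_all]; intro i
    exact eventually_small (hy.row i) (hrow i)
  have e3 : ∀ᶠ ε in nhdsWithin (0 : ℝ) (Set.Ioi 0), ∀ j, ∑ i, y i j + ε * ∑ i, d i j ≤ c j := by
    rw [Filter.eventually_all]; intro i
    exact eventually_small (hy.col i) (hcol i)
  have e4 : ∀ᶠ ε in nhdsWithin (0 : ℝ) (Set.Ioi 0), (0 : ℝ) < ε := self_mem_nhdsWithin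
  obtain ⟨ε, h1, h2, h3, h4⟩ := (e1.and (e2.and (e3.and e4))).exists
  have hf : IsFlow s c F (fun i j => y i j + ε * d i j) := by
    refine ⟨fun i j => by linarith [h1 i j], fun i j hij => ?_, fun i => ?_, fun j => ?_⟩
    · have a := hy.supp i j hij
      have b := hz.supp i j hij
      have : d i j = 0 := by
        rcases lt_trichotomy (d i j) 0 with h | h | h
        · have := hneg i j h; linarith
        · exact h
        · have := hpos i j h; linarith
      simp [a, this]
    · rw [Finset.sum_add_distrib, ← Finset.mul_sum]; exact h2 i
    · rw [Finset.sum_add_distrib, ← Finset.mul_sum]; exact h3 j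
  have := hopt _ hf
  simp only [Finset.sum_add_distrib, ← Finset.mul_sum, mul_add] at this
  have h5 : ∑ i, W i * (ε * ∑ j, d i j) = ε * ∑ i, W i * ∑ j, d i j := by
    rw [Finset.mul_sum]; exact Finset.sum_congr rfl fun i _ => by ring
  rw [h5] at this
  by_contra hcon
  push Not at hcon
  nlinarith [mul_pos h4 hcon]

lemma flow_dir {n m : ℕ} (y z : Fin n → Fin m → ℝ) (k l : Fin n)
    (h : Relation.ReflTransGen (fun a b => ∃ j, y a j < z a j ∧ z b j < y b j) k l) :
    ∃ d : Fin n → Fin m → ℝ, (∀ i j, 0 < d i j → y i j < z i j) ∧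
      (∀ i j, d i j < 0 → z i j < y i j) ∧ (∀ j, ∑ i, d i j = 0) ∧
      ∀ i, ∑ j, d i j = (if i = k then 1 else 0) - (if i = l then 1 else 0) := by
  induction h with
  | refl => exact ⟨fun _ _ => 0, by simp, by simp, by simp, by simp⟩
  | @tail a b _ hab ih =>
    obtain ⟨d, h1, h2, h3, h4⟩ := ih
    obtain ⟨j0, ha, hb⟩ := hab
    have hne : a ≠ b := by rintro rfl; linarith
    refine ⟨fun i j => d i j + ((if i = a then (if j = j0 then 1 else 0) else 0) -
      (if i = b then (if j = j0 then 1 else 0) else 0)), ?_, ?_, ?_, ?_⟩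
    · intro i j hd
      by_cases hc : i = a ∧ j = j0
      · rw [hc.1, hc.2]; exact ha
      · apply h1
        beta_reduce at hd
        split_ifs at hd <;> first | linarith | (exfalso; tauto)
    · intro i j hd
      by_cases hc : i = b ∧ j = j0
      · rw [hc.1, hc.2]; exact hb
      · apply h2
        beta_reduce at hd
        split_ifs at hd <;> first | linarith | (exfalso; tauto)
    · intro j
      rw [Finset.sum_add_distrib, Finset.sum_sub_distrib, h3]
      simp
    · intro i
      rw [Finset.sum_add_distrib, Finset.sum_sub_distrib, h4]
      by_cases hia : i = a <;> by_cases hib : i = b <;> simp [hia, hib]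

lemma flow_upperset_max {n m : ℕ} {s : Fin n → ℝ} {c : Fin m → ℝ} {F : Finset (Fin n × Fin m)}
    {W : Fin n → ℝ} (hW : ∀ i, 0 < W i) {y z : Fin n → Fin m → ℝ}
    (hy : IsFlow s c F y) (hz : IsFlow s c F z)
    (hopt : ∀ z, IsFlow s c F z → ∑ i, W i * ∑ j, z i j ≤ ∑ i, W i * ∑ j, y i j)
    (S : Finset (Fin n)) (hS : ∀ k ∈ S, ∀ l ∉ S, W l < W k) :
    ∑ i ∈ S, ∑ j, z i j ≤ ∑ i ∈ S, ∑ j, y i j := by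
  classical
  by_contra hcon
  push Not at hcon
  set Rel : Fin n → Fin n → Prop := fun a b => ∃ j, y a j < z a j ∧ z b j < y b j with hRel
  set R : Finset (Fin n) := Finset.univ.filter fun l =>
    ∃ k ∈ S, ∑ j, y k j < ∑ j, z k j ∧ Relation.ReflTransGen Rel k l with hR
  set M : Finset (Fin m) := Finset.univ.filter fun j => ∃ l ∈ R, y l j < z l j with hM
  have f1 : ∀ l ∈ R, l ∉ S → ∑ j, y l j ≤ ∑ j, z l j := by
    intro l hl hlS
    by_contra hlt
    push Not at hlt
    obtain ⟨k, hk, hkl, hreach⟩ := (Finset.mem_filter.1 hl).2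
    obtain ⟨d, d1, d2, d3, d4⟩ := flow_dir y z k l hreach
    have := flow_perturb hy hz hopt d1 d2 (fun i hi => ?_) (fun j hj => ?_)
    · simp only [d4, mul_sub, Finset.sum_sub_distrib] at this
      simp at this
      linarith [hS k hk l hlS]
    · rw [d4] at hi
      have : i = k := by
        by_contra hik
        simp [hik] at hi
        split_ifs at hi <;> linarith
      subst this
      exact hkl.trans_le (hz.row i)
    · rw [d3] at hj; exact absurd hj (lt_irrefl _)
  have f2 : ∀ j ∈ M, ∑ i, y i j = c j := by
    intro j0 hj
    obtain ⟨l, hl, hlj⟩ := (Finset.mem_filter.1 hj).2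
    by_contra hlt
    have hlt : ∑ i, y i j0 < c j0 := lt_of_le_of_ne (hy.col j0) hlt
    obtain ⟨k, hk, hkl, hreach⟩ := (Finset.mem_filter.1 hl).2
    obtain ⟨d, d1, d2, d3, d4⟩ := flow_dir y z k l hreach
    have hrow : ∀ i, ∑ j, (d i j + if i = l then (if j = j0 then (1:ℝ) else 0) else 0) =
        if i = k then 1 else 0 := by
      intro i
      rw [Finset.sum_add_distrib, d4]
      by_cases hil : i = l <;> simp [hil]
    have := flow_perturb (d := fun i j => d i j + if i = l then (if j = j0 then (1:ℝ) else 0) else 0)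
      hy hz hopt ?_ ?_ (fun i hi => ?_) (fun j hj => ?_)
    · simp only [hrow] at this
      simp at this
      linarith [hW k]
    · intro i j hd
      by_cases hc : i = l ∧ j = j0
      · rw [hc.1, hc.2]; exact hlj
      · apply d1
        split_ifs at hd <;> first | linarith | (exfalso; tauto)
    · intro i j hd
      apply d2
      split_ifs at hd <;> linarith
    · rw [hrow] at hi
      have : i = k := by
        by_contra hik
        simp [hik] at hi
      subst this
      exact hkl.trans_le (hz.row i)
    · rw [Finset.sum_add_distrib, d3] at hj
      have : j = j0 := by
        by_contra hik
        simp [hik] at hj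
      subst this
      exact hlt
  have p1 : 0 < ∑ i ∈ R, (∑ j, z i j - ∑ j, y i j) := by
    have h0 : 0 < ∑ i ∈ S, (∑ j, z i j - ∑ j, y i j) := by
      rw [Finset.sum_sub_distrib]; linarith
    refine h0.trans_le ?_
    rw [← Finset.sum_inter_add_sum_sdiff S R, ← Finset.sum_inter_add_sum_sdiff R S,
      Finset.inter_comm R S]
    have a1 : ∑ i ∈ S \ R, (∑ j, z i j - ∑ j, y i j) ≤ 0 := by
      refine Finset.sum_nonpos fun i hi => ?_
      rw [Finset.mem_sdiff] at hi
      by_contra hh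
      push Not at hh
      exact hi.2 (Finset.mem_filter.2 ⟨Finset.mem_univ _, i, hi.1, by linarith, .refl⟩)
    have a2 : 0 ≤ ∑ i ∈ R \ S, (∑ j, z i j - ∑ j, y i j) := by
      refine Finset.sum_nonneg fun i hi => ?_
      rw [Finset.mem_sdiff] at hi
      linarith [f1 i hi.1 hi.2]
    linarith
  have p2 : ∑ i ∈ R, (∑ j, z i j - ∑ j, y i j) ≤ ∑ i ∈ R, ∑ j ∈ M, (z i j - y i j) := by
    refine Finset.sum_le_sum fun i hi => ?_
    rw [← Finset.sum_sub_distrib, ← Finset.sum_add_sum_compl M]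
    have : ∑ j ∈ Mᶜ, (z i j - y i j) ≤ 0 := by
      refine Finset.sum_nonpos fun j hj => ?_
      rw [Finset.mem_compl] at hj
      by_contra hh
      push Not at hh
      exact hj (Finset.mem_filter.2 ⟨Finset.mem_univ _, i, hi, by linarith⟩)
    linarith
  have p3 : ∑ i ∈ R, ∑ j ∈ M, (z i j - y i j) ≤ 0 := by
    rw [Finset.sum_comm]
    refine Finset.sum_nonpos fun j hj => ?_
    have q : ∑ i, (z i j - y i j) ≤ 0 := by
      rw [Finset.sum_sub_distrib, f2 j hj]
      linarith [hz.col j]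
    rw [← Finset.sum_add_sum_compl R] at q
    have : 0 ≤ ∑ i ∈ Rᶜ, (z i j - y i j) := by
      refine Finset.sum_nonneg fun i hi => ?_
      rw [Finset.mem_compl] at hi
      by_contra hh
      push Not at hh
      obtain ⟨l, hl, hlj⟩ := (Finset.mem_filter.1 hj).2
      obtain ⟨k, hk, hkl, hreach⟩ := (Finset.mem_filter.1 hl).2
      exact hi (Finset.mem_filter.2 ⟨Finset.mem_univ _, k, hk, hkl,
        hreach.tail ⟨j, hlj, by linarith⟩⟩)
    linarith
  linarith

lemma abel_nonneg_s14 : ∀ (n : ℕ) (a b : Fin n → ℝ), Monotone b → (∀ i, 0 ≤ b i) →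
    (∀ i, 0 ≤ ∑ k ∈ Finset.univ.filter (fun k => i ≤ k), a k) → 0 ≤ ∑ k, b k * a k := by
  intro n
  induction n with
  | zero => intro a b _ _ _; simp
  | succ n ih =>
    intro a b hb h0 ha
    have h1 := ih (fun k => a k.succ) (fun k => b k.succ - b 0)
      (fun i j hij => by
        have := hb (Fin.succ_le_succ_iff.2 hij)
        simp only; linarith)
      (fun i => by
        have := hb (Fin.zero_le i.succ)
        linarith)
      (fun i => by
        have := ha i.succ
        rw [Finset.sum_filter, Fin.sum_univ_succ] at this
        rw [Finset.sum_filter]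
        simpa [Fin.succ_ne_zero] using this)
    have h2 := ha 0
    simp only [Fin.zero_le, Finset.filter_true] at h2
    rw [Fin.sum_univ_succ] at h2 ⊢
    simp only [sub_mul, Finset.sum_sub_distrib, ← Finset.mul_sum] at h1
    nlinarith [mul_nonneg (h0 0) h2]

/-- Bucket function: the length of `[0,t] ∩ [k,k+1]`. -/
noncomputable def bucketG (k : ℕ) (t : ℝ) : ℝ := max 0 (min (t - k) 1)

lemma bucketG_mono (k : ℕ) : Monotone (bucketG k) := by
  intro a b h
  unfold bucketG
  gcongr

lemma bucketG_le_one (k : ℕ) (t : ℝ) : bucketG k t ≤ 1 :=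
  max_le zero_le_one (min_le_right _ _)

lemma bucketG_eq_one {k : ℕ} {t : ℝ} (h : (k : ℝ) + 1 ≤ t) : bucketG k t = 1 := by
  unfold bucketG
  rw [min_eq_right (by linarith), max_eq_right zero_le_one]

lemma bucketG_eq_zero {k : ℕ} {t : ℝ} (h : t ≤ k) : bucketG k t = 0 := by
  unfold bucketG
  exact max_eq_left ((min_le_left _ _).trans (by linarith))

lemma bucketG_sum (N : ℕ) (t : ℝ) (h0 : 0 ≤ t) :
    ∑ k ∈ Finset.range N, bucketG k t = min t N := by
  induction N with
  | zero => simp [h0]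
  | succ N ih =>
    rw [Finset.sum_range_succ, ih]
    unfold bucketG
    push_cast
    rcases le_total t N with h | h
    · rw [min_eq_left h, min_eq_left (by linarith : t - N ≤ 1), max_eq_left (by linarith),
        min_eq_left (by linarith)]
      simp
    · rw [min_eq_right h]
      rcases le_total t (N + 1) with h' | h'
      · rw [min_eq_left (by linarith : t - N ≤ 1), max_eq_right (by linarith), min_eq_left h']
        ring
      · rw [min_eq_right (by linarith : 1 ≤ t - N), max_eq_right (by linarith), min_eq_right h']

lemma bucket_antitone {n : ℕ} (s z : Fin n → ℝ) (hs : Antitone s) (z0 : ∀ i, 0 ≤ z i)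
    (z1 : ∀ i, z i ≤ 1) :
    ∃ B : Fin n → Fin n → ℝ, (∀ i k, 0 ≤ B i k) ∧ (∀ i, ∑ k, B i k = z i) ∧
      (∀ k, ∑ i, B i k ≤ 1) ∧
      ∀ (q k k' : Fin n), (k' : ℕ) = k + 1 → 0 < B q k' → s q ≤ ∑ i, s i * B i k := by
  classical
  set z' : ℕ → ℝ := fun k => if h : k < n then z ⟨k, h⟩ else 0 with hz'
  set P : ℕ → ℝ := fun t => ∑ k ∈ Finset.range t, z' k with hP
  have z'0 : ∀ k, 0 ≤ z' k := by
    intro k; simp only [hz']; split_ifs; exacts [z0 _, le_rfl]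
  have z'1 : ∀ k, z' k ≤ 1 := by
    intro k; simp only [hz']; split_ifs; exacts [z1 _, zero_le_one]
  have Psucc : ∀ t, P (t + 1) = P t + z' t := fun t => Finset.sum_range_succ _ _
  have Pmono : Monotone P := monotone_nat_of_le_succ fun t => by rw [Psucc]; linarith [z'0 t]
  have P0 : P 0 = 0 := by simp [hP]
  have Pnn : ∀ t, 0 ≤ P t := fun t => P0 ▸ Pmono (Nat.zero_le t)
  have Ple : ∀ t, P t ≤ t := by
    intro t
    induction t with
    | zero => simp [P0]
    | succ t ih => rw [Psucc]; push_cast; linarith [z'1 t]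
  have colsum : ∀ k : ℕ, ∑ i : Fin n, (bucketG k (P (i + 1)) - bucketG k (P i)) =
      bucketG k (P n) := by
    intro k
    rw [Fin.sum_univ_eq_sum_range (fun i => bucketG k (P (i + 1)) - bucketG k (P i)) n,
      Finset.sum_range_sub (fun i => bucketG k (P i)) n, P0, bucketG_eq_zero (Nat.cast_nonneg k)]
    ring
  have Bnn : ∀ (i k : Fin n), 0 ≤ bucketG k (P (i + 1)) - bucketG k (P i) := fun i k => by
    linarith [bucketG_mono k (Pmono (Nat.le_succ i))]
  refine ⟨fun i k => bucketG k (P (i + 1)) - bucketG k (P i), Bnn, ?_, ?_, ?_⟩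
  · intro i
    have h1 : ∀ t, t ≤ n → ∑ k : Fin n, bucketG k (P t) = P t := by
      intro t ht
      rw [Fin.sum_univ_eq_sum_range (fun k => bucketG k (P t)) n, bucketG_sum _ _ (Pnn t)]
      exact min_eq_left ((Ple t).trans (by exact_mod_cast ht))
    rw [Finset.sum_sub_distrib, h1 _ i.2, h1 _ i.2.le, Psucc]
    simp [hz']
  · intro k
    rw [colsum]
    exact bucketG_le_one _ _
  · intro q k k' hk hB
    have hlt : (k : ℝ) + 1 < P (q + 1) := by
      by_contra hh
      push Not at hh
      have h1 : bucketG k' (P (q + 1)) = 0 := bucketG_eq_zero (by rw [hk]; push_cast; exact hh)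
      have h2 : bucketG k' (P q) = 0 := bucketG_eq_zero (by
        rw [hk]; push_cast; exact (Pmono (Nat.le_succ q)).trans hh)
      beta_reduce at hB
      rw [h1, h2] at hB
      simp at hB
    have hone : ∑ i : Fin n, (bucketG k (P (i + 1)) - bucketG k (P i)) = 1 := by
      rw [colsum]
      exact bucketG_eq_one (hlt.le.trans (Pmono q.2))
    calc s q = ∑ i : Fin n, s q * (bucketG k (P (i + 1)) - bucketG k (P i)) := by
          rw [← Finset.mul_sum, hone, mul_one]
      _ ≤ _ := by
          refine Finset.sum_le_sum fun i _ => ?_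
          rcases le_or_gt i q with h | h
          · exact mul_le_mul_of_nonneg_right (hs h) (Bnn i k)
          · have h1 : P (q + 1) ≤ P i := Pmono h
            have h2 : P i ≤ P (i + 1) := Pmono (Nat.le_succ i)
            rw [bucketG_eq_one (t := P i) (by linarith),
              bucketG_eq_one (t := P (i + 1)) (by linarith)]
            simp only [sub_self, mul_zero]
            have e1 : bucketG k (P (i + 1)) = 1 := bucketG_eq_one (by linarith)
            have e2 : bucketG k (P i) = 1 := bucketG_eq_one (by linarith)
            rw [e1, e2]; simp

lemma bucket_exists {n : ℕ} (s z : Fin n → ℝ) (z0 : ∀ i, 0 ≤ z i) (z1 : ∀ i, z i ≤ 1) :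
    ∃ B : Fin n → Fin n → ℝ, (∀ i k, 0 ≤ B i k) ∧ (∀ i, ∑ k, B i k = z i) ∧
      (∀ k, ∑ i, B i k ≤ 1) ∧
      ∀ (q k k' : Fin n), (k' : ℕ) = k + 1 → 0 < B q k' → s q ≤ ∑ i, s i * B i k := by
  set τ := Tuple.sort (fun i => - s i) with hτ
  have hmono : Monotone ((fun i => - s i) ∘ τ) := Tuple.monotone_sort _
  have hanti : Antitone (s ∘ τ) := fun a b h => by
    have := hmono h
    simp only [Function.comp] at this ⊢
    linarith
  obtain ⟨B, b0, b1, b2, b3⟩ := bucket_antitone (s ∘ τ) (z ∘ τ) hanti (fun i => z0 _)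
    (fun i => z1 _)
  refine ⟨fun i k => B (τ.symm i) k, fun i k => b0 _ _, fun i => ?_, fun k => ?_, ?_⟩
  · rw [b1]; simp
  · rw [Equiv.sum_comp τ.symm (fun i => B i k)]; exact b2 k
  · intro q k k' hk hB
    have := b3 _ k k' hk hB
    simp only [Function.comp, Equiv.apply_symm_apply] at this
    refine this.trans_eq ?_
    rw [← Equiv.sum_comp τ (fun i => s i * B (τ.symm i) k)]
    simp

lemma substochastic_decomp {α β : Type*} [Fintype α] [Fintype β] [DecidableEq α] [DecidableEq β]
    (A : α → β → ℝ) (h0 : ∀ i q, 0 ≤ A i q) (hr : ∀ i, ∑ q, A i q ≤ 1)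
    (hc : ∀ q, ∑ i, A i q ≤ 1) :
    ∃ w : Equiv.Perm (α ⊕ β) → ℝ, (∀ σ, 0 ≤ w σ) ∧ ∑ σ, w σ = 1 ∧
      ∀ i q, ∑ σ, w σ * (if σ (Sum.inl i) = Sum.inr q then 1 else 0) = A i q := by
  set M : Matrix (α ⊕ β) (α ⊕ β) ℝ := Matrix.fromBlocks
    (Matrix.diagonal fun i => 1 - ∑ q, A i q) (Matrix.of A) (Matrix.of A).transpose
    (Matrix.diagonal fun q => 1 - ∑ i, A i q) with hM
  have hMds : M ∈ doublyStochastic ℝ (α ⊕ β) := by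
    rw [mem_doublyStochastic_iff_sum]
    refine ⟨?_, ?_, ?_⟩
    · rintro (i | q) (i' | q')
      · simp only [hM, Matrix.fromBlocks_apply₁₁, Matrix.diagonal_apply]
        split_ifs
        · linarith [hr i]
        · exact le_rfl
      · simpa [hM] using h0 _ _
      · simpa [hM] using h0 _ _
      · simp only [hM, Matrix.fromBlocks_apply₂₂, Matrix.diagonal_apply]
        split_ifs
        · linarith [hc q]
        · exact le_rfl
    · rintro (i | q) <;> simp [hM, Fintype.sum_sum_type, Matrix.diagonal_apply]
    · rintro (i | q) <;> simp [hM, Fintype.sum_sum_type, Matrix.diagonal_apply]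
  obtain ⟨w, w0, w1, w2⟩ := exists_eq_sum_perm_of_mem_doublyStochastic hMds
  refine ⟨w, w0, w1, fun i q => ?_⟩
  have := congrFun (congrFun w2 (Sum.inl i)) (Sum.inr q)
  rw [Matrix.sum_apply] at this
  simp only [Matrix.smul_apply, Equiv.Perm.permMatrix, PEquiv.toMatrix_apply, smul_eq_mul,
    Equiv.toPEquiv_apply, hM, Matrix.fromBlocks_apply₁₂, Matrix.of_apply, Option.mem_def,
    Option.some.injEq] at this
  exact this

/-- The assignment read off from a permutation: keep the first slots or the other slots. -/
def slotAssign {n m : ℕ} (σ : Equiv.Perm (Fin n ⊕ (Fin m × Fin n))) (b : Bool) (i : Fin n) :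
    Option (Fin m) :=
  match σ (Sum.inl i) with
  | Sum.inl _ => none
  | Sum.inr q => if (q.2 : ℕ) = 0 ↔ b = true then some q.1 else none

lemma slotAssign_eq_some {n m : ℕ} {σ : Equiv.Perm (Fin n ⊕ (Fin m × Fin n))} {b : Bool}
    {i : Fin n} {j : Fin m} : slotAssign σ b i = some j ↔
      ∃ k, σ (Sum.inl i) = Sum.inr (j, k) ∧ ((k : ℕ) = 0 ↔ b = true) := by
  unfold slotAssign
  rcases h : σ (Sum.inl i) with a | ⟨j', k⟩
  · simp
  · simp only [Option.ite_none_right_eq_some, Option.some.injEq, Sum.inr.injEq, Prod.mk.injEq]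
    constructor
    · rintro ⟨h1, h2⟩; exact ⟨k, ⟨h2, rfl⟩, h1⟩
    · rintro ⟨k', ⟨h1, rfl⟩, h2⟩; exact ⟨h2, h1⟩

lemma slot_count {n m : ℕ} (σ : Equiv.Perm (Fin n ⊕ (Fin m × Fin n))) (i : Fin n) (j : Fin m) :
    (if slotAssign σ true i = some j then (1 : ℝ) else 0) +
      (if slotAssign σ false i = some j then 1 else 0) =
      ∑ k, if σ (Sum.inl i) = Sum.inr (j, k) then 1 else 0 := by
  unfold slotAssign
  rcases h : σ (Sum.inl i) with a | ⟨j', k⟩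
  · simp
  · by_cases hj : j' = j
    · subst hj
      by_cases hk : (k : ℕ) = 0 <;> simp [hk]
    · simp [hj]

lemma rounding {n m : ℕ} (s : Fin n → ℝ) (c : Fin m → ℝ) (hs : ∀ i, 0 < s i)
    (hc : ∀ j, 0 ≤ c j) (E : Finset (Fin n × Fin m)) (y : Fin n → Fin m → ℝ)
    (y0 : ∀ i j, 0 ≤ y i j) (yE : ∀ i j, 0 < y i j → (i, j) ∈ E ∧ s i ≤ c j)
    (yr : ∀ i, ∑ j, y i j ≤ 1) (yc : ∀ j, ∑ i, s i * y i j ≤ c j) :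
    ∃ p : (Fin n → Option (Fin m)) → ℝ, (∀ x, 0 ≤ p x) ∧ ∑ x, p x = 1 ∧
      (∀ x, p x ≠ 0 → MKPFeasible s c E x) ∧
      ∀ i j, ∑ x, p x * (if x i = some j then 1 else 0) = y i j / 2 := by
  classical
  have y1 : ∀ i j, y i j ≤ 1 := fun i j =>
    (Finset.single_le_sum (f := fun j => y i j) (fun j _ => y0 i j) (Finset.mem_univ j)).trans (yr i)
  choose B b0 b1 b2 b3 using fun j => bucket_exists s (fun i => y i j) (fun i => y0 i j)
    (fun i => y1 i j)
  obtain ⟨w, w0, w1, w2⟩ := substochastic_decomp (fun (i : Fin n) (q : Fin m × Fin n) => B q.1 i q.2)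
    (fun i q => b0 _ _ _) (fun i => by
      rw [Fintype.sum_prod_type]
      simp only [b1]
      exact yr i) (fun q => b2 _ _)
  have wpos : ∀ σ, w σ ≠ 0 → ∀ i j k, σ (Sum.inl i) = Sum.inr (j, k) → 0 < B j i k := by
    intro σ hσ i j k h
    have hw : 0 < w σ := lt_of_le_of_ne (w0 σ) (Ne.symm hσ)
    have h2 := w2 i (j, k)
    simp only at h2
    rw [← h2]
    refine hw.trans_le ?_
    have := Finset.single_le_sum
      (f := fun σ => w σ * (if σ (Sum.inl i) = Sum.inr (j, k) then 1 else 0))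
      (fun τ _ => mul_nonneg (w0 τ) (by split_ifs <;> norm_num)) (Finset.mem_univ σ)
    simpa [h] using this
  have Bpos : ∀ j i k, 0 < B j i k → 0 < y i j := by
    intro j i k h
    have := b1 j i
    rw [← this]
    exact h.trans_le (Finset.single_le_sum (f := fun k => B j i k) (fun k _ => b0 j i k)
      (Finset.mem_univ k))
  have feas : ∀ σ b, w σ ≠ 0 → MKPFeasible s c E (slotAssign σ b) := by
    intro σ b hσ
    refine ⟨fun i j h => ?_, fun j => ?_⟩
    · obtain ⟨k, hk, -⟩ := slotAssign_eq_some.1 h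
      exact (yE i j (Bpos _ _ _ (wpos σ hσ i j k hk))).1
    · set T := Finset.univ.filter (fun i => slotAssign σ b i = some j) with hT
      have hTk : ∀ i ∈ T, ∃ k, σ (Sum.inl i) = Sum.inr (j, k) ∧ ((k : ℕ) = 0 ↔ b = true) :=
        fun i hi => slotAssign_eq_some.1 (Finset.mem_filter.1 hi).2
      have hinj : ∀ i ∈ T, ∀ i' ∈ T, ∀ k, σ (Sum.inl i) = Sum.inr (j, k) →
          σ (Sum.inl i') = Sum.inr (j, k) → i = i' := by
        intro i _ i' _ k h1 h2
        exact Sum.inl_injective (σ.injective (h1.trans h2.symm))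
      cases b with
      | true =>
        have hsub : ∀ i ∈ T, ∀ i' ∈ T, i = i' := by
          intro i hi i' hi'
          obtain ⟨k, hk, hk0⟩ := hTk i hi
          obtain ⟨k', hk', hk0'⟩ := hTk i' hi'
          have : k = k' := Fin.ext ((hk0.2 rfl).trans (hk0'.2 rfl).symm)
          subst this
          exact hinj i hi i' hi' k hk hk'
        rcases T.eq_empty_or_nonempty with h | ⟨i, hi⟩
        · rw [h]; simpa using hc j
        · have : T = {i} := by
            ext i'
            rw [Finset.mem_singleton]
            exact ⟨fun h => hsub _ h _ hi, fun h => h ▸ hi⟩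
          rw [this, Finset.sum_singleton]
          obtain ⟨k, hk, hk0⟩ := hTk i hi
          exact (yE i j (Bpos _ _ _ (wpos σ hσ i j k hk))).2
      | false =>
        have hpred : ∀ i ∈ T, ∃ k k' : Fin n, (k' : ℕ) = k + 1 ∧
            σ (Sum.inl i) = Sum.inr (j, k') := by
          intro i hi
          obtain ⟨k, hk, hk0⟩ := hTk i hi
          have : (k : ℕ) ≠ 0 := by simpa using hk0
          exact ⟨⟨k - 1, by omega⟩, k, by simp; omega, hk⟩
        have hi0 : ∀ i : Fin n, ∃ k : Fin n, i ∈ T → ∃ k' : Fin n, (k' : ℕ) = k + 1 ∧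
            σ (Sum.inl i) = Sum.inr (j, k') := by
          intro i
          by_cases hi : i ∈ T
          · obtain ⟨k, h⟩ := hpred i hi; exact ⟨k, fun _ => h⟩
          · exact ⟨i, fun h => absurd h hi⟩
        choose f hf using hi0
        have finj : Set.InjOn f T := by
          intro i hi i' hi' hff
          obtain ⟨k, h1, h2⟩ := hf i hi
          obtain ⟨k', h1', h2'⟩ := hf i' hi'
          have : k = k' := Fin.ext (by rw [h1, h1', hff])
          subst this
          exact hinj i hi i' hi' k h2 h2'
        calc ∑ i ∈ T, s i ≤ ∑ i ∈ T, ∑ i', s i' * B j i' (f i) := by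
              refine Finset.sum_le_sum fun i hi => ?_
              obtain ⟨k, h1, h2⟩ := hf i hi
              exact b3 j i (f i) k h1 (wpos σ hσ i j k h2)
          _ = ∑ k ∈ T.image f, ∑ i', s i' * B j i' k := by
              rw [Finset.sum_image finj]
          _ ≤ ∑ k, ∑ i', s i' * B j i' k :=
              Finset.sum_le_sum_of_subset_of_nonneg (Finset.subset_univ _) fun k _ _ =>
                Finset.sum_nonneg fun i' _ => mul_nonneg (hs i').le (b0 _ _ _)
          _ = ∑ i', s i' * y i' j := by
              rw [Finset.sum_comm]
              refine Finset.sum_congr rfl fun i' _ => ?_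
              rw [← Finset.mul_sum, b1]
          _ ≤ c j := yc j
  have push : ∀ g : (Fin n → Option (Fin m)) → ℝ,
      ∑ x, (∑ σ, ((if slotAssign σ true = x then w σ / 2 else 0) +
        (if slotAssign σ false = x then w σ / 2 else 0))) * g x =
      ∑ σ, w σ / 2 * (g (slotAssign σ true) + g (slotAssign σ false)) := by
    intro g
    simp only [Finset.sum_mul]
    rw [Finset.sum_comm]
    refine Finset.sum_congr rfl fun σ _ => ?_
    simp only [add_mul, Finset.sum_add_distrib, ite_mul, zero_mul, Finset.sum_ite_eq,
      Finset.mem_univ, if_true]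
    ring
  have whalf : ∀ σ, 0 ≤ w σ / 2 := fun σ => by linarith [w0 σ]
  refine ⟨fun x => ∑ σ, ((if slotAssign σ true = x then w σ / 2 else 0) +
        (if slotAssign σ false = x then w σ / 2 else 0)), ?_, ?_, ?_, ?_⟩
  · intro x
    refine Finset.sum_nonneg fun σ _ => add_nonneg ?_ ?_ <;> split_ifs <;>
      first | exact whalf σ | exact le_rfl
  · have := push (fun _ => 1)
    simp only [mul_one] at this
    refine this.trans (Eq.trans ?_ w1)
    exact Finset.sum_congr rfl fun σ _ => by ring
  · intro x hx
    obtain ⟨σ, -, hσ⟩ := Finset.exists_ne_zero_of_sum_ne_zero hx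
    have hw : w σ ≠ 0 := by
      intro h; simp [h] at hσ
    by_cases h1 : slotAssign σ true = x
    · exact h1 ▸ feas σ true hw
    · by_cases h2 : slotAssign σ false = x
      · exact h2 ▸ feas σ false hw
      · simp [h1, h2] at hσ
  · intro i j
    rw [push (fun x => if x i = some j then 1 else 0)]
    simp only [slot_count]
    have h1 := b1 j i
    rw [← h1, Finset.sum_div]
    have h2 : ∀ k, B j i k = ∑ σ, w σ * (if σ (Sum.inl i) = Sum.inr (j, k) then 1 else 0) :=
      fun k => (w2 i (j, k)).symm
    simp only [h2, Finset.sum_div]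
    rw [Finset.sum_comm]
    refine Finset.sum_congr rfl fun σ _ => ?_
    rw [Finset.mul_sum]
    exact Finset.sum_congr rfl fun k _ => by ring

lemma exists_weights {n : ℕ} (w : Fin n → ℝ) (hw : ∀ i, 0 ≤ w i) :
    ∃ W : Fin n → ℝ, Function.Injective W ∧ (∀ i, 0 < W i) ∧
      ∀ a : Fin n → ℝ, (∀ i, 0 ≤ ∑ k ∈ Finset.univ.filter (fun k => W i ≤ W k), a k) →
        0 ≤ ∑ k, w k * a k := by
  set τ := Tuple.sort w with hτ
  have hmono : Monotone (w ∘ τ) := Tuple.monotone_sort w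
  refine ⟨fun i => ((τ.symm i : ℕ) : ℝ) + 1, ?_, fun i => by positivity, ?_⟩
  · intro i i' h
    simp only [add_left_inj, Nat.cast_inj] at h
    exact τ.symm.injective (Fin.ext h)
  · intro a ha
    have := abel_nonneg_s14 n (a ∘ τ) (w ∘ τ) hmono (fun i => hw _) (fun i => by
      have h := ha (τ i)
      rw [Finset.sum_filter, ← Equiv.sum_comp τ] at h
      rw [Finset.sum_filter]
      simpa using h)
    rwa [← Equiv.sum_comp τ (fun k => w k * a k)]

lemma flow_restrict {n m : ℕ} {s : Fin n → ℝ} {c : Fin m → ℝ} {F F' : Finset (Fin n × Fin m)}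
    {u : Fin n → Fin m → ℝ} (hu : IsFlow s c F u) (Q : Fin n → Fin m → Prop)
    [∀ i j, Decidable (Q i j)] (hs : ∀ i j, Q i j → (i, j) ∈ F → (i, j) ∈ F') :
    IsFlow s c F' (fun i j => if Q i j then u i j else 0) := by
  have hle : ∀ i j, (if Q i j then u i j else 0) ≤ u i j := by
    intro i j
    split_ifs
    · exact le_rfl
    · exact hu.nonneg i j
  refine ⟨fun i j => ?_, fun i j h => ?_, fun i => ?_, fun j => ?_⟩
  · split_ifs
    · exact hu.nonneg i j
    · exact le_rfl
  · split_ifs with hQ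
    · exact hu.supp i j fun hF => h (hs i j hQ hF)
    · rfl
  · exact (Finset.sum_le_sum fun j _ => hle i j).trans (hu.row i)
  · exact (Finset.sum_le_sum fun i _ => hle i j).trans (hu.col j)

/-- Truthfulness of the optimal flow. -/
lemma flow_truthful {n m : ℕ} {s : Fin n → ℝ} {c : Fin m → ℝ} {F F' : Finset (Fin n × Fin m)}
    {W : Fin n → ℝ} (hinj : Function.Injective W) {y y' : Fin n → Fin m → ℝ}
    (hy : IsFlow s c F y) (hy' : IsFlow s c F' y')
    (hp : ∀ z, IsFlow s c F z → ∀ S : Finset (Fin n), (∀ k ∈ S, ∀ l ∉ S, W l < W k) →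
      ∑ i ∈ S, ∑ j, z i j ≤ ∑ i ∈ S, ∑ j, y i j)
    (hp' : ∀ z, IsFlow s c F' z → ∀ S : Finset (Fin n), (∀ k ∈ S, ∀ l ∉ S, W l < W k) →
      ∑ i ∈ S, ∑ j, z i j ≤ ∑ i ∈ S, ∑ j, y' i j)
    (i : Fin n) (hFF : ∀ k j, k ≠ i → ((k, j) ∈ F ↔ (k, j) ∈ F')) :
    ∑ j, (if (i, j) ∈ F then y' i j else 0) ≤ ∑ j, y i j := by
  classical
  set S' : Finset (Fin n) := Finset.univ.filter fun k => W i < W k with hS'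
  have hiS : i ∉ S' := by simp [hS']
  have up' : ∀ k ∈ S', ∀ l ∉ S', W l < W k := by
    intro k hk l hl
    simp only [hS', Finset.mem_filter, Finset.mem_univ, true_and, not_lt] at hk hl
    linarith
  have up : ∀ k ∈ insert i S', ∀ l ∉ insert i S', W l < W k := by
    intro k hk l hl
    simp only [hS', Finset.mem_insert, Finset.mem_filter, Finset.mem_univ, true_and, not_or,
      not_lt] at hk hl
    have h1 : W l < W i := lt_of_le_of_ne hl.2 fun h => hl.1 (hinj h)
    rcases hk with rfl | hk
    · exact h1
    · linarith
  have hne : ∀ k ∈ S', k ≠ i := fun k hk h => hiS (h ▸ hk)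
  have z1 : IsFlow s c F (fun k j => if (k ∈ S' ∨ k = i ∧ (i, j) ∈ F) then y' k j else 0) := by
    refine flow_restrict hy' (fun k j => k ∈ S' ∨ k = i ∧ (i, j) ∈ F) ?_
    rintro k j (h | ⟨rfl, h⟩) hF
    · exact (hFF k j (hne k h)).2 hF
    · exact h
  have z2 : IsFlow s c F' (fun k j => if k ∈ S' then y k j else 0) := by
    refine flow_restrict hy (fun k j => k ∈ S') ?_
    intro k j h hF
    exact (hFF k j (hne k h)).1 hF
  have q1 := hp _ z1 _ up
  have q2 := hp' _ z2 _ up'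
  rw [Finset.sum_insert hiS, Finset.sum_insert hiS] at q1
  have r1 : ∑ k ∈ S', ∑ j, (if (k ∈ S' ∨ k = i ∧ (i, j) ∈ F) then y' k j else 0) =
      ∑ k ∈ S', ∑ j, y' k j :=
    Finset.sum_congr rfl fun k hk => by simp [hk]
  have r2 : ∑ k ∈ S', ∑ j, (if k ∈ S' then y k j else 0) = ∑ k ∈ S', ∑ j, y k j :=
    Finset.sum_congr rfl fun k hk => by simp [hk]
  rw [r1] at q1
  rw [r2] at q2
  simp only [hiS, false_or, true_and] at q1
  linarith

/-- There is a 2-approximate, truthful-in-expectation mechanism without money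
for the multiple knapsack problem in the private graph model. -/
theorem stmt14 (n m : ℕ) (v s : Fin n → ℝ) (c : Fin m → ℝ)
    (hv : ∀ i, 0 ≤ v i) (hs : ∀ i, 0 < s i) (hc : ∀ j, 0 ≤ c j) :
    ∃ A : Finset (Fin n × Fin m) → (Fin n → Option (Fin m)) → ℝ,
      (∀ E x, 0 ≤ A E x) ∧
      (∀ E, ∑ x : Fin n → Option (Fin m), A E x = 1) ∧
      (∀ E x, A E x ≠ 0 → MKPFeasible s c E x) ∧
      (∀ (E Ei' : Finset (Fin n × Fin m)) (i : Fin n), (∀ e ∈ Ei', e.1 = i) →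
        ∑ x : Fin n → Option (Fin m),
            A ((E \ E.filter (fun e => e.1 = i)) ∪ Ei') x *
              ∑ j ∈ Finset.univ.filter (fun j => (i, j) ∈ E ∧ x i = some j), v i
          ≤ ∑ x : Fin n → Option (Fin m),
              A E x * ∑ j ∈ Finset.univ.filter (fun j => (i, j) ∈ E ∧ x i = some j), v i) ∧
      (∀ E z, MKPFeasible s c E z →
        MKPWelfare v z ≤ 2 * ∑ x : Fin n → Option (Fin m), A E x * MKPWelfare v x) := by
  classical
  obtain ⟨W, Winj, Wpos, Wab⟩ := exists_weights (fun i => v i / s i)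
    (fun i => div_nonneg (hv i) (hs i).le)
  set F : Finset (Fin n × Fin m) → Finset (Fin n × Fin m) :=
    fun E => E.filter fun e => s e.1 ≤ c e.2 with hF
  choose u hu hopt using fun E => flow_exists_opt s c hs hc (F E) W
  have hpre : ∀ E z, IsFlow s c (F E) z → ∀ S : Finset (Fin n),
      (∀ k ∈ S, ∀ l ∉ S, W l < W k) → ∑ i ∈ S, ∑ j, z i j ≤ ∑ i ∈ S, ∑ j, u E i j :=
    fun E z hz S hS => flow_upperset_max Wpos (hu E) hz (hopt E) S hS
  have hround := fun E => rounding s c hs hc E (fun i j => u E i j / s i)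
    (fun i j => div_nonneg ((hu E).nonneg i j) (hs i).le)
    (fun i j h => by
      have : (i, j) ∈ F E := by
        by_contra hh
        rw [(hu E).supp i j hh] at h
        simp at h
      simpa [hF] using this)
    (fun i => by
      rw [← Finset.sum_div, div_le_one (hs i)]
      exact (hu E).row i)
    (fun j => by
      refine le_trans (le_of_eq ?_) ((hu E).col j)
      exact Finset.sum_congr rfl fun i _ => by
        have := (hs i).ne'
        field_simp)
  choose p p0 p1 p2 p3 using hround
  refine ⟨p, p0, p1, p2, ?_, ?_⟩
  · intro E Ei' i hEi
    have key : ∀ E', ∑ x : Fin n → Option (Fin m), p E' x *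
        ∑ j ∈ Finset.univ.filter (fun j => (i, j) ∈ E ∧ x i = some j), v i =
        v i / s i / 2 * ∑ j, if (i, j) ∈ E then u E' i j else 0 := by
      intro E'
      have h1 : ∀ x : Fin n → Option (Fin m), p E' x *
          ∑ j ∈ Finset.univ.filter (fun j => (i, j) ∈ E ∧ x i = some j), v i =
          ∑ j, (if (i, j) ∈ E then v i else 0) * (p E' x * if x i = some j then 1 else 0) := by
        intro x
        rw [Finset.sum_filter, Finset.mul_sum]
        refine Finset.sum_congr rfl fun j _ => ?_
        by_cases a : (i, j) ∈ E <;> by_cases b : x i = some j <;> simp [a, b, mul_comm]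
      simp only [h1]
      rw [Finset.sum_comm]
      simp only [← Finset.mul_sum, p3]
      rw [Finset.mul_sum]
      refine Finset.sum_congr rfl fun j _ => ?_
      split_ifs
      · ring
      · simp
    rw [key, key]
    refine mul_le_mul_of_nonneg_left ?_ (by
      have := div_nonneg (hv i) (hs i).le
      linarith)
    have ht := flow_truthful Winj (hu E) (hu ((E \ E.filter (fun e => e.1 = i)) ∪ Ei'))
      (hpre E) (hpre _) i (by
        intro k j hk
        have : (k, j) ∉ Ei' := fun h => hk (hEi _ h)
        simp [hF, hk, this])
    refine (le_of_eq ?_).trans (ht.trans (le_of_eq ?_))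
    · refine Finset.sum_congr rfl fun j _ => ?_
      by_cases a : (i, j) ∈ E
      · by_cases b : s i ≤ c j
        · simp [hF, a, b]
        · have : (i, j) ∉ F E := by simp [hF, b]
          rw [if_neg this, if_pos a]
          exact (hu _).supp i j (by simp [hF, b])
      · simp [hF, a]
    · refine Finset.sum_congr rfl fun j _ => ?_
      split_ifs with a
      · rfl
      · exact (hu E).supp i j (by simp [hF, a])
  · intro E z hz
    have wel : ∀ x : Fin n → Option (Fin m), MKPWelfare v x =
        ∑ i, ∑ j, v i * (if x i = some j then 1 else 0) := by
      intro x
      unfold MKPWelfare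
      rw [Finset.sum_filter]
      refine Finset.sum_congr rfl fun i _ => ?_
      rcases h : x i with _ | j <;> simp
    have hexp : 2 * ∑ x : Fin n → Option (Fin m), p E x * MKPWelfare v x =
        ∑ i, v i / s i * ∑ j, u E i j := by
      simp only [wel, Finset.mul_sum]
      rw [Finset.sum_comm]
      refine Finset.sum_congr rfl fun i _ => ?_
      rw [Finset.sum_comm]
      refine Finset.sum_congr rfl fun j _ => ?_
      have h3 := p3 E i j
      calc ∑ x : Fin n → Option (Fin m), 2 * (p E x * (v i * if x i = some j then 1 else 0))
          = 2 * v i * ∑ x : Fin n → Option (Fin m), p E x * (if x i = some j then 1 else 0) := by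
            rw [Finset.mul_sum]
            exact Finset.sum_congr rfl fun x _ => by ring
        _ = _ := by rw [h3]; ring
    have zf : IsFlow s c (F E) (fun i j => if z i = some j then s i else 0) := by
      refine ⟨fun i j => ?_, fun i j h => ?_, fun i => ?_, fun j => ?_⟩
      · split_ifs
        · exact (hs i).le
        · exact le_rfl
      · rw [if_neg]
        intro hij
        apply h
        simp only [hF, Finset.mem_filter]
        refine ⟨hz.1 i j hij, ?_⟩
        refine le_trans ?_ (hz.2 j)
        exact Finset.single_le_sum (f := s) (fun i _ => (hs i).le) (by simp [hij])
      · rcases h : z i with _ | j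
        · simpa using (hs i).le
        · simp
      · rw [← Finset.sum_filter]
        exact hz.2 j
    have hab := Wab (fun k => ∑ j, u E k j - ∑ j, if z k = some j then s k else 0) (fun i => by
      rw [Finset.sum_sub_distrib, sub_nonneg]
      refine hpre E _ zf _ ?_
      intro k hk l hl
      simp only [Finset.mem_filter, Finset.mem_univ, true_and, not_le] at hk hl
      linarith)
    rw [hexp, wel]
    simp only [mul_sub, Finset.sum_sub_distrib] at hab
    have hzz : ∑ k, v k / s k * ∑ j, (if z k = some j then s k else 0) =
        ∑ i, ∑ j, v i * (if z i = some j then 1 else 0) := by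
      refine Finset.sum_congr rfl fun i _ => ?_
      rw [Finset.mul_sum]
      refine Finset.sum_congr rfl fun j _ => ?_
      have := (hs i).ne'
      split_ifs
      · field_simp
      · simp
    linarith
end
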